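/- arXiv:math/0406413 — 4 statements merged into one kernel-verified Lean document; each statement's English description precedes it below -/
import Mathlib

section
/- Let (X, Φ, μ) be a probability measure space and let S and R be two commuting measure-preserving transformations of X. Let Y be a μ-measurable set and let t ≥ 1 be a natural number. Define Y(t) := { x ∈ Y : for every natural number i with 1 ≤ i ≤ t, either S^i x ∉ Y or R^i x ∉ Y }. Then μ(Y(t)) ≤ L(t). -/
/-!
Let `E = Y(t)`. For every point `x`, the set `A(x)` of those `(k, m) ∈ [1,t]²` with `S^k R^m x ∈ E`
is corner-free: a corner with side `d` would give a point `y = S^k R^m x` of `E` with `S^d y ∈ Y`,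
`R^d y ∈ Y` and `1 ≤ d ≤ t`. Hence `|A(x)|` is at most the maximal size of a corner-free subset of
the grid. Integrating over `x`, and using that each `S^k R^m` preserves `μ`, the left-hand side
becomes `t² μ(E)`.
-/

open MeasureTheory Filter

/-- A finite set `A ⊆ ℕ × ℕ` is corner-free if it contains no triple
`(k,m), (k+d,m), (k,m+d)` with `d > 0`. -/
def CornerFree (A : Finset (ℕ × ℕ)) : Prop :=
  ¬ ∃ k m d : ℕ, 0 < d ∧ (k, m) ∈ A ∧ (k + d, m) ∈ A ∧ (k, m + d) ∈ A

open Classical in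
/-- `cornerFreeDensity N = L(N)`, the maximal density of a corner-free subset of
the grid `[1,N]²`. -/
noncomputable def cornerFreeDensity (N : ℕ) : ℝ :=
  ((((Finset.Icc 1 N ×ˢ Finset.Icc 1 N).powerset.filter CornerFree).sup Finset.card : ℕ) : ℝ) /
    (N : ℝ) ^ 2

/-- Return times to `{x ∈ Y | …}` (the set `Y(t)`) along the `ℕ²`-orbit of a point form a
corner-free subset of `[1,t]²`. -/
lemma cornerFree_returnTimes {X : Type*} (S R : X → X) (hcomm : ∀ x, S (R x) = R (S x))
    (Y : Set X) (t : ℕ) (x : X) (A : Finset (ℕ × ℕ))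
    (hA : ∀ p, p ∈ A ↔ p ∈ Finset.Icc 1 t ×ˢ Finset.Icc 1 t ∧ S^[p.1] (R^[p.2] x) ∈
      {x ∈ Y | ∀ i : ℕ, 1 ≤ i → i ≤ t → S^[i] x ∉ Y ∨ R^[i] x ∉ Y}) :
    CornerFree A := by
  rintro ⟨k, m, d, hd, h1, h2, h3⟩
  rw [hA] at h1 h2 h3
  have hdt : d ≤ t := by
    have := h2.1
    simp only [Finset.mem_product, Finset.mem_Icc] at this
    omega
  have hc : Function.Commute S R := hcomm
  rcases h1.2.2 d hd hdt with h | h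
  · apply h
    have := h2.2.1
    rwa [add_comm k d, Function.iterate_add_apply] at this
  · apply h
    have := h3.2.1
    rw [add_comm m d, Function.iterate_add_apply] at this
    rwa [← (hc.iterate_iterate k d).eq]

theorem stmt_0 {X : Type*} [MeasurableSpace X] (μ : Measure X) [IsProbabilityMeasure μ]
    (S R : X → X) (hS : MeasurePreserving S μ μ) (hR : MeasurePreserving R μ μ)
    (hcomm : ∀ x, S (R x) = R (S x))
    (Y : Set X) (hY : MeasurableSet Y) (t : ℕ) (ht : 1 ≤ t) :
    μ {x ∈ Y | ∀ i : ℕ, 1 ≤ i → i ≤ t → S^[i] x ∉ Y ∨ R^[i] x ∉ Y} ≤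
      ENNReal.ofReal (cornerFreeDensity t) := by
  classical
  set E : Set X := {x ∈ Y | ∀ i : ℕ, 1 ≤ i → i ≤ t → S^[i] x ∉ Y ∨ R^[i] x ∉ Y} with hE
  set M : ℕ := ((Finset.Icc 1 t ×ˢ Finset.Icc 1 t).powerset.filter CornerFree).sup Finset.card
    with hM
  have hEm : MeasurableSet E := by
    have : E = Y ∩ ⋂ i : ℕ, ⋂ _ : 1 ≤ i, ⋂ _ : i ≤ t, ((S^[i] ⁻¹' Y)ᶜ ∪ (R^[i] ⁻¹' Y)ᶜ) := by
      ext x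
      simp [hE]
    rw [this]
    exact hY.inter <| .iInter fun i => .iInter fun _ => .iInter fun _ =>
      ((hS.iterate i).measurable hY).compl.union ((hR.iterate i).measurable hY).compl
  have hmp (p : ℕ × ℕ) : MeasurePreserving (fun x => S^[p.1] (R^[p.2] x)) μ μ :=
    (hS.iterate p.1).comp (hR.iterate p.2)
  have hpt (x : X) : ∑ p ∈ Finset.Icc 1 t ×ˢ Finset.Icc 1 t,
      ((fun x => S^[p.1] (R^[p.2] x)) ⁻¹' E).indicator (1 : X → ENNReal) x ≤ M := by
    set A := (Finset.Icc 1 t ×ˢ Finset.Icc 1 t).filter (fun p => S^[p.1] (R^[p.2] x) ∈ E) with hA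
    have hcf : CornerFree A :=
      cornerFree_returnTimes S R hcomm Y t x A fun p => by rw [hA, Finset.mem_filter]
    have hle : A.card ≤ M := by
      refine Finset.le_sup (f := Finset.card) (Finset.mem_filter.2 ⟨?_, hcf⟩)
      exact Finset.mem_powerset.2 (Finset.filter_subset _ _)
    calc _ = (A.card : ENNReal) := by
          rw [hA, Finset.natCast_card_filter]
          simp only [Set.indicator_apply, Set.mem_preimage, Pi.one_apply]
      _ ≤ M := by exact_mod_cast hle
  have key : (t : ENNReal) ^ 2 * μ E ≤ M := by
    calc (t : ENNReal) ^ 2 * μ E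
        = ∑ p ∈ Finset.Icc 1 t ×ˢ Finset.Icc 1 t, μ ((fun x => S^[p.1] (R^[p.2] x)) ⁻¹' E) := by
          simp [fun p => (hmp p).measure_preimage hEm.nullMeasurableSet, sq]
      _ = ∫⁻ x, ∑ p ∈ Finset.Icc 1 t ×ˢ Finset.Icc 1 t,
            ((fun x => S^[p.1] (R^[p.2] x)) ⁻¹' E).indicator (1 : X → ENNReal) x ∂μ := by
          rw [lintegral_finsetSum _ fun p _ =>
            measurable_one.indicator ((hmp p).measurable hEm)]
          exact Finset.sum_congr rfl fun p _ =>
            (lintegral_indicator_one ((hmp p).measurable hEm)).symm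
      _ ≤ ∫⁻ _, M ∂μ := lintegral_mono hpt
      _ = M := by simp
  have ht0 : (0 : ℝ) < (t : ℝ) ^ 2 := by positivity
  have hL : cornerFreeDensity t = (M : ℝ) / (t : ℝ) ^ 2 := by
    rw [cornerFreeDensity, hM]
  rw [hL, ENNReal.ofReal_div_of_pos ht0, ENNReal.ofReal_natCast,
    ENNReal.ofReal_pow (Nat.cast_nonneg t), ENNReal.ofReal_natCast,
    ENNReal.le_div_iff_mul_le (.inl (by positivity)) (.inl (by finiteness)), mul_comm]
  exact key
end

section
/- Let X be a metric space with metric d, let h be a continuous increasing function with h(0) = 0, and let μ be a Borel probability measure on X preserved by two commuting measurable transformations S and R of X. Define C_{S,R}(x) = liminf_{n → ∞} L(n)^{-1} · max{ h(d(S^n x, x)), h(d(R^n x, x)) }. If A ⊆ X is a Borel set with H_h(A) = 0, then ∫_A C_{S,R}(x) dμ(x) = 0. -/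
/-!
The integrand vanishes at almost every point of `A`, which suffices.

Write `u n x = L(n)⁻¹ · max (h (d(Sⁿx, x))) (h (d(Rⁿx, x)))`. Given a Borel set `B` and `N ≥ 1`, let
`B'` be the set of `y ∈ B` for which no `1 ≤ d < N` has both `Sᵈy` and `Rᵈy` in `B`. For each `x`
the set of `(k, m) ∈ [1,N]²` with `Sᵏ Rᵐ x ∈ B'` is corner-free, so integrating its cardinality and
using invariance gives `μ B' ≤ L(N)` (`measure_nonReturning_le`).

Fix `η > 0` and cover `A` by closed sets `B_j` with `h (diam B_j) < δ_j` and `∑ δ_j` small. By the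
corners theorem there is a least `N_j ≥ 1` with `L(N_j) ≤ δ_j / η`. Minimality gives
`δ_j < η L(d)` for `1 ≤ d < N_j`, so any point of `B_j` with `u d x ≥ η` for all `d ≥ 1` lies in
`B_j'`. The set of such points of `A` therefore has measure at most `∑ δ_j / η`, hence is null
(`measure_far_eq_zero`). So `inf_{d ≥ 1} u d x = 0` for almost every `x ∈ A`. If this infimum
is approached only along bounded `d`, then `x` is fixed by some `Sᵈ` and `Rᵈ` and `u` vanishes at
all multiples of `d`; in either case the liminf is `0` (`liminf_eq_zero_of_forall_exists_lt`).

Mathlib's corners theorem forbids corners of either sign of `d`, while `CornerFree` only forbids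
`d > 0`. The reduction between the two intersects `A` with a well-chosen reflection `v - A`
(`exists_cornerFreeDensity_le`).
-/

open MeasureTheory Filter
open scoped ENNReal Topology

/-- The generalized Hausdorff measure `H_h` associated to a gauge function `h`. -/
noncomputable def hausdorffWith {X : Type*} [EMetricSpace X] [MeasurableSpace X] [BorelSpace X]
    (h : ℝ → ℝ) : Measure X :=
  Measure.mkMetric fun r => ENNReal.ofReal (h r.toReal)

/-! ### Corner-free densities -/

lemma CornerFree.card_le {N : ℕ} (hN : 1 ≤ N) {A : Finset (ℕ × ℕ)}
    (hA : A ⊆ Finset.Icc 1 N ×ˢ Finset.Icc 1 N) (hc : CornerFree A) :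
    (A.card : ℝ) ≤ cornerFreeDensity N * (N : ℝ) ^ 2 := by
  classical
  have hN' : (0 : ℝ) < (N : ℝ) ^ 2 := by positivity
  rw [cornerFreeDensity, div_mul_cancel₀ _ hN'.ne']
  exact_mod_cast Finset.le_sup (f := Finset.card)
    (Finset.mem_filter.2 ⟨Finset.mem_powerset.2 hA, hc⟩)

lemma cornerFreeDensity_nonneg (N : ℕ) : 0 ≤ cornerFreeDensity N := by
  unfold cornerFreeDensity; positivity

lemma cornerFreeDensity_pos {N : ℕ} (hN : 1 ≤ N) : 0 < cornerFreeDensity N := by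
  have h1 : CornerFree {(1, 1)} := by
    rintro ⟨k, m, d, hd, h1, h2, -⟩
    simp at h1 h2
    omega
  have := h1.card_le hN (by simpa using hN)
  have hN' : (0 : ℝ) < (N : ℝ) ^ 2 := by positivity
  by_contra! hle
  have h2 := mul_nonpos_of_nonpos_of_nonneg hle hN'.le
  simp at this
  linarith

/-- Some corner-free set attains the maximal density. -/
lemma exists_cornerFree_card_eq {N : ℕ} (hN : 1 ≤ N) : ∃ A : Finset (ℕ × ℕ),
    A ⊆ Finset.Icc 1 N ×ˢ Finset.Icc 1 N ∧ CornerFree A ∧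
      (A.card : ℝ) = cornerFreeDensity N * (N : ℝ) ^ 2 := by
  classical
  have hne : ((Finset.Icc 1 N ×ˢ Finset.Icc 1 N).powerset.filter CornerFree).Nonempty :=
    ⟨∅, by simp [CornerFree]⟩
  obtain ⟨A, hA, hs⟩ := Finset.exists_mem_eq_sup _ hne Finset.card
  rw [Finset.mem_filter, Finset.mem_powerset] at hA
  refine ⟨A, hA.1, hA.2, ?_⟩
  have hN' : (0 : ℝ) < (N : ℝ) ^ 2 := by positivity
  rw [cornerFreeDensity, div_mul_cancel₀ _ hN'.ne', ← hs]

/-- The part of a positive-corner-free set `A` lying in the reflection `v - A` has no corners of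
either sign: a negative corner reflects to a positive corner in `A`. -/
lemma CornerFree.isCornerFree_reflect {A : Finset (ℕ × ℕ)} (hA : CornerFree A) (v : ℕ × ℕ) :
    IsCornerFree {p : ℕ × ℕ | p ∈ A ∧ ∃ q ∈ A, p + q = v} := by
  rintro x₁ y₁ x₂ y₂ ⟨⟨h1, ⟨a, b⟩, hab, e1⟩, ⟨h2, ⟨a', b'⟩, hab', e2⟩, ⟨h3, ⟨a'', b''⟩, hab'', e3⟩, h4⟩
  simp only [Prod.ext_iff, Prod.fst_add, Prod.snd_add] at e1 e2 e3
  by_contra hne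
  rcases lt_or_gt_of_ne hne with hlt | hlt
  · refine hA ⟨x₁, y₁, x₂ - x₁, by omega, h1, ?_, ?_⟩
    · convert h3 using 2; omega
    · convert h2 using 2; omega
  · refine hA ⟨a, b, x₁ - x₂, by omega, hab, ?_, ?_⟩
    · convert hab'' using 2 <;> omega
    · convert hab' using 2 <;> omega

/-- `L(N)` becomes arbitrarily small, by the corners theorem. -/
lemma exists_cornerFreeDensity_le {ε : ℝ} (hε : 0 < ε) :
    ∃ N : ℕ, 1 ≤ N ∧ cornerFreeDensity N ≤ ε := by
  classical
  obtain ⟨N, hN, hNb⟩ : ∃ N : ℕ, 1 ≤ N ∧ cornersTheoremBound (ε ^ 2 / 16 / 9) ≤ N :=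
    ⟨_, le_max_left 1 _, le_max_right _ _⟩
  refine ⟨N, hN, ?_⟩
  by_contra! hlt
  obtain ⟨A, hA, hc, hcard⟩ := exists_cornerFree_card_eq hN
  have hN0 : (1 : ℝ) ≤ N := by exact_mod_cast hN
  have hcard' : ε * (N : ℝ) ^ 2 ≤ A.card := by
    rw [hcard]; gcongr
  -- some `v ∈ [1,2N]²` is a sum of two elements of `A` in at least `|A|² / (2N)²` ways
  obtain ⟨v, -, hv⟩ := Finset.exists_le_card_fiber_of_nsmul_le_card_of_maps_to
    (s := A ×ˢ A) (t := Finset.Icc 1 (2 * N) ×ˢ Finset.Icc 1 (2 * N))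
    (f := fun p => p.1 + p.2) (b := ε ^ 2 / 4 * (N : ℝ) ^ 2)
    (by
      rintro ⟨p, q⟩ hpq
      rw [Finset.mem_product] at hpq
      have hp := hA hpq.1
      have hq := hA hpq.2
      simp only [Finset.mem_product, Finset.mem_Icc, Prod.fst_add, Prod.snd_add] at hp hq ⊢
      omega)
    ⟨(1, 1), by simp; omega⟩
    (by
      have : (ε * (N : ℝ) ^ 2) ^ 2 ≤ (A.card : ℝ) ^ 2 := by gcongr
      simp only [Finset.card_product, Nat.card_Icc, nsmul_eq_mul]
      push_cast [Nat.add_sub_cancel]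
      nlinarith)
  set B := A.filter (fun p => ∃ q ∈ A, p + q = v) with hB
  have hBcard : ε ^ 2 / 4 * (N : ℝ) ^ 2 ≤ B.card := by
    refine hv.trans ?_
    norm_cast
    refine Finset.card_le_card_of_injOn Prod.fst ?_ ?_
    · rintro ⟨p, q⟩ h
      simp only [Finset.coe_filter, Finset.mem_product, Set.mem_ofPred_eq, hB] at h ⊢
      exact ⟨h.1.1, q, h.1.2, h.2⟩
    · rintro ⟨p, q⟩ h ⟨p', q'⟩ h' (rfl : p = p')
      simp only [Finset.coe_filter, Finset.mem_product, Set.mem_ofPred_eq] at h h'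
      rw [add_left_cancel (h.2.trans h'.2.symm)]
  refine corners_theorem_nat (ε := ε ^ 2 / 16) (n := N + 1) (by positivity) (by omega) B ?_ ?_ ?_
  · intro p hp
    have := hA (Finset.mem_of_mem_filter p hp)
    simp only [Finset.mem_product, Finset.mem_Icc, Finset.mem_range] at this ⊢
    omega
  · refine le_trans ?_ hBcard
    push_cast
    have : ((N : ℝ) + 1) ^ 2 ≤ (2 * N) ^ 2 := by gcongr; linarith
    nlinarith [sq_nonneg ε]
  · have := hc.isCornerFree_reflect v
    simpa [hB] using this

/-! ### Simultaneous returns -/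

/-- The points of `B` that do not return to `B` simultaneously under `Sᵈ` and `Rᵈ` for any
`1 ≤ d < N`. -/
def nonReturning {X : Type*} (S R : X → X) (B : Set X) (N : ℕ) : Set X :=
  {y | y ∈ B ∧ ∀ d, 1 ≤ d → d < N → ¬ (S^[d] y ∈ B ∧ R^[d] y ∈ B)}

lemma measurableSet_nonReturning {X : Type*} [MeasurableSpace X] {S R : X → X}
    (hS : Measurable S) (hR : Measurable R) {B : Set X} (hB : MeasurableSet B) (N : ℕ) :
    MeasurableSet (nonReturning S R B N) := by
  have : nonReturning S R B N =
      B ∩ ⋂ d, ⋂ (_ : 1 ≤ d), ⋂ (_ : d < N), (S^[d] ⁻¹' B ∩ R^[d] ⁻¹' B)ᶜ := by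
    ext y; simp [nonReturning]
  rw [this]
  exact hB.inter <| .iInter fun d => .iInter fun _ => .iInter fun _ =>
    ((hS.iterate d hB).inter (hR.iterate d hB)).compl

lemma measure_nonReturning_le {X : Type*} [MeasurableSpace X]
    {μ : Measure X} [IsProbabilityMeasure μ] {S R : X → X}
    (hS : MeasurePreserving S μ μ) (hR : MeasurePreserving R μ μ)
    (hcomm : ∀ x, S (R x) = R (S x)) {B : Set X} (hB : MeasurableSet B) {N : ℕ} (hN : 1 ≤ N) :
    μ (nonReturning S R B N) ≤ ENNReal.ofReal (cornerFreeDensity N) := by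
  classical
  set B' := nonReturning S R B N with hB'
  have hm : MeasurableSet B' := measurableSet_nonReturning hS.measurable hR.measurable hB N
  have hmp : ∀ p : ℕ × ℕ, MeasurePreserving (fun x => S^[p.1] (R^[p.2] x)) μ μ := fun p =>
    (hS.iterate p.1).comp (hR.iterate p.2)
  have hc : Function.Commute S R := hcomm
  let G := Finset.Icc 1 N ×ˢ Finset.Icc 1 N
  -- for each `x`, the visits of the orbit to `B'` form a corner-free set
  have hcf : ∀ x, CornerFree (G.filter fun p => S^[p.1] (R^[p.2] x) ∈ B') := by
    rintro x ⟨k, m, d, hd, h1, h2, h3⟩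
    simp only [G, Finset.mem_filter, Finset.mem_product, Finset.mem_Icc] at h1 h2 h3
    refine h1.2.2 d hd (by omega) ⟨?_, ?_⟩
    · rw [← Function.iterate_add_apply, add_comm]
      exact h2.2.1
    · rw [← (hc.iterate_iterate k d).eq, ← Function.iterate_add_apply, add_comm]
      exact h3.2.1
  have hcount : ∀ x, ∑ p ∈ G, ((fun x => S^[p.1] (R^[p.2] x)) ⁻¹' B').indicator (1 : X → ℝ≥0∞) x
      ≤ ENNReal.ofReal (cornerFreeDensity N * (N : ℝ) ^ 2) := by
    intro x
    have := (hcf x).card_le hN (Finset.filter_subset _ _)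
    refine le_trans (le_of_eq ?_) (ENNReal.ofReal_le_ofReal this)
    rw [ENNReal.ofReal_natCast, Finset.card_filter]
    push_cast
    refine Finset.sum_congr rfl fun p _ => ?_
    simp [Set.indicator_apply]
  have hint := lintegral_mono (μ := μ) hcount
  rw [lintegral_finsetSum _ fun p _ => measurable_one.indicator ((hmp p).measurable hm)] at hint
  simp_rw [lintegral_indicator_one ((hmp _).measurable hm),
    (hmp _).measure_preimage hm.nullMeasurableSet] at hint
  simp only [Finset.sum_const, lintegral_const, measure_univ, mul_one, nsmul_eq_mul, G,
    Finset.card_product, Nat.card_Icc, Nat.add_sub_cancel] at hint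
  rw [ENNReal.ofReal_mul (cornerFreeDensity_nonneg N), mul_comm,
    ENNReal.ofReal_pow (by positivity), ENNReal.ofReal_natCast, Nat.cast_mul, ← sq] at hint
  refine (ENNReal.mul_le_mul_iff_left (c := (N : ℝ≥0∞) ^ 2) ?_ ?_).1 hint
  · have : N ≠ 0 := by omega
    simp [this]
  · simp

/-! ### Covers of small gauge -/

/-- An `H_h`-null set has covers by bounded closed sets `B_j` with `h (diam B_j) < δ_j` for
positive `δ_j` of arbitrarily small sum. -/
lemma exists_cover {X : Type*} [MetricSpace X] [MeasurableSpace X] [BorelSpace X]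
    {h : ℝ → ℝ} (h0 : h 0 = 0) {A : Set X} (hA0 : hausdorffWith (X := X) h A = 0)
    {ε : ℝ≥0∞} (hε : ε ≠ 0) :
    ∃ (B : ℕ → Set X) (δ : ℕ → ℝ), A ⊆ ⋃ j, B j ∧ (∀ j, IsClosed (B j)) ∧
      (∀ j, Bornology.IsBounded (B j)) ∧ (∀ j, 0 < δ j) ∧ (∀ j, h (Metric.diam (B j)) < δ j) ∧
      ∑' j, ENNReal.ofReal (δ j) ≤ ε := by
  rw [hausdorffWith, Measure.mkMetric_apply] at hA0
  simp only [ENNReal.iSup_eq_zero] at hA0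
  -- the mesh bound `1` only serves to keep the diameters finite
  have h1 := hA0 1 one_pos
  have hε2 : ε / 2 ≠ 0 := by simpa using hε
  have h2 := h1.trans_lt (pos_iff_ne_zero.2 hε2)
  simp only [iInf_lt_iff] at h2
  obtain ⟨t, hcov, hdiam, hsum⟩ := h2
  obtain ⟨e, he, hesum⟩ := ENNReal.exists_pos_sum_of_countable hε2 ℕ
  refine ⟨fun j => closure (t j), fun j => max (h (Metric.diam (t j))) 0 + e j,
    hcov.trans (Set.iUnion_mono fun j => subset_closure), fun j => isClosed_closure, fun j => ?_,
    fun j => ?_, fun j => ?_, ?_⟩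
  · refine (Metric.isBounded_iff_ediam_ne_top.2 ?_).closure
    exact ((hdiam j).trans_lt ENNReal.one_lt_top).ne
  · have : (0 : ℝ) < e j := he j
    positivity
  · have : (0 : ℝ) < e j := he j
    rw [Metric.diam_closure]
    exact lt_add_of_le_of_pos (le_max_left _ _) this
  · have hterm : ∀ j, ENNReal.ofReal (max (h (Metric.diam (t j))) 0 + e j) =
        (⨆ _ : (t j).Nonempty, ENNReal.ofReal (h (Metric.ediam (t j)).toReal)) + e j := by
      intro j
      rw [ENNReal.ofReal_add (le_max_right _ _) (e j).coe_nonneg, ENNReal.ofReal_coe_nnreal]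
      congr 1
      rcases (t j).eq_empty_or_nonempty with hj | hj
      · simp [hj, h0]
      · simp [hj, Metric.diam, ENNReal.ofReal, Real.toNNReal]
    simp_rw [hterm]
    rw [ENNReal.tsum_add]
    calc _ ≤ ε / 2 + ε / 2 := add_le_add hsum.le hesum.le
      _ = ε := ENNReal.add_halves ε

/-- The points of `A` at which all returns are bad at scale `η` form a null set. This set need not
be measurable; `μ` acts on it as an outer measure. -/
lemma measure_far_eq_zero {X : Type*} [MetricSpace X] [MeasurableSpace X] [BorelSpace X]
    {h : ℝ → ℝ} (hmono : StrictMono h) (h0 : h 0 = 0)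
    {μ : Measure X} [IsProbabilityMeasure μ]
    {S R : X → X} (hS : MeasurePreserving S μ μ) (hR : MeasurePreserving R μ μ)
    (hcomm : ∀ x, S (R x) = R (S x))
    {A : Set X} (hA0 : hausdorffWith (X := X) h A = 0) {η : ℝ} (hη : 0 < η) :
    μ {x | x ∈ A ∧ ∀ d : ℕ, 1 ≤ d →
      η * cornerFreeDensity d ≤ max (h (dist (S^[d] x) x)) (h (dist (R^[d] x) x))} = 0 := by
  classical
  set E := {x | x ∈ A ∧ ∀ d : ℕ, 1 ≤ d →
      η * cornerFreeDensity d ≤ max (h (dist (S^[d] x) x)) (h (dist (R^[d] x) x))}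
  by_contra hne
  have hη' : ENNReal.ofReal η ≠ 0 := by simpa using hη
  have hne2 : μ E / 2 * ENNReal.ofReal η ≠ 0 := mul_ne_zero (by simpa using hne) hη'
  obtain ⟨B, δ, hcov, hcl, hbd, hδ, hhδ, hsum⟩ := exists_cover h0 hA0 hne2
  have hex : ∀ j, ∃ N : ℕ, 1 ≤ N ∧ cornerFreeDensity N ≤ δ j / η := fun j =>
    exists_cornerFreeDensity_le (div_pos (hδ j) hη)
  let N : ℕ → ℕ := fun j => Nat.find (hex j)
  have hsub : E ⊆ ⋃ j, nonReturning S R (B j) (N j) := by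
    rintro x ⟨hxA, hx⟩
    obtain ⟨j, hj⟩ := Set.mem_iUnion.1 (hcov hxA)
    refine Set.mem_iUnion.2 ⟨j, hj, fun d hd hdN ⟨hSd, hRd⟩ => ?_⟩
    have hmin := Nat.find_min (hex j) hdN
    have hlt : δ j < η * cornerFreeDensity d := by
      have : δ j / η < cornerFreeDensity d := by
        by_contra! hle
        exact hmin ⟨hd, hle⟩
      rwa [div_lt_iff₀' hη] at this
    have hle : max (h (dist (S^[d] x) x)) (h (dist (R^[d] x) x)) ≤ h (Metric.diam (B j)) :=
      max_le (hmono.monotone (Metric.dist_le_diam_of_mem (hbd j) hSd hj))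
        (hmono.monotone (Metric.dist_le_diam_of_mem (hbd j) hRd hj))
    linarith [hx d hd, hhδ j]
  have hle : μ E ≤ μ E / 2 := by
    calc μ E ≤ ∑' j, μ (nonReturning S R (B j) (N j)) :=
          (measure_mono hsub).trans (measure_iUnion_le _)
      _ ≤ ∑' j, ENNReal.ofReal (δ j) / ENNReal.ofReal η := by
          refine ENNReal.tsum_le_tsum fun j => ?_
          rw [← ENNReal.ofReal_div_of_pos hη]
          exact (measure_nonReturning_le hS hR hcomm (hcl j).measurableSet
            (Nat.find_spec (hex j)).1).trans (ENNReal.ofReal_le_ofReal (Nat.find_spec (hex j)).2)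
      _ = (∑' j, ENNReal.ofReal (δ j)) / ENNReal.ofReal η := by
          simp_rw [div_eq_mul_inv, ENNReal.tsum_mul_right]
      _ ≤ μ E / 2 := ENNReal.div_le_of_le_mul hsum
  exact (ENNReal.half_lt_self hne (measure_ne_top μ E)).not_ge hle

/-! ### The pointwise liminf -/

/-- A nonnegative sequence taking arbitrarily small values at positive indices, and vanishing at all
multiples of any of its positive zeros, has liminf `0`. -/
lemma liminf_eq_zero_of_forall_exists_lt {u : ℕ → ℝ} (hu : ∀ n, 0 ≤ u n)
    (hsmall : ∀ k : ℕ, ∃ d, 1 ≤ d ∧ u d < 1 / ((k : ℝ) + 1))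
    (hmul : ∀ d, 1 ≤ d → u d = 0 → ∀ q, u (q * d) = 0) : liminf u atTop = 0 := by
  have hfreq : ∀ η > 0, ∃ᶠ n in atTop, u n ≤ η := by
    intro η hη
    rw [frequently_atTop]
    intro q
    by_cases hz : ∃ d, 1 ≤ d ∧ u d = 0
    · obtain ⟨d, hd, hd0⟩ := hz
      exact ⟨q * d, Nat.le_mul_of_pos_right q hd, by rw [hmul d hd hd0 q]; exact hη.le⟩
    · push Not at hz
      -- below the positive values taken on `[1, q]`, small values occur only beyond `q`
      obtain ⟨c, hc, hcu⟩ : ∃ c > 0, ∀ d ∈ Finset.Icc 1 q, c ≤ u d := by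
        rcases (Finset.Icc 1 q).eq_empty_or_nonempty with he | he
        · exact ⟨1, one_pos, by simp [he]⟩
        · obtain ⟨a, ha, hmin⟩ := Finset.exists_min_image _ u he
          exact ⟨u a, (hu a).lt_of_ne' (hz a (Finset.mem_Icc.1 ha).1), hmin⟩
      obtain ⟨k, hk⟩ := exists_nat_one_div_lt (lt_min hc hη)
      obtain ⟨d, hd, hdu⟩ := hsmall k
      have hlt := hdu.trans hk
      refine ⟨d, ?_, (hlt.trans_le (min_le_right _ _)).le⟩
      by_contra! hdq
      exact absurd (hlt.trans_le (min_le_left _ _))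
        (hcu d (Finset.mem_Icc.2 ⟨hd, hdq.le⟩)).not_gt
  have hbdd : IsBoundedUnder (· ≥ ·) atTop u := isBoundedUnder_of ⟨0, hu⟩
  have hcob : IsCoboundedUnder (· ≥ ·) atTop u :=
    IsCobounded.of_frequently_le (hfreq 1 one_pos)
  refine le_antisymm (le_of_forall_pos_le_add fun η hη => ?_)
    (le_liminf_of_le hcob (Eventually.of_forall hu))
  rw [zero_add]
  exact liminf_le_of_frequently_le (hfreq η hη) hbdd

theorem stmt_4 {X : Type*} [MetricSpace X] [MeasurableSpace X] [BorelSpace X]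
    (h : ℝ → ℝ) (hcont : Continuous h) (hmono : StrictMono h) (h0 : h 0 = 0)
    (μ : Measure X) [IsProbabilityMeasure μ]
    (S R : X → X) (hS : MeasurePreserving S μ μ) (hR : MeasurePreserving R μ μ)
    (hcomm : ∀ x, S (R x) = R (S x))
    (A : Set X) (hA : MeasurableSet A) (hA0 : hausdorffWith (X := X) h A = 0) :
    ∫ x in A, liminf (fun n : ℕ =>
        (cornerFreeDensity n)⁻¹ * max (h (dist (S^[n] x) x)) (h (dist (R^[n] x) x))) atTop ∂μ
      = 0 := by
  have hae : ∀ᵐ x ∂μ, x ∈ A → ∀ k : ℕ, ∃ d : ℕ, 1 ≤ d ∧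
      max (h (dist (S^[d] x) x)) (h (dist (R^[d] x) x)) <
        1 / ((k : ℝ) + 1) * cornerFreeDensity d := by
    have hk : ∀ k : ℕ, ∀ᵐ x ∂μ, ¬ (x ∈ A ∧ ∀ d : ℕ, 1 ≤ d → 1 / ((k : ℝ) + 1) *
        cornerFreeDensity d ≤ max (h (dist (S^[d] x) x)) (h (dist (R^[d] x) x))) := fun k =>
      measure_eq_zero_iff_ae_notMem.1
        (measure_far_eq_zero hmono h0 hS hR hcomm hA0 Nat.one_div_pos_of_nat)
    filter_upwards [ae_all_iff.2 hk] with x hx hxA k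
    have := hx k
    push Not at this
    exact this hxA
  have hnn : ∀ x y : X, 0 ≤ h (dist x y) := fun x y => h0 ▸ hmono.monotone dist_nonneg
  have hzero : ∀ x y : X, h (dist x y) = 0 → x = y := fun x y hxy =>
    dist_eq_zero.1 (hmono.injective (hxy.trans h0.symm))
  refine integral_eq_zero_of_ae ((ae_restrict_iff' hA).2 ?_)
  filter_upwards [hae] with x hx hxA
  refine liminf_eq_zero_of_forall_exists_lt (fun n => mul_nonneg
    (inv_nonneg.2 (cornerFreeDensity_nonneg n)) ((hnn _ _).trans (le_max_left _ _))) ?_ ?_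
  · intro k
    obtain ⟨d, hd, hlt⟩ := hx hxA k
    exact ⟨d, hd, by rwa [inv_mul_lt_iff₀' (cornerFreeDensity_pos hd)]⟩
  · intro d hd hd0 q
    have hmax := (mul_eq_zero.1 hd0).resolve_left (inv_ne_zero (cornerFreeDensity_pos hd).ne')
    have hSd : S^[d] x = x :=
      hzero _ _ (le_antisymm ((le_max_left _ _).trans hmax.le) (hnn _ _))
    have hRd : R^[d] x = x :=
      hzero _ _ (le_antisymm ((le_max_right _ _).trans hmax.le) (hnn _ _))
    simp [mul_comm q d, Function.iterate_mul, Function.iterate_fixed hSd,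
      Function.iterate_fixed hRd, h0]
end

section
/- Let X be a metric space with metric d, let h be a continuous increasing function with h(0) = 0, and let μ be a Borel probability measure on X preserved by a measurable transformation T of X. Define C(x) = liminf_{n → ∞} n · h(d(T^n x, x)). If A ⊆ X is a Borel set with H_h(A) = 0, then ∫_A C(x) dμ(x) = 0. -/
/-!
Fix `c > 0` and `N ≥ 1`, and let `E` be the set of `x ∈ A` such that `c ≤ n * h (d (T^n x, x))` for
all `n ≥ N`. If `V ⊆ E` is measurable of diameter `δ`, then a return of a point of `V` to `V` at a
time `n ≥ N` forces `c ≤ n * h δ`. Hence the sets `T^{-jN} V`, `j < M`, are pairwise disjoint as soon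
as `(M - 1) * N * h δ < c`; all of them have measure `μ V`, so `M * μ V ≤ 1`, and optimizing over `M`
gives `(c / N) * μ V ≤ h δ`. Applied to `V = closure s ∩ E`, this says that the measure
`(c / N) • μ.restrict E` is at most `h (diam s)` on every set `s` of finite diameter, so it is
dominated by `H_h`; therefore `μ E = 0`. The sets `E` with `c = 1 / (k + 1)` and `N ≥ 1` cover all
points of `A` at which the lower limit is nonzero (or infinite).

The space need not be separable, so `x ↦ d (T^n x, x)` may fail to be measurable on `X`. It is
measurable on `A`, since `H_h A = 0` makes `A` separable.
-/

open MeasureTheory Filter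
open scoped ENNReal

/-- A set of zero generalized Hausdorff measure is separable, since it has countable covers by sets
of arbitrarily small diameter. -/
lemma exists_countable_dense_of_hausdorffWith_eq_zero {X : Type*} [MetricSpace X]
    [MeasurableSpace X] [BorelSpace X] (h : ℝ → ℝ) (A : Set X)
    (hA0 : hausdorffWith (X := X) h A = 0) :
    ∃ S : Set X, S.Countable ∧ A ⊆ closure S := by
  obtain ⟨S, -, hS, hAS⟩ := EMetric.subset_countable_closure_of_almost_dense_set A (by
    intro ε hε
    rw [hausdorffWith, Measure.mkMetric_apply] at hA0
    simp only [ENNReal.iSup_eq_zero] at hA0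
    have h1 := hA0 ε hε
    -- with no admissible cover the infimum would be over an empty family, hence `⊤`
    have h2 : ∃ t : ℕ → Set X, A ⊆ Set.iUnion t ∧ ∀ n, Metric.ediam (t n) ≤ ε := by
      by_contra hcon
      push Not at hcon
      have : (⊤ : ℝ≥0∞) = 0 := by
        rw [← h1, eq_comm]
        simp only [iInf_eq_top]
        intro t ht hd
        obtain ⟨n, hn⟩ := hcon t ht
        exact absurd (hd n) (not_le.2 hn)
      simp at this
    obtain ⟨t, ht, hd⟩ := h2
    choose p hp using fun n : {n // (t n).Nonempty} => n.2
    refine ⟨Set.range p, Set.countable_range p, fun x hx => ?_⟩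
    obtain ⟨n, hn⟩ := Set.mem_iUnion.1 (ht hx)
    simp only [Set.mem_iUnion]
    exact ⟨p ⟨n, x, hn⟩, ⟨_, rfl⟩,
      (Metric.edist_le_ediam_of_mem hn (hp ⟨n, x, hn⟩)).trans (hd n)⟩)
  exact ⟨S, hS, hAS⟩

/-- On a separable set `A`, the displacement `d (f x, x)` is the infimum of
`d (f x, a) + d (a, x)` over a countable set of `a`, hence measurable, even if the ambient space is
not second countable. -/
lemma measurable_dist_self_of_subset_closure {X : Type*} [MetricSpace X]
    [MeasurableSpace X] [BorelSpace X] {A S : Set X} (hS : S.Countable) (hAS : A ⊆ closure S)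
    {f : X → X} (hf : Measurable f) : Measurable (fun x : A => dist (f x) x) := by
  refine measurable_of_Iio fun r => ?_
  have : (fun x : A => dist (f x) x) ⁻¹' Set.Iio r =
      ⋃ a ∈ S, {x : A | dist (f x) a + dist (x : X) a < r} := by
    ext x
    simp only [Set.mem_preimage, Set.mem_Iio, Set.mem_iUnion, Set.mem_ofPred_eq, exists_prop]
    constructor
    · intro hx
      obtain ⟨a, ha, hxa⟩ := Metric.mem_closure_iff.1 (hAS x.2) ((r - dist (f x) x) / 2)
        (by linarith)
      exact ⟨a, ha, by linarith [dist_triangle (f x) x a]⟩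
    · rintro ⟨a, -, hxa⟩
      exact (dist_triangle_right _ _ a).trans_lt hxa
  rw [this]
  refine MeasurableSet.biUnion hS fun a _ => measurableSet_lt ?_ measurable_const
  have hd : Measurable fun y : X => dist y a := (continuous_id.dist continuous_const).measurable
  exact (hd.comp (hf.comp measurable_subtype_coe)).add (hd.comp measurable_subtype_coe)

/-- If no point of `V` returns to `V` at any of the times `N, 2N, …, (M - 1)N`, then the preimages
`T^{-jN} V`, `j < M`, are disjoint and so `M * μ V ≤ 1`. -/
lemma natCast_mul_measureReal_le_one {X : Type*} [MeasurableSpace X] {μ : Measure X}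
    [IsProbabilityMeasure μ] {T : X → X} (hT : MeasurePreserving T μ μ) {V : Set X}
    (hV : MeasurableSet V) (N M : ℕ)
    (hret : ∀ k, 0 < k → k < M → ∀ x ∈ V, T^[k * N] x ∉ V) : M * μ.real V ≤ 1 := by
  have hm : ∀ j, μ.real (T^[j * N] ⁻¹' V) = μ.real V := fun j => by
    rw [measureReal_def, (hT.iterate (j * N)).measure_preimage hV.nullMeasurableSet, measureReal_def]
  have key : ∀ i j, i < j → j < M → Disjoint (T^[i * N] ⁻¹' V) (T^[j * N] ⁻¹' V) := by
    intro i j hij hj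
    rw [Set.disjoint_left]
    intro x hx hx'
    refine hret (j - i) (by omega) (by omega) _ hx ?_
    rw [← Function.iterate_add_apply, ← add_mul, Nat.sub_add_cancel hij.le]
    exact hx'
  have hsum : μ.real (⋃ j ∈ Finset.range M, T^[j * N] ⁻¹' V) =
      ∑ j ∈ Finset.range M, μ.real (T^[j * N] ⁻¹' V) := by
    refine measureReal_biUnion_finset ?_ fun j _ => (hT.measurable.iterate _) hV
    intro i hi j hj hij
    simp only [Finset.coe_range, Set.mem_Iio] at hi hj
    rcases lt_or_gt_of_ne hij with hlt | hlt
    · exact key i j hlt hj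
    · exact (key j i hlt hi).symm
  simp only [hm, Finset.sum_const, Finset.card_range, nsmul_eq_mul] at hsum
  rw [← hsum]
  exact measureReal_le_one

/-- Choosing the best `M` in `M * m ≤ 1`: it is `⌈c / (N * t)⌉` if `t > 0`, and arbitrarily large
if `t = 0`. -/
lemma div_mul_le_of_forall_natCast_mul_le_one {c t m N : ℝ} (hN : 0 < N) (hc : 0 < c) (ht : 0 ≤ t)
    (hM : ∀ M : ℕ, ((M : ℝ) - 1) * N * t < c → M * m ≤ 1) : c / N * m ≤ t := by
  rcases ht.eq_or_lt with rfl | ht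
  · have : m ≤ 0 := by
      by_contra! hm
      obtain ⟨M, hM'⟩ := exists_nat_gt (1 / m)
      rw [div_lt_iff₀ hm] at hM'
      linarith [hM M (by simpa using hc)]
    exact mul_nonpos_of_nonneg_of_nonpos (by positivity) this
  · by_cases hm : m ≤ 0
    · exact (mul_nonpos_of_nonneg_of_nonpos (by positivity) hm).trans ht.le
    push Not at hm
    have h1 := Nat.ceil_lt_add_one (a := c / (N * t)) (by positivity)
    have h2 := Nat.le_ceil (c / (N * t))
    have h3 := hM ⌈c / (N * t)⌉₊ (by
      rw [mul_assoc, ← lt_div_iff₀ (by positivity)]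
      linarith)
    have h4 : c / (N * t) * m ≤ 1 := (mul_le_mul_of_nonneg_right h2 hm.le).trans h3
    have h5 : c / N * m = c / (N * t) * m * t := by field_simp
    rw [h5]
    nlinarith

/-- The part of `A` on which `n * h (d (T^n x, x)) ≥ c` for all `n ≥ N` is null. -/
lemma measure_setOf_forall_le_eq_zero {X : Type*} [MetricSpace X] [MeasurableSpace X] [BorelSpace X]
    (h : ℝ → ℝ) (hcont : Continuous h) (hmono : StrictMono h) (h0 : h 0 = 0)
    (μ : Measure X) [IsProbabilityMeasure μ]
    (T : X → X) (hT : MeasurePreserving T μ μ)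
    (A : Set X) (hA : MeasurableSet A) (hA0 : hausdorffWith (X := X) h A = 0)
    {c : ℝ} (hc : 0 < c) {N : ℕ} (hN : 0 < N) :
    μ {x | x ∈ A ∧ ∀ n ≥ N, c ≤ (n : ℝ) * h (dist (T^[n] x) x)} = 0 := by
  set E : Set X := {x | x ∈ A ∧ ∀ n ≥ N, c ≤ (n : ℝ) * h (dist (T^[n] x) x)} with hE
  have hNR : (0 : ℝ) < N := by exact_mod_cast hN
  have hEm : MeasurableSet E := by
    obtain ⟨S, hS, hAS⟩ := exists_countable_dense_of_hausdorffWith_eq_zero h A hA0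
    have h1 : MeasurableSet {x : A | ∀ n ≥ N, c ≤ (n : ℝ) * h (dist (T^[n] (x : X)) x)} := by
      simp only [Set.ofPred_forall]
      refine MeasurableSet.iInter fun n => MeasurableSet.iInter fun _ =>
        measurableSet_le measurable_const (measurable_const.mul (hcont.measurable.comp ?_))
      exact measurable_dist_self_of_subset_closure hS hAS (hT.measurable.iterate n)
    convert hA.subtype_image h1 using 1
    ext x
    simp [hE, and_comm]
  have hle : ENNReal.ofReal (c / N) • μ.restrict E ≤ hausdorffWith (X := X) h := by
    refine Measure.le_mkMetric _ _ 1 one_pos fun s hs => ?_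
    have hVm : MeasurableSet (closure s ∩ E) := isClosed_closure.measurableSet.inter hEm
    have ht : 0 ≤ h (Metric.ediam s).toReal := by
      rw [← h0]; exact hmono.monotone ENNReal.toReal_nonneg
    have hfin : Metric.ediam s ≠ ⊤ := ne_top_of_le_ne_top ENNReal.one_ne_top hs
    have hdist : ∀ x ∈ closure s, ∀ y ∈ closure s, dist x y ≤ (Metric.ediam s).toReal := by
      intro x hx y hy
      rw [dist_edist]
      refine ENNReal.toReal_mono hfin ?_
      rw [← Metric.ediam_closure]
      exact Metric.edist_le_ediam_of_mem hx hy
    have hreal : c / N * μ.real (closure s ∩ E) ≤ h (Metric.ediam s).toReal := by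
      refine div_mul_le_of_forall_natCast_mul_le_one hNR hc ht fun M hM => ?_
      refine natCast_mul_measureReal_le_one hT hVm N M fun k hk hkM x hx hx' => ?_
      have h1 := hx.2.2 (k * N) (Nat.le_mul_of_pos_left N hk)
      have h2 := hmono.monotone (hdist _ hx'.1 _ hx.1)
      have h3 : (k : ℝ) ≤ M - 1 := by
        rw [le_sub_iff_add_le]; exact_mod_cast hkM
      have h4 : ((k * N : ℕ) : ℝ) * h (dist (T^[k * N] x) x)
          ≤ ((M : ℝ) - 1) * N * h (Metric.ediam s).toReal := by
        push_cast
        refine (mul_le_mul_of_nonneg_left h2 (by positivity)).trans ?_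
        gcongr
      linarith
    calc (ENNReal.ofReal (c / N) • μ.restrict E) s
        ≤ (ENNReal.ofReal (c / N) • μ.restrict E) (closure s) := measure_mono subset_closure
      _ = ENNReal.ofReal (c / N) * μ (closure s ∩ E) := by
          rw [Measure.smul_apply, Measure.restrict_apply isClosed_closure.measurableSet,
            smul_eq_mul]
      _ = ENNReal.ofReal (c / N * μ.real (closure s ∩ E)) := by
          rw [ENNReal.ofReal_mul (by positivity), ofReal_measureReal]
      _ ≤ _ := ENNReal.ofReal_le_ofReal hreal
  have hz := le_antisymm ((hle A).trans_eq hA0) zero_le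
  rw [Measure.smul_apply, Measure.restrict_apply hA, smul_eq_mul, mul_eq_zero] at hz
  rcases hz with hz | hz
  · rw [ENNReal.ofReal_eq_zero] at hz
    exact absurd hz (not_le.2 (by positivity))
  · rwa [Set.inter_eq_right.2 fun x hx => hx.1] at hz

theorem stmt_6 {X : Type*} [MetricSpace X] [MeasurableSpace X] [BorelSpace X]
    (h : ℝ → ℝ) (hcont : Continuous h) (hmono : StrictMono h) (h0 : h 0 = 0)
    (μ : Measure X) [IsProbabilityMeasure μ]
    (T : X → X) (hT : MeasurePreserving T μ μ)
    (A : Set X) (hA : MeasurableSet A) (hA0 : hausdorffWith (X := X) h A = 0) :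
    ∫ x in A, liminf (fun n : ℕ => (n : ℝ) * h (dist (T^[n] x) x)) atTop ∂μ = 0 := by
  refine integral_eq_zero_of_ae ?_
  have hall : ∀ᵐ x ∂μ, ∀ k N : ℕ, ¬ (x ∈ A ∧ ∀ n ≥ N + 1,
      1 / ((k : ℝ) + 1) ≤ (n : ℝ) * h (dist (T^[n] x) x)) := by
    rw [ae_all_iff]; intro k
    rw [ae_all_iff]; intro N
    rw [ae_iff]
    simpa only [not_not] using measure_setOf_forall_le_eq_zero h hcont hmono h0 μ T hT A hA hA0
      (c := 1 / ((k : ℝ) + 1)) (by positivity) (Nat.succ_pos N)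
  rw [EventuallyEq, ae_restrict_iff' hA]
  filter_upwards [hall] with x hx hxA
  rw [liminf_eq]
  -- the set of eventual lower bounds has greatest element `0`; in particular it is bounded above,
  -- so its real supremum is the true lower limit
  refine IsGreatest.csSup_eq ⟨Eventually.of_forall fun n => ?_, fun a ha => ?_⟩
  · refine mul_nonneg n.cast_nonneg ?_
    rw [← h0]; exact hmono.monotone dist_nonneg
  · by_contra! hapos
    obtain ⟨k, hk⟩ := exists_nat_one_div_lt hapos
    obtain ⟨N, hN⟩ := eventually_atTop.1 ha
    exact hx k N ⟨hxA, fun n hn => hk.le.trans (hN n (by omega))⟩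
end

section
/- There exists an absolute constant c > 0 such that the following holds: for every δ > 0 and every natural number N ≥ exp(exp(exp(δ^{-c}))), every set A ⊆ [1,N]^2 with |A| ≥ δN^2 contains a corner, i.e., a triple of points (k,m), (k+d,m), (k,m+d) with d > 0. -/
/-!
The proof is the density-increment argument of Ajtai–Szemerédi and Shkredov, with Fourier
uniformity of the two coordinate sets as the pseudorandomness notion.

**Differences of both signs.** Popular sums (`exists_symmetric_part`) provide `s` such that
`A ∩ (s - A)` still has density at least `δ ^ 2 / 4`. A corner with negative difference in this set
is reflected by `x ↦ s - x` to a corner with positive difference in `A`, so it suffices to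
find a corner with nonzero difference (`no_conf`).

**Density increment** (`group_increment`, `conf_increment`). Let `A ⊆ E₁ × E₂` have relative
density `α` and no corners, and let `E₁`, `E₂` be Fourier uniform. Parametrise triples
`(x, y), (z - y, y), (x, z - x)` by `x, y, z`, and let `f` be the balanced function
`1_A - α 1_{E₁ × E₂}`. Having only degenerate corners makes
`∑ f(x, y) 1_A(z - y, y) 1_A(x, z - x)` large in absolute value (`corner_count_lower`). Two
weighted Cauchy–Schwarz inequalities (`gvn`) bound the fourth power of this sum by a box sum of `f`
weighted by indicators of `E₁` and `E₂`. Uniformity replaces these weights by their averages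
(`boxConv_main`), so the box norm of `f` is large, and this forces `A` to be denser, by
`α ^ 10 / 2 ^ 14`, on a sub-box `F₁ × F₂` of relative size at least `α ^ 10 / 2 ^ 14`
(`box_increment`).

**Regularisation** (`refine_step`, `exists_uniform`). The sets `F₁`, `F₂` need not be uniform. If
one of them correlates with a frequency `θ`, Dirichlet's theorem gives a common difference `q` such
that `e(θ ·)` is nearly constant on progressions of difference `q` and length `L`, and the traces
on these have mean-square density exceeding the square of the density by a definite amount. The
potential `|A| / N² - γ |E₁| |E₂| / N² + κ (|E₁|² + |E₂|²) / N²` therefore increases on passing to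
the traces on a suitable pair of progressions. It is bounded by `3`, so the process stops with both
sets uniform, and the first two terms of the potential guarantee that the relative density is
still almost as large as before and that `E₁ × E₂` is not too small.

**Iteration** (`density_step`, `no_conf_aux`, `no_conf`). Combining the two steps raises the density
by a fixed polynomial in `δ`, so after `T = δ ^ (-O(1))` rounds it would exceed `1`. Each round
replaces the product density `β` of `E₁ × E₂` by a multiple of it depending on `δ` only, so all
parameters stay above `δ ^ O(T)`, and the number `M` of regularisation steps in a round is at most
`δ ^ (-O(T))`. Each such step replaces `N` by about its fourth root; hence `N ≥ M ^ (4 ^ (M T))`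
suffices, and this is the origin of the triple exponential (`tower_bound`).
-/

section
open Finset

/-! ### Small Fourier coefficients imply bilinear uniformity -/

/-- Parseval's identity on `ZMod n`, in bilinear form and without complex conjugation. -/
lemma parseval_aux {n : ℕ} [NeZero n] (a b : ZMod n → ℂ) :
    ∑ k : ZMod n, (∑ x, a x * ZMod.stdAddChar (k * x)) * (∑ y, b y * ZMod.stdAddChar (-(k * y)))
      = n * ∑ x, a x * b x := by
  have h : ∀ k : ZMod n, (∑ x, a x * ZMod.stdAddChar (k * x)) *
      (∑ y, b y * ZMod.stdAddChar (-(k * y)))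
      = ∑ x, ∑ y, a x * b y * ZMod.stdAddChar (k * (x - y)) := by
    intro k
    rw [Finset.sum_mul_sum]
    refine Finset.sum_congr rfl fun x _ => Finset.sum_congr rfl fun y _ => ?_
    rw [mul_sub, sub_eq_add_neg, AddChar.map_add_eq_mul]; ring
  simp_rw [h]
  rw [Finset.sum_comm, Finset.mul_sum]
  refine Finset.sum_congr rfl fun x _ => ?_
  rw [Finset.sum_comm]
  simp_rw [← Finset.mul_sum]
  have h2 : ∀ y : ZMod n, ∑ k : ZMod n, (ZMod.stdAddChar (k * (x - y)) : ℂ)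
      = if x - y = 0 then (n : ℂ) else 0 := by
    intro y
    rw [AddChar.sum_mulShift _ (ZMod.isPrimitive_stdAddChar n), ZMod.card]
    split_ifs <;> simp
  simp_rw [h2, sub_eq_zero]
  simp
  ring

lemma parseval_le {n : ℕ} [NeZero n] (F : ZMod n → ℝ) (hF : ∀ x, |F x| ≤ 1) :
    (∑ k : ZMod n, ‖∑ x, (F x : ℂ) * ZMod.stdAddChar (k * x)‖ ^ 2 ≤ (n : ℝ) ^ 2) ∧
    (∑ k : ZMod n, ‖∑ x, (F x : ℂ) * ZMod.stdAddChar (-(k * x))‖ ^ 2 ≤ (n : ℝ) ^ 2) := by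
  have hconj : ∀ k : ZMod n, (∑ x, (F x : ℂ) * ZMod.stdAddChar (-(k * x)))
      = (starRingEnd ℂ) (∑ x, (F x : ℂ) * ZMod.stdAddChar (k * x)) := by
    intro k
    rw [map_sum]
    refine Finset.sum_congr rfl fun x _ => ?_
    rw [map_mul, AddChar.map_neg_eq_conj, Complex.conj_ofReal]
  have h1 : ∑ k : ZMod n, ‖∑ x, (F x : ℂ) * ZMod.stdAddChar (k * x)‖ ^ 2 ≤ (n : ℝ) ^ 2 := by
    have h := parseval_aux (n := n) (fun x => (F x : ℂ)) (fun x => (F x : ℂ))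
    simp_rw [hconj, Complex.mul_conj'] at h
    have h' : ∑ k : ZMod n, ‖∑ x, (F x : ℂ) * ZMod.stdAddChar (k * x)‖ ^ 2
        = n * ∑ x, F x * F x := by exact_mod_cast h
    rw [h', sq]
    refine mul_le_mul_of_nonneg_left ?_ (by positivity)
    calc ∑ x, F x * F x ≤ ∑ _x : ZMod n, (1 : ℝ) := by
          refine Finset.sum_le_sum fun x _ => ?_
          have := abs_le.mp (hF x); nlinarith
      _ = n := by simp [ZMod.card]
  refine ⟨h1, ?_⟩
  simp_rw [hconj, RCLike.norm_conj]
  exact h1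

/-- If all Fourier coefficients of `g` are at most `ε`, then `g (z - x)` has correlation at most
`ε n` with products of bounded functions of `x` and of `z`. -/
lemma bilin_fourier {n : ℕ} [NeZero n] (g F P : ZMod n → ℝ) (ε : ℝ) (hF : ∀ x, |F x| ≤ 1)
    (hP : ∀ x, |P x| ≤ 1)
    (hg : ∀ k : ZMod n, ‖∑ u, (g u : ℂ) * ZMod.stdAddChar (k * u)‖ ≤ ε) :
    |∑ x, ∑ z, g (z - x) * F x * P z| ≤ ε * n := by
  have hn : (0 : ℝ) < n := by exact_mod_cast Nat.pos_of_ne_zero (NeZero.ne n)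
  have hε : 0 ≤ ε := (norm_nonneg _).trans (hg 0)
  have key := parseval_aux (n := n) (fun z => ∑ x, (g (z - x) : ℂ) * F x) (fun z => (P z : ℂ))
  have hconv : ∀ k : ZMod n, ∑ z, (∑ x, (g (z - x) : ℂ) * F x) * ZMod.stdAddChar (k * z)
      = (∑ u, (g u : ℂ) * ZMod.stdAddChar (k * u)) *
        (∑ x, (F x : ℂ) * ZMod.stdAddChar (k * x)) := by
    intro k
    rw [Finset.sum_mul_sum, Finset.sum_comm (s := univ) (t := univ)
      (f := fun i j => (g i : ℂ) * ZMod.stdAddChar (k * i) * ((F j : ℂ) * ZMod.stdAddChar (k * j)))]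
    have hl : ∑ z, (∑ x, (g (z - x) : ℂ) * F x) * (ZMod.stdAddChar (k * z) : ℂ)
        = ∑ x, ∑ z, (g (z - x) : ℂ) * F x * ZMod.stdAddChar (k * z) := by
      rw [Finset.sum_comm]
      exact Finset.sum_congr rfl fun z _ => Finset.sum_mul _ _ _
    rw [hl]
    refine Finset.sum_congr rfl fun x _ => ?_
    refine Fintype.sum_equiv (Equiv.subRight x) _ _ fun z => ?_
    simp only [Equiv.subRight_apply]
    have : k * z = k * (z - x) + k * x := by ring
    rw [this, AddChar.map_add_eq_mul]; ring
  simp_rw [hconv] at key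
  have e1 : ((∑ x, ∑ z, g (z - x) * F x * P z : ℝ) : ℂ)
      = ∑ z, (∑ x, (g (z - x) : ℂ) * F x) * P z := by
    push_cast
    rw [Finset.sum_comm]
    simp_rw [Finset.sum_mul]
  rw [← e1] at key
  have h2 := congrArg norm key
  rw [norm_mul, Complex.norm_natCast, Complex.norm_real, Real.norm_eq_abs] at h2
  have h3 : (n : ℝ) * |∑ x, ∑ z, g (z - x) * F x * P z| ≤ n * (ε * n) := by
    rw [← h2]
    calc _ ≤ ∑ k : ZMod n, ‖(∑ u, (g u : ℂ) * ZMod.stdAddChar (k * u)) *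
        (∑ x, (F x : ℂ) * ZMod.stdAddChar (k * x)) *
        (∑ y, (P y : ℂ) * ZMod.stdAddChar (-(k * y)))‖ := norm_sum_le _ _
      _ ≤ ∑ k : ZMod n, ε * ((‖∑ x, (F x : ℂ) * ZMod.stdAddChar (k * x)‖ ^ 2
          + ‖∑ y, (P y : ℂ) * ZMod.stdAddChar (-(k * y))‖ ^ 2) / 2) := by
          refine Finset.sum_le_sum fun k _ => ?_
          rw [norm_mul, norm_mul, mul_assoc]
          refine mul_le_mul (hg k) ?_ (by positivity) hε
          nlinarith [sq_nonneg (‖∑ x, (F x : ℂ) * ZMod.stdAddChar (k * x)‖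
            - ‖∑ y, (P y : ℂ) * ZMod.stdAddChar (-(k * y))‖)]
      _ = ε * ((∑ k : ZMod n, ‖∑ x, (F x : ℂ) * ZMod.stdAddChar (k * x)‖ ^ 2
          + ∑ k : ZMod n, ‖∑ y, (P y : ℂ) * ZMod.stdAddChar (-(k * y))‖ ^ 2) / 2) := by
          rw [← Finset.mul_sum, ← Finset.sum_div, Finset.sum_add_distrib]
      _ ≤ ε * (((n : ℝ) ^ 2 + (n : ℝ) ^ 2) / 2) := by
          have := (parseval_le F hF).1
          have := (parseval_le P hP).2
          gcongr
      _ = n * (ε * n) := by ring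
  exact le_of_mul_le_mul_left h3 hn

/-! ### Box sums weighted by uniform sets -/

/-- `g` is bilinearly `ε`-uniform if the kernel `g (z - x)` correlates by at most `ε` (unnormalised)
with every product of `1`-bounded functions of `x` and of `z`. -/
def BilinUnif {G : Type*} [AddCommGroup G] [Fintype G] (ε : ℝ) (g : G → ℝ) : Prop :=
  ∀ F P : G → ℝ, (∀ x, |F x| ≤ 1) → (∀ x, |P x| ≤ 1) → |∑ x, ∑ z, g (z - x) * F x * P z| ≤ ε

/-- The fourth power of the unnormalised box norm of `f`. -/
def boxSum {G : Type*} [Fintype G] (f : G → G → ℝ) : ℝ :=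
  ∑ x, ∑ x', ∑ y, ∑ y', f x y * f x' y * f x y' * f x' y'

/-- The box sum of `f` with weights: the sum over `z` of the box sum of `f` in which the variables
`x`, `x'`, `y`, `y'` carry the weights `h₁ (z - x)`, `h₂ (z - x')`, `h₃ (z - y)`, `h₄ (z - y')`. -/
def boxConv {G : Type*} [AddCommGroup G] [Fintype G] (f : G → G → ℝ) (h₁ h₂ h₃ h₄ : G → ℝ) : ℝ :=
  ∑ x, ∑ x', ∑ y, ∑ y', ∑ z, f x y * f x' y * f x y' * f x' y' *
    (h₁ (z - x) * h₂ (z - x') * h₃ (z - y) * h₄ (z - y'))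

lemma sum4_comm {G : Type*} [Fintype G] (φ : G → G → G → G → ℝ) :
    ∑ x, ∑ x', ∑ y, ∑ y', φ x x' y y' = ∑ y, ∑ y', ∑ x, ∑ x', φ x x' y y' := by
  calc ∑ x, ∑ x', ∑ y, ∑ y', φ x x' y y'
      = ∑ p : G × G, ∑ q : G × G, φ p.1 p.2 q.1 q.2 := by simp [Fintype.sum_prod_type]
    _ = ∑ q : G × G, ∑ p : G × G, φ p.1 p.2 q.1 q.2 := Finset.sum_comm
    _ = _ := by simp [Fintype.sum_prod_type]

/-- Weights with values in `[0, 1]`, depending on the rows and on the columns only, do not increase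
a box sum: for fixed `x`, `x'` the sum over `y`, `y'` is a square, and conversely. -/
lemma boxSum_restrict {G : Type*} [Fintype G] (f : G → G → ℝ) (p q : G → ℝ) (hp : ∀ x, 0 ≤ p x ∧ p x ≤ 1)
    (hq : ∀ x, 0 ≤ q x ∧ q x ≤ 1) :
    ∑ x, ∑ x', ∑ y, ∑ y', f x y * f x' y * f x y' * f x' y' * (p x * p x' * q y * q y')
      ≤ boxSum f := by
  have hpp : ∀ x x', 0 ≤ p x * p x' ∧ p x * p x' ≤ 1 := fun x x' =>
    ⟨mul_nonneg (hp x).1 (hp x').1, mul_le_one₀ (hp x).2 (hp x').1 (hp x').2⟩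
  have hqq : ∀ x x', 0 ≤ q x * q x' ∧ q x * q x' ≤ 1 := fun x x' =>
    ⟨mul_nonneg (hq x).1 (hq x').1, mul_le_one₀ (hq x).2 (hq x').1 (hq x').2⟩
  calc _ = ∑ x, ∑ x', p x * p x' * (∑ y, q y * (f x y * f x' y)) ^ 2 := by
        refine sum_congr rfl fun x _ => sum_congr rfl fun x' _ => ?_
        rw [sq, Finset.sum_mul_sum, Finset.mul_sum]
        refine sum_congr rfl fun y _ => ?_
        rw [Finset.mul_sum]
        refine sum_congr rfl fun y' _ => ?_
        ring
    _ ≤ ∑ x, ∑ x', (∑ y, q y * (f x y * f x' y)) ^ 2 :=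
        sum_le_sum fun x _ => sum_le_sum fun x' _ =>
          mul_le_of_le_one_left (sq_nonneg _) (hpp x x').2
    _ = ∑ y, ∑ y', q y * q y' * (∑ x, f x y * f x y') ^ 2 := by
        simp_rw [sq, Finset.sum_mul_sum]
        rw [sum4_comm]
        refine sum_congr rfl fun x _ => sum_congr rfl fun x' _ => ?_
        rw [Finset.mul_sum]
        refine sum_congr rfl fun y _ => ?_
        rw [Finset.mul_sum]
        refine sum_congr rfl fun y' _ => ?_
        ring
    _ ≤ ∑ y, ∑ y', (∑ x, f x y * f x y') ^ 2 :=
        sum_le_sum fun x _ => sum_le_sum fun x' _ =>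
          mul_le_of_le_one_left (sq_nonneg _) (hqq x x').2
    _ = boxSum f := by
        unfold boxSum
        rw [sum4_comm]
        simp_rw [sq, Finset.sum_mul_sum]
        refine sum_congr rfl fun x _ => sum_congr rfl fun x' _ =>
          sum_congr rfl fun x _ => sum_congr rfl fun x' _ => ?_
        ring

section
variable {G : Type*} [AddCommGroup G] [Fintype G]

lemma boxConv_swap (f : G → G → ℝ) (h₁ h₂ h₃ h₄ : G → ℝ) :
    boxConv f h₁ h₂ h₃ h₄ = boxConv f h₂ h₁ h₃ h₄ := by
  unfold boxConv
  rw [Finset.sum_comm]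
  refine sum_congr rfl fun x _ => sum_congr rfl fun x' _ => sum_congr rfl fun y _ =>
    sum_congr rfl fun y' _ => sum_congr rfl fun z _ => ?_
  ring

lemma boxConv_transpose (f : G → G → ℝ) (h₁ h₂ h₃ h₄ : G → ℝ) :
    boxConv f h₁ h₂ h₃ h₄ = boxConv (fun x y => f y x) h₃ h₄ h₁ h₂ := by
  unfold boxConv
  rw [sum4_comm]
  refine sum_congr rfl fun x _ => sum_congr rfl fun x' _ => sum_congr rfl fun y _ =>
    sum_congr rfl fun y' _ => sum_congr rfl fun z _ => ?_
  ring

lemma abs_mul_le_one {a b : ℝ} (ha : |a| ≤ 1) (hb : |b| ≤ 1) : |a * b| ≤ 1 := by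
  rw [abs_mul]; exact mul_le_one₀ ha (abs_nonneg _) hb

/-- A bilinearly uniform weight makes the weighted box sum small: for fixed `x'`, `y`, `y'` the
remaining factors split into a function of `x` and a function of `z`. -/
lemma boxConv_err (f : G → G → ℝ) (g h₂ h₃ h₄ : G → ℝ) (ε : ℝ) (hg : BilinUnif ε g)
    (hf : ∀ x y, |f x y| ≤ 1) (h2 : ∀ x, |h₂ x| ≤ 1) (h3 : ∀ x, |h₃ x| ≤ 1)
    (h4 : ∀ x, |h₄ x| ≤ 1) :
    |boxConv f g h₂ h₃ h₄| ≤ (Fintype.card G : ℝ) ^ 3 * ε := by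
  have e : boxConv f g h₂ h₃ h₄ = ∑ x', ∑ y, ∑ y', f x' y * f x' y' *
      ∑ x, ∑ z, g (z - x) * (f x y * f x y') * (h₂ (z - x') * h₃ (z - y) * h₄ (z - y')) := by
    unfold boxConv
    rw [Finset.sum_comm]
    refine sum_congr rfl fun x' _ => ?_
    rw [Finset.sum_comm]
    refine sum_congr rfl fun y _ => ?_
    rw [Finset.sum_comm]
    refine sum_congr rfl fun y' _ => ?_
    rw [Finset.mul_sum]
    refine sum_congr rfl fun x _ => ?_
    rw [Finset.mul_sum]
    refine sum_congr rfl fun z _ => ?_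
    ring
  rw [e]
  have hb : ∀ x' y y', |f x' y * f x' y' * ∑ x, ∑ z, g (z - x) * (f x y * f x y') *
      (h₂ (z - x') * h₃ (z - y) * h₄ (z - y'))| ≤ ε := by
    intro x' y y'
    rw [abs_mul]
    have h := hg (fun x => f x y * f x y') (fun z => h₂ (z - x') * h₃ (z - y) * h₄ (z - y'))
      (fun x => abs_mul_le_one (hf _ _) (hf _ _))
      (fun z => abs_mul_le_one (abs_mul_le_one (h2 _) (h3 _)) (h4 _))
    have h' := abs_mul_le_one (hf x' y) (hf x' y')
    exact (mul_le_of_le_one_left (abs_nonneg _) h').trans h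
  calc _ ≤ ∑ x' : G, ∑ y : G, ∑ y' : G, ε := by
        refine (abs_sum_le_sum_abs _ _).trans (sum_le_sum fun x' _ => ?_)
        refine (abs_sum_le_sum_abs _ _).trans (sum_le_sum fun y _ => ?_)
        exact (abs_sum_le_sum_abs _ _).trans (sum_le_sum fun y' _ => hb _ _ _)
    _ = _ := by simp [Finset.card_univ]; ring

lemma boxConv_le (f : G → G → ℝ) (h : G → ℝ) (hh : ∀ x, 0 ≤ h x ∧ h x ≤ 1) :
    boxConv f h h h h ≤ Fintype.card G * boxSum f := by
  have e : boxConv f h h h h = ∑ z, ∑ x, ∑ x', ∑ y, ∑ y', f x y * f x' y * f x y' * f x' y' *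
      (h (z - x) * h (z - x') * h (z - y) * h (z - y')) := by
    unfold boxConv
    rw [Finset.sum_comm (s := univ) (t := univ) (f := fun z x => ∑ x', ∑ y, ∑ y',
      f x y * f x' y * f x y' * f x' y' * (h (z - x) * h (z - x') * h (z - y) * h (z - y')))]
    refine sum_congr rfl fun x _ => ?_
    rw [Finset.sum_comm (s := univ) (t := univ) (f := fun z x' => ∑ y, ∑ y',
      f x y * f x' y * f x y' * f x' y' * (h (z - x) * h (z - x') * h (z - y) * h (z - y')))]
    refine sum_congr rfl fun x' _ => ?_
    rw [Finset.sum_comm (s := univ) (t := univ) (f := fun z y => ∑ y',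
      f x y * f x' y * f x y' * f x' y' * (h (z - x) * h (z - x') * h (z - y) * h (z - y')))]
    refine sum_congr rfl fun y _ => ?_
    rw [Finset.sum_comm]
  rw [e]
  calc _ ≤ ∑ _z : G, boxSum f := sum_le_sum fun z _ =>
        boxSum_restrict f (fun x => h (z - x)) (fun x => h (z - x)) (fun x => hh _) (fun x => hh _)
    _ = _ := by simp [Finset.card_univ]

lemma boxConv_sub (f : G → G → ℝ) (h h' h₂ h₃ h₄ : G → ℝ) (b : ℝ) :
    boxConv f (fun x => h x - b * h' x) h₂ h₃ h₄
      = boxConv f h h₂ h₃ h₄ - b * boxConv f h' h₂ h₃ h₄ := by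
  unfold boxConv
  simp_rw [Finset.mul_sum, ← Finset.sum_sub_distrib]
  refine sum_congr rfl fun x _ => sum_congr rfl fun x' _ => sum_congr rfl fun y _ =>
    sum_congr rfl fun y' _ => sum_congr rfl fun z _ => ?_
  ring

/-- Weights `e₁`, `e₂` that are uniform of densities `b₁`, `b₂` relative to `I` may be replaced by
`b₁ I` and `b₂ I`. The four weights are exchanged one at a time, each at the cost of one
application of `boxConv_err`. -/
lemma boxConv_main (f : G → G → ℝ) (e₁ e₂ I : G → ℝ) (b₁ b₂ ε : ℝ)
    (hf : ∀ x y, |f x y| ≤ 1) (he₁ : ∀ x, 0 ≤ e₁ x ∧ e₁ x ≤ 1) (he₂ : ∀ x, 0 ≤ e₂ x ∧ e₂ x ≤ 1)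
    (hI : ∀ x, 0 ≤ I x ∧ I x ≤ 1) (hb₁ : 0 ≤ b₁ ∧ b₁ ≤ 1) (hb₂ : 0 ≤ b₂ ∧ b₂ ≤ 1)
    (hg₁ : BilinUnif ε (fun x => e₁ x - b₁ * I x)) (hg₂ : BilinUnif ε (fun x => e₂ x - b₂ * I x)) :
    boxConv f e₂ e₂ e₁ e₁ ≤ (b₁ * b₂) ^ 2 * (Fintype.card G * boxSum f)
      + 4 * ((Fintype.card G : ℝ) ^ 3 * ε) := by
  have ab : ∀ {h : G → ℝ}, (∀ x, 0 ≤ h x ∧ h x ≤ 1) → ∀ x, |h x| ≤ 1 := fun hh x =>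
    abs_le.mpr ⟨by linarith [(hh x).1], (hh x).2⟩
  have hε : 0 ≤ (Fintype.card G : ℝ) ^ 3 * ε :=
    (abs_nonneg _).trans (boxConv_err f _ _ _ _ ε hg₁ hf (ab hI) (ab hI) (ab hI))
  set D := (Fintype.card G : ℝ) ^ 3 * ε with hD
  have s1 := le_of_abs_le (boxConv_err f _ e₂ e₁ e₁ ε hg₂ hf (ab he₂) (ab he₁) (ab he₁))
  rw [boxConv_sub, ← hD] at s1
  have s2 := le_of_abs_le (boxConv_err f _ I e₁ e₁ ε hg₂ hf (ab hI) (ab he₁) (ab he₁))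
  rw [boxConv_sub, boxConv_swap, ← hD] at s2
  have s3 := le_of_abs_le (boxConv_err (fun x y => f y x) _ e₁ I I ε hg₁ (fun x y => hf y x)
    (ab he₁) (ab hI) (ab hI))
  rw [boxConv_sub, ← boxConv_transpose f I I e₁ e₁,
    ← boxConv_transpose f I I I e₁, ← hD] at s3
  have s4 := le_of_abs_le (boxConv_err (fun x y => f y x) _ I I I ε hg₁ (fun x y => hf y x)
    (ab hI) (ab hI) (ab hI))
  rw [boxConv_sub, boxConv_swap _ e₁ I, ← boxConv_transpose f I I I e₁,
    ← boxConv_transpose f I I I I, ← hD] at s4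
  have s5 := boxConv_le f I hI
  set B := boxConv f I I I I
  set K4 := boxConv f I I I e₁
  set K3 := boxConv f I I e₁ e₁
  set K2 := boxConv f I e₂ e₁ e₁
  have hbb : 0 ≤ b₁ * b₂ := mul_nonneg hb₁.1 hb₂.1
  have t4 : b₁ * boxConv f I I I e₁ ≤ b₁ * (b₁ * B + D) := by
    apply mul_le_mul_of_nonneg_left _ hb₁.1; linarith
  have t3 : K3 ≤ b₁ ^ 2 * B + 2 * D := by nlinarith [mul_le_of_le_one_left hε hb₁.2]
  have t2 : K2 ≤ b₂ * (b₁ ^ 2 * B + 2 * D) + D := by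
    have := mul_le_mul_of_nonneg_left t3 hb₂.1; linarith
  have t1 := mul_le_mul_of_nonneg_left t2 hb₂.1
  have h1 : b₂ ^ 2 * D ≤ D := mul_le_of_le_one_left hε (pow_le_one₀ hb₂.1 hb₂.2)
  have h2 : b₂ * D ≤ D := mul_le_of_le_one_left hε hb₂.2
  have h3 := mul_le_mul_of_nonneg_left s5 (sq_nonneg (b₁ * b₂))
  nlinarith
end

/-! ### The generalised von Neumann inequality -/

/-- The Cauchy–Schwarz inequality with a `0`-`1` valued weight `w`, which is enlarged to `v` in the
second factor. -/
lemma weighted_cs {ι : Type*} [Fintype ι] (w v t : ι → ℝ) (hw : ∀ i, w i * w i = w i)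
    (hwv : ∀ i, w i ≤ v i) : (∑ i, w i * t i) ^ 2 ≤ (∑ i, w i) * ∑ i, v i * t i ^ 2 := by
  have h := Finset.sum_mul_sq_le_sq_mul_sq univ w (fun i => w i * t i)
  have e1 : ∀ i, w i * (w i * t i) = w i * t i := fun i => by rw [← mul_assoc, hw]
  have e2 : ∀ i, w i ^ 2 = w i := fun i => by rw [sq, hw]
  have e3 : ∀ i, (w i * t i) ^ 2 = w i * t i ^ 2 := fun i => by rw [mul_pow, e2]
  simp_rw [e1, e2, e3] at h
  refine h.trans (mul_le_mul_of_nonneg_left (sum_le_sum fun i _ => ?_) (sum_nonneg fun i _ => ?_))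
  · exact mul_le_mul_of_nonneg_right (hwv i) (sq_nonneg _)
  · rw [← e2]; positivity

section
variable {G : Type*} [AddCommGroup G] [Fintype G]

/-- Generalised von Neumann inequality: the number of corners weighted by `f` at the vertex
`(x, y)` is controlled by a weighted box sum of `f`. The first Cauchy–Schwarz inequality, in
`(y, z)`, eliminates `a (z - y) y`; the second, in `(z, x, x')`, eliminates `a x (z - x) *
a x' (z - x')`. Both weights are replaced by majorants that depend on one coordinate only. -/
lemma gvn (f a : G → G → ℝ) (e₁ e₂ : G → ℝ) (ha : ∀ x y, a x y * a x y = a x y)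
    (ha1 : ∀ x y, a x y ≤ e₁ x) (ha2 : ∀ x y, a x y ≤ e₂ y) (he₂ : ∀ x, 0 ≤ e₂ x) :
    (∑ x, ∑ y, ∑ z, f x y * a (z - y) y * a x (z - x)) ^ 4 ≤
      (∑ x, ∑ y, a x y) ^ 2 * (∑ z, (∑ x, a x (z - x)) ^ 2) * boxConv f e₂ e₂ e₁ e₁ := by
  have a0 : ∀ x y, 0 ≤ a x y := fun x y => by rw [← ha]; exact mul_self_nonneg _
  set T := ∑ x, ∑ y, ∑ z, f x y * a (z - y) y * a x (z - x) with hT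
  set S := ∑ y, ∑ z, e₁ (z - y) * (∑ x, f x y * a x (z - x)) ^ 2 with hS
  have hsumA : ∑ y, ∑ z, a (z - y) y = ∑ x, ∑ y, a x y := by
    rw [Finset.sum_comm (s := univ) (t := univ) (f := fun x y => a x y)]
    refine sum_congr rfl fun y _ => ?_
    exact Fintype.sum_equiv (Equiv.subRight y) _ _ fun z => rfl
  have step1 : T ^ 2 ≤ (∑ x, ∑ y, a x y) * S := by
    have h := weighted_cs (ι := G × G) (fun p => a (p.2 - p.1) p.1) (fun p => e₁ (p.2 - p.1))
      (fun p => ∑ x, f x p.1 * a x (p.2 - x)) (fun p => ha _ _) (fun p => ha1 _ _)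
    simp only [Fintype.sum_prod_type] at h
    rw [hsumA] at h
    convert h using 2
    rw [hT, Finset.sum_comm]
    refine sum_congr rfl fun y _ => ?_
    rw [Finset.sum_comm]
    refine sum_congr rfl fun z _ => ?_
    rw [Finset.mul_sum]
    exact sum_congr rfl fun x _ => by ring
  have step2 : S ^ 2 ≤ (∑ z, (∑ x, a x (z - x)) ^ 2) * boxConv f e₂ e₂ e₁ e₁ := by
    have h := weighted_cs (ι := G × G × G) (fun p => a p.2.1 (p.1 - p.2.1) * a p.2.2 (p.1 - p.2.2))
      (fun p => e₂ (p.1 - p.2.1) * e₂ (p.1 - p.2.2))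
      (fun p => ∑ y, e₁ (p.1 - y) * (f p.2.1 y * f p.2.2 y))
      (fun p => by
        have h1 := ha p.2.1 (p.1 - p.2.1)
        have h2 := ha p.2.2 (p.1 - p.2.2)
        linear_combination (a p.2.2 (p.1 - p.2.2) * a p.2.2 (p.1 - p.2.2)) * h1
          + a p.2.1 (p.1 - p.2.1) * h2)
      (fun p => mul_le_mul (ha2 _ _) (ha2 _ _) (a0 _ _) (he₂ _))
    simp only [Fintype.sum_prod_type] at h
    convert h using 2
    · rw [hS, Finset.sum_comm]
      refine sum_congr rfl fun z _ => ?_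
      simp_rw [sq, Finset.sum_mul_sum, Finset.mul_sum]
      rw [Finset.sum_comm]
      refine sum_congr rfl fun x _ => ?_
      rw [Finset.sum_comm]
      exact sum_congr rfl fun x' _ => sum_congr rfl fun y _ => by ring
    · refine sum_congr rfl fun z _ => ?_
      rw [sq, Finset.sum_mul_sum]
    · unfold boxConv
      symm
      rw [Finset.sum_comm]
      refine sum_congr rfl fun x _ => ?_
      rw [Finset.sum_comm]
      refine sum_congr rfl fun x' _ => ?_
      simp_rw [sq, Finset.sum_mul_sum, Finset.mul_sum]
      rw [Finset.sum_comm]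
      refine sum_congr rfl fun y _ => ?_
      rw [Finset.sum_comm]
      exact sum_congr rfl fun y' _ => sum_congr rfl fun z _ => by ring
  have hS0 : 0 ≤ (∑ x, ∑ y, a x y) * S := (sq_nonneg T).trans step1
  calc T ^ 4 = (T ^ 2) ^ 2 := by ring
    _ ≤ ((∑ x, ∑ y, a x y) * S) ^ 2 := pow_le_pow_left₀ (sq_nonneg _) step1 2
    _ = (∑ x, ∑ y, a x y) ^ 2 * S ^ 2 := by ring
    _ ≤ _ := by rw [mul_assoc]; exact mul_le_mul_of_nonneg_left step2 (sq_nonneg _)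

/-- The sum of the squares of the numbers of points of `a` on the antidiagonals `x + y = z` is at
most about its value for random `e₂`. Dominating `a` by `e₁ e₂` turns this sum into a bilinear form
in `e₂ (z - x)`. -/
lemma antidiag_energy (a : G → G → ℝ) (e₁ e₂ I : G → ℝ) (b ε : ℝ) (hb : 0 ≤ b)
    (ha0 : ∀ x y, 0 ≤ a x y) (ha : ∀ x y, a x y ≤ e₁ x * e₂ y)
    (he₁ : ∀ x, 0 ≤ e₁ x ∧ e₁ x ≤ 1) (he₂ : ∀ x, 0 ≤ e₂ x ∧ e₂ x ≤ 1)
    (hI : ∀ x, 0 ≤ I x ∧ I x ≤ 1) (hg : BilinUnif ε (fun x => e₂ x - b * I x)) :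
    ∑ z, (∑ x, a x (z - x)) ^ 2 ≤ b * (∑ x, e₁ x) ^ 2 * (∑ x, e₂ x) + Fintype.card G * ε := by
  set n : ℝ := (Fintype.card G : ℝ) with hn
  have hn0 : 0 < n := by
    rw [hn]; exact_mod_cast Fintype.card_pos_iff.mpr ⟨(0 : G)⟩
  set ρ : G → ℝ := fun z => ∑ x, e₁ x * e₂ (z - x) with hρ
  have hρ0 : ∀ z, 0 ≤ ρ z := fun z => sum_nonneg fun x _ => mul_nonneg (he₁ _).1 (he₂ _).1
  have hρn : ∀ z, ρ z ≤ n := fun z => by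
    calc ρ z ≤ ∑ _x : G, (1 : ℝ) := sum_le_sum fun x _ =>
          mul_le_one₀ (he₁ _).2 (he₂ _).1 (he₂ _).2
      _ = n := by simp [Finset.card_univ, hn]
  have h1 : ∑ z, (∑ x, a x (z - x)) ^ 2 ≤ ∑ z, ρ z ^ 2 := sum_le_sum fun z _ =>
    pow_le_pow_left₀ (sum_nonneg fun x _ => ha0 _ _) (sum_le_sum fun x _ => ha _ _) 2
  have hsumρ : ∑ z, ρ z = (∑ x, e₁ x) * ∑ x, e₂ x := by
    rw [hρ, Finset.sum_comm, Finset.sum_mul]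
    refine sum_congr rfl fun x _ => ?_
    rw [← Finset.mul_sum]
    congr 1
    exact Fintype.sum_equiv (Equiv.subRight x) _ _ fun z => rfl
  have h2 := le_of_abs_le (hg e₁ (fun z => ρ z / n)
    (fun x => abs_le.mpr ⟨by linarith [(he₁ x).1], (he₁ x).2⟩)
    (fun z => abs_le.mpr ⟨by linarith [div_nonneg (hρ0 z) hn0.le],
      (div_le_one hn0).mpr (hρn z)⟩))
  have e : ∑ x, ∑ z, (e₂ (z - x) - b * I (z - x)) * e₁ x * (ρ z / n)
      = (∑ z, ρ z ^ 2) / n - b * (∑ x, ∑ z, I (z - x) * e₁ x * ρ z) / n := by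
    rw [Finset.sum_comm]
    have : ∑ z, ρ z ^ 2 = ∑ x, ∑ z, e₂ (z - x) * e₁ x * ρ z := by
      rw [Finset.sum_comm]
      refine sum_congr rfl fun z _ => ?_
      rw [sq]
      nth_rewrite 1 [hρ]
      rw [Finset.sum_mul]
      exact sum_congr rfl fun x _ => by ring
    rw [this, Finset.sum_comm]
    simp_rw [Finset.mul_sum, Finset.sum_div, ← Finset.sum_sub_distrib]
    exact sum_congr rfl fun x _ => sum_congr rfl fun z _ => by ring
  rw [e] at h2
  have h3 : ∑ x, ∑ z, I (z - x) * e₁ x * ρ z ≤ (∑ x, e₁ x) ^ 2 * (∑ x, e₂ x) := by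
    calc _ ≤ ∑ x, ∑ z, e₁ x * ρ z := sum_le_sum fun x _ => sum_le_sum fun z _ => by
          rw [mul_assoc]
          exact mul_le_of_le_one_left (mul_nonneg (he₁ _).1 (hρ0 _)) (hI _).2
      _ = _ := by
          simp_rw [← Finset.mul_sum]
          rw [← Finset.sum_mul, hsumρ]; ring
  have h4 := mul_le_mul_of_nonneg_left h3 hb
  rw [← sub_div, div_le_iff₀ hn0] at h2
  linarith
end

/-! ### A large box norm gives a density increment -/

/-- A function taking the value `1 - α` where `p` holds and `-α` elsewhere splits a sum in two. -/
lemma sum_two_level {ι : Type*} (E : Finset ι) (p : ι → Prop) [DecidablePred p] (α : ℝ)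
    (h : ι → ℝ) : ∑ x ∈ E, ((if p x then (1 : ℝ) else 0) - α) * h x
      = (1 - α) * ∑ x ∈ E.filter p, h x - α * ∑ x ∈ E.filter (fun x => ¬ p x), h x := by
  rw [← Finset.sum_filter_add_sum_filter_not E p, Finset.mul_sum, Finset.mul_sum, sub_eq_add_neg,
    ← Finset.sum_neg_distrib]
  congr 1
  · exact sum_congr rfl fun x hx => by rw [if_pos (mem_filter.mp hx).2]
  · exact sum_congr rfl fun x hx => by rw [if_neg (mem_filter.mp hx).2]; ring

lemma sum_density {G : Type*} [DecidableEq G] (F₁ F₂ : Finset G) (A : Finset (G × G)) (α : ℝ) :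
    ∑ x ∈ F₁, ∑ y ∈ F₂, ((if (x, y) ∈ A then (1 : ℝ) else 0) - α)
      = ((A ∩ F₁ ×ˢ F₂).card : ℝ) - α * (F₁.card * F₂.card) := by
  rw [← Finset.sum_product', Finset.sum_sub_distrib, Finset.sum_boole, Finset.inter_comm,
    Finset.filter_mem_eq_inter]
  simp [Finset.card_product]; ring

/-- If the balanced function of `A` has large box norm, then `A` has increased density on a large
sub-box. Fixing `x'` and `y'`, the box sum becomes a combination, with coefficients bounded by `1`,
of the excesses of `A` on the four boxes cut out by the `y'`-th row and the `x'`-th column of `A`.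
These excesses have sum `0`, so one of them is large and positive. -/
lemma box_increment {G : Type*} [Fintype G] [DecidableEq G] (E₁ E₂ : Finset G)
    (A : Finset (G × G)) (hA : A ⊆ E₁ ×ˢ E₂) (α η : ℝ) (hη : 0 < η) (hα0 : 0 ≤ α) (hα1 : α ≤ 1)
    (hE : 0 < (E₁.card : ℝ) * E₂.card)
    (hα : (A.card : ℝ) = α * (E₁.card * E₂.card))
    (hbox : η * (E₁.card * E₂.card) ^ 2 ≤ boxSum (fun x y => (if (x, y) ∈ A then (1 : ℝ) else 0) -
      α * ((if x ∈ E₁ then 1 else 0) * (if y ∈ E₂ then 1 else 0)))) :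
    ∃ F₁ ⊆ E₁, ∃ F₂ ⊆ E₂, (α + η / 8) * (F₁.card * F₂.card) ≤ ((A ∩ F₁ ×ˢ F₂).card : ℝ) ∧
      η / 8 * (E₁.card * E₂.card) ≤ (F₁.card : ℝ) * F₂.card := by
  set m : ℝ := (E₁.card : ℝ) * E₂.card with hm
  set s := η / 8 * m with hs
  set φ : G → G → ℝ := fun x y => (if (x, y) ∈ A then (1 : ℝ) else 0) - α with hφ
  set σ : Finset G → Finset G → ℝ := fun F₁ F₂ => ∑ x ∈ F₁, ∑ y ∈ F₂, φ x y with hσ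
  have hσe : ∀ F₁ F₂, σ F₁ F₂ = ((A ∩ F₁ ×ˢ F₂).card : ℝ) - α * (F₁.card * F₂.card) :=
    fun F₁ F₂ => sum_density F₁ F₂ A α
  -- If the claim fails, the excess of `A` over density `α` is below `s` on every sub-box.
  by_contra hcon
  have hlt : ∀ F₁ ⊆ E₁, ∀ F₂ ⊆ E₂, σ F₁ F₂ < s := by
    intro F₁ h1 F₂ h2
    by_contra hge
    push Not at hge
    apply hcon
    have hc : ((A ∩ F₁ ×ˢ F₂).card : ℝ) ≤ F₁.card * F₂.card := by
      have := Finset.card_le_card (Finset.inter_subset_right (s₁ := A) (s₂ := F₁ ×ˢ F₂))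
      rw [Finset.card_product] at this
      exact_mod_cast this
    have hmm : (F₁.card : ℝ) * F₂.card ≤ m := by
      have a1 : (F₁.card : ℝ) ≤ E₁.card := by exact_mod_cast Finset.card_le_card h1
      have a2 : (F₂.card : ℝ) ≤ E₂.card := by exact_mod_cast Finset.card_le_card h2
      rw [hm]; gcongr
    have h0 : 0 ≤ (F₁.card : ℝ) * F₂.card := by positivity
    rw [hσe] at hge
    refine ⟨F₁, h1, F₂, h2, ?_, ?_⟩
    · have := mul_le_mul_of_nonneg_left hmm (by positivity : 0 ≤ η / 8)
      linarith
    · have := mul_nonneg hα0 h0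
      linarith
  have hφ1 : ∀ x y, |φ x y| ≤ 1 := fun x y => by
    simp only [hφ]; split_ifs <;> rw [abs_le] <;> constructor <;> linarith
  -- The excesses have sum zero and each is below `s`; hence each exceeds `-3 s`, and the
  -- combination of the four is below `8 s = η m` in absolute value.
  have hQ : ∀ x' y', |∑ x ∈ E₁, ∑ y ∈ E₂, φ x y * φ x' y * φ x y'| < η * m := by
    intro x' y'
    set V := E₁.filter (fun x => (x, y') ∈ A)
    set V' := E₁.filter (fun x => ¬ (x, y') ∈ A)
    set W := E₂.filter (fun y => (x', y) ∈ A)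
    set W' := E₂.filter (fun y => ¬ (x', y) ∈ A)
    have inner : ∀ x, ∑ y ∈ E₂, φ x' y * φ x y
        = (1 - α) * ∑ y ∈ W, φ x y - α * ∑ y ∈ W', φ x y := fun x =>
      sum_two_level E₂ (fun y => (x', y) ∈ A) α (φ x)
    have e : ∑ x ∈ E₁, ∑ y ∈ E₂, φ x y * φ x' y * φ x y'
        = (1 - α) * ((1 - α) * σ V W - α * σ V W') - α * ((1 - α) * σ V' W - α * σ V' W') := by
      calc _ = ∑ x ∈ E₁, φ x y' * ∑ y ∈ E₂, φ x' y * φ x y := by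
            refine sum_congr rfl fun x _ => ?_
            rw [Finset.mul_sum]
            exact sum_congr rfl fun y _ => by ring
        _ = _ := by
            rw [sum_two_level E₁ (fun x => (x, y') ∈ A) α]
            simp_rw [inner, Finset.sum_sub_distrib, ← Finset.mul_sum]
            rfl
    have tot : σ V W + σ V W' + (σ V' W + σ V' W') = 0 := by
      have r : ∀ x, ∑ y ∈ W, φ x y + ∑ y ∈ W', φ x y = ∑ y ∈ E₂, φ x y := fun x =>
        Finset.sum_filter_add_sum_filter_not E₂ _ _
      have : σ V W + σ V W' + (σ V' W + σ V' W') = σ E₁ E₂ := by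
        simp only [hσ]
        rw [← Finset.sum_add_distrib, ← Finset.sum_add_distrib]
        simp_rw [r]
        exact Finset.sum_filter_add_sum_filter_not E₁ _ _
      rw [this, hσe, Finset.inter_eq_left.mpr hA, hα]; ring
    have s1 := hlt V (filter_subset _ _) W (filter_subset _ _)
    have s2 := hlt V (filter_subset _ _) W' (filter_subset _ _)
    have s3 := hlt V' (filter_subset _ _) W (filter_subset _ _)
    have s4 := hlt V' (filter_subset _ _) W' (filter_subset _ _)
    have hs0 : 0 < s := by positivity
    have bd : ∀ c t : ℝ, |c| ≤ 1 → t < s → |c * t| ≤ 2 * s - t ∧ |c * t| < 2 * s - t := by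
      intro c t hc ht
      have h1 : |c * t| ≤ |t| := by
        rw [abs_mul]; exact mul_le_of_le_one_left (abs_nonneg _) hc
      have h2 : |t| < 2 * s - t := by rw [abs_lt]; constructor <;> linarith
      exact ⟨by linarith, by linarith⟩
    have c1 : |(1 - α) * (1 - α)| ≤ 1 := by rw [abs_le]; constructor <;> nlinarith
    have c2 : |(1 - α) * (-α)| ≤ 1 := by rw [abs_le]; constructor <;> nlinarith
    have c4 : |α * α| ≤ 1 := by rw [abs_le]; constructor <;> nlinarith
    have b1 := abs_lt.mp (bd _ _ c1 s1).2
    have b2 := abs_lt.mp (bd _ _ c2 s2).2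
    have b3 := abs_lt.mp (bd _ _ c2 s3).2
    have b4 := abs_lt.mp (bd _ _ c4 s4).2
    have hsm : 8 * s = η * m := by rw [hs]; ring
    rw [e, abs_lt]
    constructor <;> linarith
  -- Single out the pair of variables on which the four boxes depend.
  have hb : boxSum (fun x y => (if (x, y) ∈ A then (1 : ℝ) else 0) -
      α * ((if x ∈ E₁ then 1 else 0) * (if y ∈ E₂ then 1 else 0)))
      = ∑ x' ∈ E₁, ∑ y' ∈ E₂, φ x' y' * ∑ x ∈ E₁, ∑ y ∈ E₂, φ x y * φ x' y * φ x y' := by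
    set f : G → G → ℝ := fun x y => (if (x, y) ∈ A then (1 : ℝ) else 0) -
      α * ((if x ∈ E₁ then 1 else 0) * (if y ∈ E₂ then 1 else 0)) with hf
    have hfφ : ∀ x ∈ E₁, ∀ y ∈ E₂, f x y = φ x y := fun x hx y hy => by
      simp [hf, hφ, hx, hy]
    have hf0 : ∀ x y, (x ∉ E₁ ∨ y ∉ E₂) → f x y = 0 := fun x y h => by
      have : (x, y) ∉ A := fun hxy => by
        have := Finset.mem_product.mp (hA hxy); tauto
      rcases h with h | h <;> simp [hf, this, h]
    have sub1 : ∀ h : G → ℝ, (∀ x, x ∉ E₁ → h x = 0) → ∑ x, h x = ∑ x ∈ E₁, h x := fun h hh =>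
      (Finset.sum_subset (subset_univ _) fun x _ hx => hh x hx).symm
    have sub2 : ∀ h : G → ℝ, (∀ x, x ∉ E₂ → h x = 0) → ∑ x, h x = ∑ x ∈ E₂, h x := fun h hh =>
      (Finset.sum_subset (subset_univ _) fun x _ hx => hh x hx).symm
    calc boxSum f = ∑ x', ∑ x, ∑ y', ∑ y, f x y * f x' y * f x y' * f x' y' := by
          unfold boxSum
          rw [Finset.sum_comm]
          exact sum_congr rfl fun _ _ => sum_congr rfl fun _ _ => Finset.sum_comm
      _ = ∑ x' ∈ E₁, ∑ x ∈ E₁, ∑ y' ∈ E₂, ∑ y ∈ E₂, f x y * f x' y * f x y' * f x' y' := by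
          rw [sub1 _ fun x' hx => by simp [hf0 x' _ (Or.inl hx)]]
          refine sum_congr rfl fun x' _ => ?_
          rw [sub1 _ fun x hx => by simp [hf0 x _ (Or.inl hx)]]
          refine sum_congr rfl fun x _ => ?_
          rw [sub2 _ fun y' hx => by simp [hf0 _ y' (Or.inr hx)]]
          refine sum_congr rfl fun y' _ => ?_
          rw [sub2 _ fun y hx => by simp [hf0 _ y (Or.inr hx)]]
      _ = _ := by
          refine sum_congr rfl fun x' hx' => ?_
          rw [Finset.sum_comm]
          refine sum_congr rfl fun y' hy' => ?_
          rw [Finset.mul_sum]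
          refine sum_congr rfl fun x hx => ?_
          rw [Finset.mul_sum]
          refine sum_congr rfl fun y hy => ?_
          rw [hfφ x hx y hy, hfφ x' hx' y hy, hfφ x hx y' hy', hfφ x' hx' y' hy']; ring
  rw [hb] at hbox
  have hE1 : E₁.Nonempty := by
    rw [Finset.nonempty_iff_ne_empty]; rintro rfl; simp [hm] at hE
  have hE2 : E₂.Nonempty := by
    rw [Finset.nonempty_iff_ne_empty]; rintro rfl; simp [hm] at hE
  have : ∑ x' ∈ E₁, ∑ y' ∈ E₂, φ x' y' * ∑ x ∈ E₁, ∑ y ∈ E₂, φ x y * φ x' y * φ x y'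
      < ∑ x' ∈ E₁, ∑ y' ∈ E₂, η * m := by
    refine Finset.sum_lt_sum_of_nonempty hE1 fun x' _ =>
      Finset.sum_lt_sum_of_nonempty hE2 fun y' _ => ?_
    refine lt_of_le_of_lt (le_abs_self _) ?_
    rw [abs_mul]
    exact lt_of_le_of_lt (mul_le_of_le_one_left (abs_nonneg _) (hφ1 _ _)) (hQ x' y')
  simp only [Finset.sum_const, nsmul_eq_mul] at this
  have e : (E₁.card : ℝ) * (E₂.card * (η * m)) = η * m ^ 2 := by rw [hm]; ring
  linarith

/-! ### The density increment in a finite abelian group -/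

/-- If `A` contains only degenerate corners, the balanced function has a large corner sum. The part
coming from `1_A` counts the degenerate corners only, and the part coming from `α 1_{E₁ × E₂}`
is bounded below by Cauchy–Schwarz over antidiagonals. -/
lemma corner_count_lower {G : Type*} [AddCommGroup G] [Fintype G] [DecidableEq G]
    (E₁ E₂ : Finset G) (A : Finset (G × G)) (hA : A ⊆ E₁ ×ˢ E₂) (α : ℝ) (hα0 : 0 ≤ α)
    (hcf : ∀ x y z, (x, y) ∈ A → (z - y, y) ∈ A → (x, z - x) ∈ A → z = x + y) :
    α * (A.card : ℝ) ^ 2 / Fintype.card G - A.card ≤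
      |∑ x, ∑ y, ∑ z, ((if (x, y) ∈ A then (1 : ℝ) else 0) -
      α * ((if x ∈ E₁ then 1 else 0) * (if y ∈ E₂ then 1 else 0))) *
        (if (z - y, y) ∈ A then (1 : ℝ) else 0) * (if (x, z - x) ∈ A then (1 : ℝ) else 0)| := by
  set a : G → G → ℝ := fun x y => if (x, y) ∈ A then (1 : ℝ) else 0 with ha
  have hn0 : (0 : ℝ) < Fintype.card G := by
    exact_mod_cast Fintype.card_pos_iff.mpr ⟨(0 : G)⟩
  have hcard : ∑ x, ∑ y, a x y = A.card := by
    rw [← Fintype.sum_prod_type' a]; simp [ha]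
  set r : G → ℝ := fun z => ∑ x, a x (z - x) with hr
  have hr1 : ∑ z, r z = A.card := by
    rw [← hcard, hr, Finset.sum_comm]
    exact sum_congr rfl fun x _ => Fintype.sum_equiv (Equiv.subRight x) _ _ fun z => rfl
  have hr2 : ∀ z, ∑ y, a (z - y) y = r z := fun z =>
    Fintype.sum_equiv (Equiv.subLeft z) _ _ fun y => by simp
  have hCS : (A.card : ℝ) ^ 2 / Fintype.card G ≤ ∑ z, r z ^ 2 := by
    rw [div_le_iff₀ hn0, ← hr1]
    have := sq_sum_le_card_mul_sum_sq (s := (univ : Finset G)) (f := r)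
    rw [Finset.card_univ] at this
    linarith
  have e : ∑ x, ∑ y, ∑ z, ((if (x, y) ∈ A then (1 : ℝ) else 0) -
      α * ((if x ∈ E₁ then 1 else 0) * (if y ∈ E₂ then 1 else 0))) *
        (if (z - y, y) ∈ A then (1 : ℝ) else 0) * (if (x, z - x) ∈ A then (1 : ℝ) else 0)
      = A.card - α * ∑ z, r z ^ 2 := by
    have e1 : ∑ x, ∑ y, ∑ z, a x y * a (z - y) y * a x (z - x) = A.card := by
      rw [← hcard]
      refine sum_congr rfl fun x _ => sum_congr rfl fun y _ => ?_
      rw [Finset.sum_eq_single (x + y)]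
      · simp only [ha]
        rw [add_sub_cancel_right, add_sub_cancel_left]
        split_ifs <;> simp
      · -- A term with `z ≠ x + y` would be a genuine corner.
        intro z _ hz
        simp only [ha]
        split_ifs with h1 h2 h3 <;> simp
        exact hz (hcf _ _ _ h1 h2 h3)
      · simp
    have e2 : ∑ x, ∑ y, ∑ z, a (z - y) y * a x (z - x) = ∑ z, r z ^ 2 := by
      calc _ = ∑ x, ∑ z, ∑ y, a (z - y) y * a x (z - x) :=
            sum_congr rfl fun x _ => Finset.sum_comm
        _ = ∑ z, ∑ x, ∑ y, a (z - y) y * a x (z - x) := Finset.sum_comm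
        _ = _ := by
            refine sum_congr rfl fun z _ => ?_
            simp_rw [← Finset.sum_mul, hr2, ← Finset.mul_sum]
            rw [sq]
    rw [← e1, ← e2]
    simp_rw [Finset.mul_sum, ← Finset.sum_sub_distrib]
    refine sum_congr rfl fun x _ => sum_congr rfl fun y _ => sum_congr rfl fun z _ => ?_
    -- The indicator of `E₁ × E₂` at `(x, y)` is implied by the other two vertices lying in `A`.
    have hz : a (z - y) y * a x (z - x) * ((if x ∈ E₁ then 1 else 0) * (if y ∈ E₂ then 1 else 0))
        = a (z - y) y * a x (z - x) := by
      simp only [ha]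
      by_cases h1 : (z - y, y) ∈ A
      · by_cases h2 : (x, z - x) ∈ A
        · rw [if_pos h1, if_pos h2, if_pos (Finset.mem_product.mp (hA h2)).1,
            if_pos (Finset.mem_product.mp (hA h1)).2]
          norm_num
        · simp [h2]
      · simp [h1]
    simp only [ha] at hz ⊢
    linear_combination (-α) * hz
  rw [e]
  have := mul_le_mul_of_nonneg_left hCS hα0
  have h2 := neg_le_abs ((A.card : ℝ) - α * ∑ z, r z ^ 2)
  rw [mul_div_assoc]
  linarith

/-- Density increment in a group of order `2 N`, with `I` in the role of an interval of
length `N` relative to which `E₁` and `E₂` are uniform of densities `b₁`, `b₂`. -/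
lemma group_increment {G : Type*} [AddCommGroup G] [Fintype G] [DecidableEq G]
    (E₁ E₂ I : Finset G) (A : Finset (G × G)) (hA : A ⊆ E₁ ×ˢ E₂) (N : ℕ)
    (hG : Fintype.card G = 2 * N) (α b₁ b₂ ε : ℝ)
    (hα0 : 0 < α) (hα1 : α ≤ 1) (hb₁ : 0 < b₁ ∧ b₁ ≤ 1) (hb₂ : 0 < b₂ ∧ b₂ ≤ 1)
    (hE₁ : (E₁.card : ℝ) = b₁ * N) (hE₂ : (E₂.card : ℝ) = b₂ * N)
    (hα : (A.card : ℝ) = α * (E₁.card * E₂.card))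
    (hu₁ : BilinUnif (ε * (2 * N) ^ 2) (fun x : G => (if x ∈ E₁ then (1 : ℝ) else 0) -
      b₁ * (if x ∈ I then 1 else 0)))
    (hu₂ : BilinUnif (ε * (2 * N) ^ 2) (fun x : G => (if x ∈ E₂ then (1 : ℝ) else 0) -
      b₂ * (if x ∈ I then 1 else 0)))
    (hN : 4 ≤ α ^ 2 * (b₁ * b₂) * N) (hε : ε ≤ α ^ 10 * (b₁ * b₂) ^ 4 / 2 ^ 17)
    (hcf : ∀ x y z, (x, y) ∈ A → (z - y, y) ∈ A → (x, z - x) ∈ A → z = x + y) :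
    ∃ F₁ ⊆ E₁, ∃ F₂ ⊆ E₂,
      (α + α ^ 10 / 2 ^ 14) * (F₁.card * F₂.card) ≤ ((A ∩ F₁ ×ˢ F₂).card : ℝ) ∧
      α ^ 10 / 2 ^ 14 * (E₁.card * E₂.card) ≤ (F₁.card : ℝ) * F₂.card := by
  have hN0 : (0 : ℝ) < N := by
    rcases Nat.eq_zero_or_pos N with h | h
    · rw [h] at hN; norm_num at hN
    · exact_mod_cast h
  have hb : 0 < b₁ * b₂ := mul_pos hb₁.1 hb₂.1
  have hb1 : b₁ * b₂ ≤ 1 := mul_le_one₀ hb₁.2 hb₂.1.le hb₂.2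
  have hGr : (Fintype.card G : ℝ) = 2 * N := by exact_mod_cast hG
  set b := b₁ * b₂ with hbdef
  have hEE : (E₁.card : ℝ) * E₂.card = b * N ^ 2 := by rw [hE₁, hE₂]; ring
  set f : G → G → ℝ := fun x y => (if (x, y) ∈ A then (1 : ℝ) else 0) -
      α * ((if x ∈ E₁ then 1 else 0) * (if y ∈ E₂ then 1 else 0)) with hf
  have key : α ^ 10 / 2 ^ 11 * (E₁.card * E₂.card) ^ 2 ≤ boxSum f := by
    set a : G → G → ℝ := fun x y => if (x, y) ∈ A then (1 : ℝ) else 0 with ha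
    set e₁ : G → ℝ := fun x => if x ∈ E₁ then (1 : ℝ) else 0 with he₁
    set e₂ : G → ℝ := fun x => if x ∈ E₂ then (1 : ℝ) else 0 with he₂
    set i : G → ℝ := fun x => if x ∈ I then (1 : ℝ) else 0 with hi
    have he₁01 : ∀ x, 0 ≤ e₁ x ∧ e₁ x ≤ 1 := fun x => by
      simp only [he₁]; split_ifs <;> norm_num
    have he₂01 : ∀ x, 0 ≤ e₂ x ∧ e₂ x ≤ 1 := fun x => by
      simp only [he₂]; split_ifs <;> norm_num
    have hi01 : ∀ x, 0 ≤ i x ∧ i x ≤ 1 := fun x => by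
      simp only [hi]; split_ifs <;> norm_num
    have ha0 : ∀ x y, 0 ≤ a x y := fun x y => by simp only [ha]; split_ifs <;> norm_num
    have haa : ∀ x y, a x y * a x y = a x y := fun x y => by
      simp only [ha]; split_ifs <;> norm_num
    have hae : ∀ x y, a x y ≤ e₁ x * e₂ y := fun x y => by
      simp only [ha, he₁, he₂]
      by_cases h : (x, y) ∈ A
      · have := Finset.mem_product.mp (hA h)
        rw [if_pos h, if_pos this.1, if_pos this.2]; norm_num
      · rw [if_neg h]; exact mul_nonneg (he₁01 x).1 (he₂01 y).1
    have ha1 : ∀ x y, a x y ≤ e₁ x := fun x y =>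
      (hae x y).trans (mul_le_of_le_one_right (he₁01 x).1 (he₂01 y).2)
    have ha2 : ∀ x y, a x y ≤ e₂ y := fun x y =>
      (hae x y).trans (mul_le_of_le_one_left (he₂01 y).1 (he₁01 x).2)
    have hf1 : ∀ x y, |f x y| ≤ 1 := fun x y => by
      simp only [hf]
      have h1 := hae x y
      have h2 := (he₁01 x); have h3 := he₂01 y
      have h4 : 0 ≤ e₁ x * e₂ y := mul_nonneg h2.1 h3.1
      have h5 : e₁ x * e₂ y ≤ 1 := mul_le_one₀ h2.2 h3.1 h3.2
      have h6 := ha0 x y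
      have h7 := mul_nonneg hα0.le h4
      have h8 := mul_le_of_le_one_left h4 hα1
      change |a x y - α * (e₁ x * e₂ y)| ≤ 1
      rw [abs_le]; constructor <;> linarith
    have hcard : ∑ x, ∑ y, a x y = A.card := by
      rw [← Fintype.sum_prod_type' a]; simp [ha]
    have hs1 : ∑ x, e₁ x = E₁.card := by simp [he₁]
    have hs2 : ∑ x, e₂ x = E₂.card := by simp [he₂]
    have T1 := corner_count_lower E₁ E₂ A hA α hα0.le hcf
    have T2 := gvn f a e₁ e₂ haa ha1 ha2 (fun x => (he₂01 x).1)
    have T3 := antidiag_energy a e₁ e₂ i b₂ _ hb₂.1.le ha0 hae he₁01 he₂01 hi01 hu₂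
    have T4 := boxConv_main f e₁ e₂ i b₁ b₂ _ hf1 he₁01 he₂01 hi01 ⟨hb₁.1.le, hb₁.2⟩
      ⟨hb₂.1.le, hb₂.2⟩ hu₁ hu₂
    rw [hcard] at T2
    rw [hs1, hs2, hGr] at T3
    rw [hGr] at T4 T1
    set T := ∑ x, ∑ y, ∑ z, f x y * a (z - y) y * a x (z - x) with hT
    change _ ≤ |T| at T1
    set R := ∑ z, (∑ x, a x (z - x)) ^ 2 with hR
    set K := boxConv f e₂ e₂ e₁ e₁ with hK
    set B := boxSum f
    rw [hα, hEE] at T1 T2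
    have hα10 : α ^ 10 ≤ 1 := pow_le_one₀ hα0.le hα1
    have hε8 : 8 * ε ≤ b ^ 2 := by
      have h1 : b ^ 4 ≤ b ^ 2 := pow_le_pow_of_le_one hb.le hb1 (by norm_num)
      have h2 : α ^ 10 * b ^ 4 ≤ b ^ 4 := mul_le_of_le_one_left (by positivity) hα10
      have h3 : 0 < b ^ 4 := by positivity
      linarith
    have R1 : R ≤ 2 * b ^ 2 * N ^ 3 := by
      have e1 : b₂ * (E₁.card : ℝ) ^ 2 * E₂.card + 2 * N * (ε * (2 * N) ^ 2)
          = (b ^ 2 + 8 * ε) * N ^ 3 := by rw [hE₁, hE₂, hbdef]; ring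
      rw [e1] at T3
      refine T3.trans (mul_le_mul_of_nonneg_right ?_ (by positivity))
      linarith
    -- The bound on `N` absorbs the degenerate corners into half of the main term.
    have T5 : α ^ 3 * b ^ 2 * N ^ 3 / 4 ≤ |T| := by
      refine le_trans ?_ T1
      have e2 : α * (α * (b * (N : ℝ) ^ 2)) ^ 2 / (2 * N) = α ^ 3 * b ^ 2 * N ^ 3 / 2 := by
        field_simp
      rw [e2]
      have h := mul_le_mul_of_nonneg_left hN (by positivity : 0 ≤ α * b * (N : ℝ) ^ 2)
      have e3 : α * b * (N : ℝ) ^ 2 * (α ^ 2 * b * N) = α ^ 3 * b ^ 2 * N ^ 3 := by ring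
      rw [e3] at h
      linarith
    have T6 : (α ^ 3 * b ^ 2 * N ^ 3 / 4) ^ 4 ≤ (α * (b * N ^ 2)) ^ 2 * R * K := by
      calc _ ≤ |T| ^ 4 := pow_le_pow_left₀ (by positivity) T5 4
        _ = T ^ 4 := by rw [pow_abs, abs_of_nonneg (by positivity)]
        _ ≤ _ := T2
    have hR0 : 0 ≤ R := sum_nonneg fun z _ => sq_nonneg _
    have hK0 : 0 < K := by
      by_contra hneg
      push Not at hneg
      have h1 : (α * (b * (N : ℝ) ^ 2)) ^ 2 * R * K ≤ 0 :=
        mul_nonpos_of_nonneg_of_nonpos (by positivity) hneg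
      have h2 : 0 < (α ^ 3 * b ^ 2 * (N : ℝ) ^ 3 / 4) ^ 4 := by positivity
      linarith
    have T7 : α ^ 10 * b ^ 4 * N ^ 5 / 512 ≤ K := by
      have h1 : (α * (b * (N : ℝ) ^ 2)) ^ 2 * R * K
          ≤ (α * (b * (N : ℝ) ^ 2)) ^ 2 * (2 * b ^ 2 * N ^ 3) * K := by gcongr
      have h2 := T6.trans h1
      have e4 : (α ^ 3 * b ^ 2 * (N : ℝ) ^ 3 / 4) ^ 4
          = (2 * α ^ 2 * b ^ 4 * N ^ 7) * (α ^ 10 * b ^ 4 * N ^ 5 / 512) := by ring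
      have e5 : (α * (b * (N : ℝ) ^ 2)) ^ 2 * (2 * b ^ 2 * N ^ 3) * K
          = (2 * α ^ 2 * b ^ 4 * N ^ 7) * K := by ring
      rw [e4, e5] at h2
      exact le_of_mul_le_mul_left h2 (by positivity)
    -- The bound on `ε` makes the error of `boxConv_main` at most half of the main term.
    have T8 : α ^ 10 * b ^ 4 * N ^ 5 / 1024 ≤ b ^ 2 * (2 * N * B) := by
      have h3 : 4 * ((2 * (N : ℝ)) ^ 3 * (ε * (2 * N) ^ 2)) = 128 * ε * N ^ 5 := by ring
      rw [h3] at T4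
      have h4 := mul_le_mul_of_nonneg_right hε (by positivity : 0 ≤ 128 * (N : ℝ) ^ 5)
      have h5 : α ^ 10 * b ^ 4 / 2 ^ 17 * (128 * (N : ℝ) ^ 5) = α ^ 10 * b ^ 4 * N ^ 5 / 1024 := by
        ring
      rw [h5] at h4
      linarith
    rw [hEE]
    have e6 : α ^ 10 * b ^ 4 * (N : ℝ) ^ 5 / 1024
        = (2 * b ^ 2 * N) * (α ^ 10 / 2 ^ 11 * (b * N ^ 2) ^ 2) := by ring
    have e7 : b ^ 2 * (2 * N * B) = (2 * b ^ 2 * N) * B := by ring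
    rw [e6, e7] at T8
    exact le_of_mul_le_mul_left T8 (by positivity)
  have hfin := box_increment E₁ E₂ A hA α (α ^ 10 / 2 ^ 11) (by positivity) hα0.le hα1
    (by rw [hEE]; positivity) hα key
  have e8 : α ^ 10 / 2 ^ 11 / 8 = α ^ 10 / 2 ^ 14 := by ring
  rw [e8] at hfin
  exact hfin

/-! ### Corner-free configurations in the integers -/

/-- The exponential sum `∑ x ∈ E, e(θ x)`. -/
noncomputable def expSum (E : Finset ℤ) (θ : ℝ) : ℂ :=
  ∑ x ∈ E, Complex.exp (2 * Real.pi * Complex.I * (θ * x : ℝ))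

/-- `E ⊆ [0, N)` is Fourier `ε`-uniform: at every real frequency its exponential sum differs from that
of the interval `[0, N)`, scaled by the density of `E`, by at most `2 ε N`. The factor `2 N` is the
order of the group `ZMod (2 * N)` in which `[0, N)` is embedded. -/
def FourierUnif (ε : ℝ) (N : ℕ) (E : Finset ℤ) : Prop :=
  ∀ θ : ℝ, ‖expSum E θ - ((E.card / N : ℝ) : ℂ) * expSum (Finset.Ico 0 (N : ℤ)) θ‖ ≤ ε * (2 * N)

/-- A configuration `A ⊆ E₁ × E₂ ⊆ [0, N) ^ 2` without corners of nonzero, possibly negative,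
difference. -/
structure CornerConf (N : ℕ) (E₁ E₂ : Finset ℤ) (A : Finset (ℤ × ℤ)) : Prop where
  sub₁ : E₁ ⊆ Finset.Ico 0 (N : ℤ)
  sub₂ : E₂ ⊆ Finset.Ico 0 (N : ℤ)
  subA : A ⊆ E₁ ×ˢ E₂
  cornerFree : ∀ x y d : ℤ, d ≠ 0 → (x, y) ∈ A → (x + d, y) ∈ A → (x, y + d) ∈ A → False

lemma cast_injOn (N : ℕ) :
    Set.InjOn (fun x : ℤ => (x : ZMod (2 * N))) (Finset.Ico 0 (N : ℤ)) := by
  intro x hx y hy hxy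
  simp only [Finset.coe_Ico, Set.mem_Ico] at hx hy
  have h := (ZMod.intCast_eq_intCast_iff_dvd_sub x y (2 * N)).mp hxy
  have := Int.eq_zero_of_abs_lt_dvd h (by push_cast; rw [abs_lt]; constructor <;> linarith)
  linarith

/-- Fourier uniformity on `[0, N)` gives bilinear uniformity of the image in `ZMod (2 * N)`, as the
characters of that group are the frequencies `k / (2 N)`. -/
lemma bilinUnif_of_fourierUnif {N : ℕ} [NeZero (2 * N)] {ε : ℝ} {E : Finset ℤ}
    (hE : E ⊆ Finset.Ico 0 (N : ℤ)) (hu : FourierUnif ε N E) :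
    BilinUnif (G := ZMod (2 * N)) (ε * (2 * N) ^ 2)
      (fun x => (if x ∈ E.image (fun x : ℤ => (x : ZMod (2 * N))) then (1 : ℝ) else 0) -
        E.card / N *
        (if x ∈ (Finset.Ico 0 (N : ℤ)).image (fun x : ℤ => (x : ZMod (2 * N))) then 1 else 0)) := by
  intro F P hF hP
  have key : ∀ (S : Finset ℤ), S ⊆ Finset.Ico 0 (N : ℤ) → ∀ k : ZMod (2 * N),
      ∑ u ∈ S.image (fun x : ℤ => (x : ZMod (2 * N))), (ZMod.stdAddChar (k * u) : ℂ)
        = expSum S ((k.val : ℝ) / ((2 * N : ℕ) : ℝ)) := by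
    intro S hS k
    rw [Finset.sum_image ((cast_injOn N).mono (by exact_mod_cast hS))]
    refine sum_congr rfl fun x _ => ?_
    have : k * (x : ZMod (2 * N)) = (((k.val : ℤ) * x : ℤ) : ZMod (2 * N)) := by
      push_cast; rw [ZMod.natCast_zmod_val]
    rw [this, ZMod.stdAddChar_coe]
    congr 1
    push_cast
    ring
  refine (bilin_fourier (n := 2 * N) (fun x =>
      (if x ∈ E.image (fun x : ℤ => (x : ZMod (2 * N))) then (1 : ℝ) else 0) - E.card / N *
      (if x ∈ (Finset.Ico 0 (N : ℤ)).image (fun x : ℤ => (x : ZMod (2 * N))) then 1 else 0))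
      F P (ε * (2 * N)) hF hP (fun k => ?_)).trans (le_of_eq ?_)
  · have e := hu ((k.val : ℝ) / ((2 * N : ℕ) : ℝ))
    rw [← key E hE, ← key _ (Finset.Subset.refl _)] at e
    refine (le_of_eq ?_).trans e
    congr 1
    push_cast
    simp only [sub_mul, Finset.sum_sub_distrib, mul_assoc, apply_ite Complex.ofReal, ite_mul,
      Complex.ofReal_one, Complex.ofReal_zero, one_mul, zero_mul]
    rw [← Finset.mul_sum, Finset.sum_ite_mem, Finset.sum_ite_mem, Finset.univ_inter,
      Finset.univ_inter]
  · push_cast; ring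

/-- Density increment for integer configurations. In `ZMod (2 * N)` no new corners arise, since
differences of elements of `[0, N)` are determined by their residues modulo `2 N`. -/
lemma conf_increment {N : ℕ} {E₁ E₂ : Finset ℤ} {A : Finset (ℤ × ℤ)} (hc : CornerConf N E₁ E₂ A)
    (α b ε : ℝ) (hu₁ : FourierUnif ε N E₁) (hu₂ : FourierUnif ε N E₂)
    (hα0 : 0 < α) (hb : 0 < b) (hNpos : 0 < N)
    (hα : (A.card : ℝ) = α * (E₁.card * E₂.card)) (hbE : (E₁.card : ℝ) * E₂.card = b * N ^ 2)
    (hN : 4 ≤ α ^ 2 * b * N) (hε : ε ≤ α ^ 10 * b ^ 4 / 2 ^ 17) :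
    ∃ F₁ ⊆ E₁, ∃ F₂ ⊆ E₂,
      (α + α ^ 10 / 2 ^ 14) * (F₁.card * F₂.card) ≤ ((A ∩ F₁ ×ˢ F₂).card : ℝ) ∧
      α ^ 10 / 2 ^ 14 * (E₁.card * E₂.card) ≤ (F₁.card : ℝ) * F₂.card := by
  classical
  have : NeZero (2 * N) := ⟨by omega⟩
  have hN0 : (0 : ℝ) < N := by exact_mod_cast hNpos
  set c : ℤ → ZMod (2 * N) := fun x => (x : ZMod (2 * N)) with hcdef
  have inj := cast_injOn N
  have inj1 : Set.InjOn c E₁ := inj.mono (by exact_mod_cast hc.sub₁)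
  have inj2 : Set.InjOn c E₂ := inj.mono (by exact_mod_cast hc.sub₂)
  have injA : Set.InjOn (Prod.map c c) A := by
    intro p hp q hq h
    have hp' := Finset.mem_product.mp (hc.subA hp)
    have hq' := Finset.mem_product.mp (hc.subA hq)
    simp only [Prod.map, Prod.mk.injEq] at h
    exact Prod.ext (inj1 hp'.1 hq'.1 h.1) (inj2 hp'.2 hq'.2 h.2)
  have cE1 := Finset.card_image_of_injOn inj1
  have cE2 := Finset.card_image_of_injOn inj2
  have cA := Finset.card_image_of_injOn injA
  have hEpos : 0 < (E₁.card : ℝ) * E₂.card := by rw [hbE]; positivity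
  have hE1pos : 0 < (E₁.card : ℝ) := by
    rcases (Nat.cast_nonneg (α := ℝ) E₁.card).eq_or_lt with h | h
    · rw [← h, zero_mul] at hEpos; exact absurd hEpos (lt_irrefl _)
    · exact h
  have hE2pos : 0 < (E₂.card : ℝ) := by
    rcases (Nat.cast_nonneg (α := ℝ) E₂.card).eq_or_lt with h | h
    · rw [← h, mul_zero] at hEpos; exact absurd hEpos (lt_irrefl _)
    · exact h
  have le1 : (E₁.card : ℝ) ≤ N := by
    have := Finset.card_le_card hc.sub₁; simp at this; exact_mod_cast this
  have le2 : (E₂.card : ℝ) ≤ N := by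
    have := Finset.card_le_card hc.sub₂; simp at this; exact_mod_cast this
  have hα1 : α ≤ 1 := by
    have h := Finset.card_le_card hc.subA
    rw [Finset.card_product] at h
    have h' : (A.card : ℝ) ≤ E₁.card * E₂.card := by exact_mod_cast h
    rw [hα] at h'
    by_contra hlt
    push Not at hlt
    nlinarith
  have hbb : (E₁.card / N : ℝ) * (E₂.card / N) = b := by
    rw [div_mul_div_comm, hbE]; field_simp
  obtain ⟨F₁, hF1, F₂, hF2, h1, h2⟩ := group_increment (G := ZMod (2 * N)) (E₁.image c) (E₂.image c)
    ((Finset.Ico 0 (N : ℤ)).image c) (A.image (Prod.map c c)) (by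
      intro p hp
      obtain ⟨q, hq, rfl⟩ := Finset.mem_image.mp hp
      have hq' := Finset.mem_product.mp (hc.subA hq)
      exact Finset.mem_product.mpr ⟨Finset.mem_image_of_mem _ hq'.1,
        Finset.mem_image_of_mem _ hq'.2⟩)
    N (ZMod.card _) α (E₁.card / N) (E₂.card / N) ε hα0 hα1
    ⟨by positivity, (div_le_one hN0).mpr le1⟩ ⟨by positivity, (div_le_one hN0).mpr le2⟩
    (by rw [cE1]; field_simp) (by rw [cE2]; field_simp) (by rw [cA, cE1, cE2, hα])
    (bilinUnif_of_fourierUnif hc.sub₁ hu₁) (bilinUnif_of_fourierUnif hc.sub₂ hu₂)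
    (by rw [hbb]; exact hN) (by rw [hbb]; exact hε) (by
      intro x y z hxy h2 h3
      obtain ⟨p, hp, hpe⟩ := Finset.mem_image.mp hxy
      obtain ⟨q, hq, hqe⟩ := Finset.mem_image.mp h2
      obtain ⟨r, hr, hre⟩ := Finset.mem_image.mp h3
      obtain ⟨p1, p2⟩ := p
      obtain ⟨q1, q2⟩ := q
      obtain ⟨r1, r2⟩ := r
      simp only [Prod.map, Prod.mk.injEq] at hpe hqe hre
      obtain ⟨rfl, rfl⟩ := hpe
      obtain ⟨hq1, hq2⟩ := hqe
      obtain ⟨hr1, hr2⟩ := hre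
      have mp := Finset.mem_product.mp (hc.subA hp)
      have mq := Finset.mem_product.mp (hc.subA hq)
      have mr := Finset.mem_product.mp (hc.subA hr)
      simp only at mp mq mr
      have e1 : q2 = p2 := inj2 mq.2 mp.2 hq2
      have e2 : r1 = p1 := inj1 mr.1 mp.1 hr1
      subst e1 e2
      -- The two differences agree modulo `2 N` and lie in `(-N, N)`, so they are equal.
      have hd : ((q1 - r1 : ℤ) : ZMod (2 * N)) = ((r2 - q2 : ℤ) : ZMod (2 * N)) := by
        push_cast
        simp only [hcdef] at hq1 hr2
        rw [hq1, hr2]; ring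
      have hdvd := (ZMod.intCast_eq_intCast_iff_dvd_sub _ _ (2 * N)).mp hd
      have b1 := Finset.mem_Ico.mp (hc.sub₁ mq.1)
      have b2 := Finset.mem_Ico.mp (hc.sub₁ mp.1)
      have b3 := Finset.mem_Ico.mp (hc.sub₂ mr.2)
      have b4 := Finset.mem_Ico.mp (hc.sub₂ mp.2)
      have hz := Int.eq_zero_of_abs_lt_dvd hdvd
        (by push_cast; rw [abs_lt]; constructor <;> linarith)
      by_cases hd0 : q1 - r1 = 0
      · have : q1 = r1 := by linarith
        rw [this] at hq1
        rw [hq1]; ring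
      · exfalso
        apply hc.cornerFree r1 q2 (q1 - r1) hd0 hp
        · rw [add_sub_cancel]; exact hq
        · have : q2 + (q1 - r1) = r2 := by linarith
          rw [this]; exact hr)
  have im1 : (E₁.filter (fun x => c x ∈ F₁)).image c = F₁ := by
    ext x
    simp only [Finset.mem_image, Finset.mem_filter]
    constructor
    · rintro ⟨a, ⟨_, h⟩, rfl⟩; exact h
    · intro hx
      obtain ⟨a, ha, rfl⟩ := Finset.mem_image.mp (hF1 hx)
      exact ⟨a, ⟨ha, hx⟩, rfl⟩
  have im2 : (E₂.filter (fun x => c x ∈ F₂)).image c = F₂ := by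
    ext x
    simp only [Finset.mem_image, Finset.mem_filter]
    constructor
    · rintro ⟨a, ⟨_, h⟩, rfl⟩; exact h
    · intro hx
      obtain ⟨a, ha, rfl⟩ := Finset.mem_image.mp (hF2 hx)
      exact ⟨a, ⟨ha, hx⟩, rfl⟩
  refine ⟨E₁.filter (fun x => c x ∈ F₁), Finset.filter_subset _ _,
    E₂.filter (fun x => c x ∈ F₂), Finset.filter_subset _ _, ?_, ?_⟩
  · have c1 : F₁.card = (E₁.filter (fun x => c x ∈ F₁)).card := by
      rw [← Finset.card_image_of_injOn (inj1.mono (by exact_mod_cast Finset.filter_subset _ _)), im1]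
    have c2 : F₂.card = (E₂.filter (fun x => c x ∈ F₂)).card := by
      rw [← Finset.card_image_of_injOn (inj2.mono (by exact_mod_cast Finset.filter_subset _ _)), im2]
    rw [← c1, ← c2]
    refine h1.trans ?_
    have hsub : A.image (Prod.map c c) ∩ F₁ ×ˢ F₂ ⊆ (A ∩ E₁.filter (fun x => c x ∈ F₁) ×ˢ
        E₂.filter (fun x => c x ∈ F₂)).image (Prod.map c c) := by
      intro p hp
      obtain ⟨hp1, hp2⟩ := Finset.mem_inter.mp hp
      obtain ⟨q, hq, rfl⟩ := Finset.mem_image.mp hp1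
      have hq' := Finset.mem_product.mp (hc.subA hq)
      have hp3 := Finset.mem_product.mp hp2
      refine Finset.mem_image_of_mem _ (Finset.mem_inter.mpr ⟨hq, Finset.mem_product.mpr ⟨?_, ?_⟩⟩)
      · exact Finset.mem_filter.mpr ⟨hq'.1, hp3.1⟩
      · exact Finset.mem_filter.mpr ⟨hq'.2, hp3.2⟩
    exact_mod_cast (Finset.card_le_card hsub).trans Finset.card_image_le
  · have c1 : F₁.card = (E₁.filter (fun x => c x ∈ F₁)).card := by
      rw [← Finset.card_image_of_injOn (inj1.mono (by exact_mod_cast Finset.filter_subset _ _)), im1]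
    have c2 : F₂.card = (E₂.filter (fun x => c x ∈ F₂)).card := by
      rw [← Finset.card_image_of_injOn (inj2.mono (by exact_mod_cast Finset.filter_subset _ _)), im2]
    rw [← c1, ← c2]
    rw [cE1, cE2] at h2
    exact h2

/-! ### Traces on arithmetic progressions -/

/-- If all translates `E - φ i` lie in `X`, then summing over `X` the traces of `E` on the shifted
patterns `x + φ I` counts every element of `E` exactly `|I|` times. -/
lemma shift_sum {H ι M : Type*} [AddCommGroup H] [DecidableEq H] [AddCommMonoid M]
    (X E : Finset H) (I : Finset ι) (φ : ι → H) (h : ∀ z ∈ E, ∀ i ∈ I, z - φ i ∈ X) (f : H → M) :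
    ∑ x ∈ X, ∑ i ∈ I.filter (fun i => x + φ i ∈ E), f (x + φ i) = I.card • ∑ z ∈ E, f z := by
  simp_rw [Finset.sum_filter]
  rw [Finset.sum_comm, ← Finset.sum_const]
  refine sum_congr rfl fun i hi => ?_
  rw [← Finset.sum_filter]
  refine Finset.sum_bij' (fun x _ => x + φ i) (fun z _ => z - φ i) ?_ ?_ ?_ ?_ ?_
  · intro x hx; exact (Finset.mem_filter.mp hx).2
  · intro z hz
    exact Finset.mem_filter.mpr ⟨h z hz i hi, by simpa using hz⟩
  · intro x _; simp
  · intro z _; simp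
  · intro x _; rfl

/-- The trace of `E` on the progression `x, x + q, …, x + (L - 1) q`, rescaled to a subset of
`[0, L)`. -/
noncomputable def apTrace (E : Finset ℤ) (q L : ℕ) (x : ℤ) : Finset ℤ :=
  (Finset.Ico 0 (L : ℤ)).filter (fun i => x + q * i ∈ E)

/-- The starting points `x ∈ [-q L, N)` cover each element of `E` exactly `L` times. -/
lemma apTrace_sum {M : Type*} [AddCommMonoid M] {N q L : ℕ} {E : Finset ℤ}
    (hE : E ⊆ Finset.Ico 0 (N : ℤ)) (f : ℤ → M) :
    ∑ x ∈ Finset.Ico (-(q * L : ℤ)) N, ∑ i ∈ apTrace E q L x, f (x + q * i) =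
      L • ∑ z ∈ E, f z := by
  have := shift_sum (Finset.Ico (-(q * L : ℤ)) N) E (Finset.Ico 0 (L : ℤ)) (fun i => q * i)
    (by
      intro z hz i hi
      have hz := Finset.mem_Ico.mp (hE hz)
      have hi := Finset.mem_Ico.mp hi
      refine Finset.mem_Ico.mpr ⟨?_, ?_⟩
      · nlinarith [mul_le_mul_of_nonneg_left hi.2.le (Nat.cast_nonneg (α := ℤ) q)]
      · nlinarith [mul_nonneg (Nat.cast_nonneg (α := ℤ) q) hi.1]) f
  simpa [apTrace] using this

lemma apTrace_card_sum {N q L : ℕ} {E : Finset ℤ} (hE : E ⊆ Finset.Ico 0 (N : ℤ)) :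
    ∑ x ∈ Finset.Ico (-(q * L : ℤ)) N, ((apTrace E q L x).card : ℝ) = L * E.card := by
  have := apTrace_sum (q := q) (L := L) hE (fun _ => (1 : ℝ))
  simpa using this

lemma apTrace_card_le (E : Finset ℤ) (q L : ℕ) (x : ℤ) : ((apTrace E q L x).card : ℝ) ≤ L := by
  have := Finset.card_filter_le (Finset.Ico 0 (L : ℤ)) (fun i => x + q * i ∈ E)
  simp only [Int.card_Ico, sub_zero, Int.toNat_natCast] at this
  exact_mod_cast this

lemma card_le_of_sub {N : ℕ} {E : Finset ℤ} (hE : E ⊆ Finset.Ico 0 (N : ℤ)) :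
    (E.card : ℝ) ≤ N := by
  have := Finset.card_le_card hE
  simp at this
  exact_mod_cast this

/-- The number of starting points of progressions. -/
lemma ap_width (N q L : ℕ) : ((Finset.Ico (-(q * L : ℤ)) N).card : ℝ) = N + q * L := by
  rw [Int.card_Ico]
  have : ((N : ℤ) - -(q * L : ℤ)).toNat = N + q * L := by
    have : (N : ℤ) - -(q * L : ℤ) = ((N + q * L : ℕ) : ℤ) := by push_cast; ring
    rw [this, Int.toNat_natCast]
  rw [this]; push_cast; ring

/-- The energy of the traces is bounded below by the energy of a set evenly spread over `[0, N)`,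
up to boundary effects, plus the variance of the trace of `E` around the scaled trace of `[0, N)`. -/
lemma ap_energy {N q L : ℕ} (hN : 0 < N) {E : Finset ℤ} (hE : E ⊆ Finset.Ico 0 (N : ℤ)) :
    (L : ℝ) ^ 2 * ((E.card / N : ℝ) ^ 2 * N - 2 * (q * L)) +
      ∑ x ∈ Finset.Ico (-(q * L : ℤ)) N, (((apTrace E q L x).card : ℝ) -
        E.card / N * (apTrace (Finset.Ico 0 (N : ℤ)) q L x).card) ^ 2 ≤
    ∑ x ∈ Finset.Ico (-(q * L : ℤ)) N, ((apTrace E q L x).card : ℝ) ^ 2 := by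
  have hN0 : (0 : ℝ) < N := by exact_mod_cast hN
  set X := Finset.Ico (-(q * L : ℤ)) N with hX
  set u : ℤ → ℝ := fun x => ((apTrace E q L x).card : ℝ) with hu
  set v : ℤ → ℝ := fun x => ((apTrace (Finset.Ico 0 (N : ℤ)) q L x).card : ℝ) with hv
  set b : ℝ := E.card / N with hb
  have hb0 : 0 ≤ b := by positivity
  have hb1 : b ≤ 1 := (div_le_one hN0).mpr (card_le_of_sub hE)
  have hbN : (E.card : ℝ) = b * N := by rw [hb]; field_simp
  have su : ∑ x ∈ X, u x = L * (b * N) := by rw [← hbN]; exact apTrace_card_sum hE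
  have sv : ∑ x ∈ X, v x = L * N := by
    have := apTrace_card_sum (q := q) (L := L) (Finset.Subset.refl (Finset.Ico 0 (N : ℤ)))
    simpa using this
  -- Expand `u ^ 2` around `b v` and replace `v` by `L` with nonnegative loss; only starting points
  -- near the ends of `[0, N)` have `v < L`.
  have pt : ∀ x ∈ X, (u x - b * v x) ^ 2 + 2 * b * L * u x - 2 * b * (L * (L - v x))
      - b ^ 2 * (L * v x) ≤ u x ^ 2 := by
    intro x _
    have u0 : 0 ≤ u x := Nat.cast_nonneg _
    have u1 : u x ≤ L := apTrace_card_le _ _ _ _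
    have v0 : 0 ≤ v x := Nat.cast_nonneg _
    have v1 : v x ≤ L := apTrace_card_le _ _ _ _
    have h1 : 0 ≤ b * ((L - u x) * (L - v x)) :=
      mul_nonneg hb0 (mul_nonneg (sub_nonneg.mpr u1) (sub_nonneg.mpr v1))
    have h2 : 0 ≤ b ^ 2 * (v x * (L - v x)) :=
      mul_nonneg (sq_nonneg b) (mul_nonneg v0 (sub_nonneg.mpr v1))
    nlinarith
  have hs := Finset.sum_le_sum pt
  simp only [Finset.sum_sub_distrib, Finset.sum_add_distrib, ← Finset.mul_sum, Finset.sum_const,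
    nsmul_eq_mul] at hs
  rw [su, sv, ap_width] at hs
  have : b * ((L : ℝ) ^ 2 * (q * L)) ≤ (L : ℝ) ^ 2 * (q * L) :=
    mul_le_of_le_one_left (by positivity) hb1
  nlinarith

/-- If `‖q θ‖ ≤ 1 / (L ^ 2 + 1)`, then `e(θ ·)` varies by at most `2 π / L` on a progression of
difference `q` and length `L`. -/
lemma char_close {θ : ℝ} {q L : ℕ} (hL : 0 < L) (p : ℤ) (hp : |q * θ - p| ≤ 1 / ((L ^ 2 : ℕ) + 1 : ℝ))
    (x i : ℤ) (hi : i ∈ Finset.Ico 0 (L : ℤ)) :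
    ‖Complex.exp (2 * Real.pi * Complex.I * (θ * (x + q * i : ℤ) : ℝ)) -
      Complex.exp (2 * Real.pi * Complex.I * (θ * x : ℝ))‖ ≤ 2 * Real.pi / L := by
  have hi := Finset.mem_Ico.mp hi
  have hL0 : (0 : ℝ) < L := by exact_mod_cast hL
  have e1 : Complex.exp (2 * Real.pi * Complex.I * (θ * (x + q * i : ℤ) : ℝ)) =
      Complex.exp (2 * Real.pi * Complex.I * (θ * x : ℝ)) *
        Complex.exp (Complex.I * (2 * Real.pi * ((q * θ - p) * i) : ℝ)) := by
    have : Complex.exp (((p * i : ℤ) : ℂ) * (2 * Real.pi * Complex.I)) = 1 :=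
      Complex.exp_int_mul_two_pi_mul_I _
    rw [← Complex.exp_add, ← mul_one (Complex.exp (_ + _)), ← this, ← Complex.exp_add]
    congr 1
    push_cast
    ring
  have e2 : ‖Complex.exp (2 * Real.pi * Complex.I * (θ * x : ℝ))‖ = 1 := by
    have : (2 * Real.pi * Complex.I * (θ * x : ℝ) : ℂ) = ((2 * Real.pi * (θ * x) : ℝ) : ℂ) *
        Complex.I := by push_cast; ring
    rw [this, Complex.norm_exp_ofReal_mul_I]
  rw [e1, ← mul_sub_one, norm_mul, e2, one_mul]
  refine Real.norm_exp_I_mul_ofReal_sub_one_le.trans ?_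
  rw [Real.norm_eq_abs, abs_mul, abs_of_pos Real.two_pi_pos, div_eq_mul_inv]
  refine mul_le_mul_of_nonneg_left ?_ Real.two_pi_pos.le
  have hi0 : (0 : ℝ) ≤ i := by exact_mod_cast hi.1
  have hi1 : (i : ℝ) ≤ L := by exact_mod_cast hi.2.le
  rw [abs_mul, abs_of_nonneg hi0]
  calc |q * θ - p| * i ≤ 1 / ((L ^ 2 : ℕ) + 1 : ℝ) * L :=
        mul_le_mul hp hi1 hi0 (by positivity)
    _ ≤ (L : ℝ)⁻¹ := by
        rw [div_mul_eq_mul_div, one_mul, inv_eq_one_div, div_le_div_iff₀ (by positivity) hL0]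
        push_cast
        nlinarith

/-- An exponential sum is almost determined by the cardinalities of the traces on progressions
along which the character is nearly constant. -/
lemma expSum_ap {θ : ℝ} {N q L : ℕ} (hL : 0 < L) (p : ℤ)
    (hp : |q * θ - p| ≤ 1 / ((L ^ 2 : ℕ) + 1 : ℝ)) {E : Finset ℤ}
    (hE : E ⊆ Finset.Ico 0 (N : ℤ)) :
    ‖(L : ℂ) * expSum E θ - ∑ x ∈ Finset.Ico (-(q * L : ℤ)) N,
      ((apTrace E q L x).card : ℂ) * Complex.exp (2 * Real.pi * Complex.I * (θ * x : ℝ))‖ ≤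
      2 * Real.pi * E.card := by
  have hL0 : (0 : ℝ) < L := by exact_mod_cast hL
  have h := apTrace_sum (q := q) (L := L) hE
    (fun z => Complex.exp (2 * Real.pi * Complex.I * (θ * z : ℝ)))
  rw [nsmul_eq_mul] at h
  rw [expSum, ← h, ← Finset.sum_sub_distrib]
  calc _ ≤ ∑ x ∈ Finset.Ico (-(q * L : ℤ)) N, ((apTrace E q L x).card : ℝ) *
        (2 * Real.pi / L) := by
        refine norm_sum_le_of_le _ fun x _ => ?_
        rw [← nsmul_eq_mul, ← nsmul_eq_mul, ← Finset.sum_const, ← Finset.sum_const,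
          ← Finset.sum_sub_distrib]
        exact norm_sum_le_of_le _ fun i hi =>
          char_close hL p hp x i (Finset.filter_subset _ _ hi)
    _ = 2 * Real.pi * E.card := by
        rw [← Finset.sum_mul, apTrace_card_sum hE]; field_simp

/-- If `E` is not Fourier uniform, then for some `q ≤ L ^ 2` its traces on progressions of
difference `q` have large variance around the scaled traces of `[0, N)`. -/
lemma exists_ap_of_not_unif {N L : ℕ} {ε : ℝ} (hε : 0 < ε) (hN : 0 < N) (hL : 13 ≤ ε * L)
    (hLN : L ^ 3 ≤ N) {E : Finset ℤ} (hE : E ⊆ Finset.Ico 0 (N : ℤ)) (hu : ¬ FourierUnif ε N E) :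
    ∃ q : ℕ, 0 < q ∧ q ≤ L ^ 2 ∧ ε ^ 2 * N * L ^ 2 / 2 ≤
      ∑ x ∈ Finset.Ico (-(q * L : ℤ)) N, (((apTrace E q L x).card : ℝ) -
        E.card / N * (apTrace (Finset.Ico 0 (N : ℤ)) q L x).card) ^ 2 := by
  have hN0 : (0 : ℝ) < N := by exact_mod_cast hN
  have hL0 : 0 < L := by
    rcases Nat.eq_zero_or_pos L with h | h
    · subst h; norm_num at hL
    · exact h
  have hL0' : (0 : ℝ) < L := by exact_mod_cast hL0
  simp only [FourierUnif, not_forall, not_le] at hu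
  obtain ⟨θ, hθ⟩ := hu
  obtain ⟨q, hq0, hq1, hq⟩ := Real.exists_nat_abs_mul_sub_round_le θ (n := L ^ 2) (by positivity)
  refine ⟨q, hq0, hq1, ?_⟩
  set b : ℝ := E.card / N with hb
  have hb0 : 0 ≤ b := by positivity
  have hbN : (E.card : ℝ) = b * N := by rw [hb]; field_simp
  have hb1 : b ≤ 1 := (div_le_one hN0).mpr (card_le_of_sub hE)
  have a1 := expSum_ap hL0 _ hq hE
  have a2 := expSum_ap hL0 _ hq (Finset.Subset.refl (Finset.Ico 0 (N : ℤ)))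
  set X := Finset.Ico (-(q * L : ℤ)) N with hX
  set w : ℤ → ℝ := fun x => ((apTrace E q L x).card : ℝ) -
        b * (apTrace (Finset.Ico 0 (N : ℤ)) q L x).card with hw
  set S1 := ∑ x ∈ X, ((apTrace E q L x).card : ℂ) *
    Complex.exp (2 * Real.pi * Complex.I * (θ * x : ℝ)) with hS1
  set S2 := ∑ x ∈ X, ((apTrace (Finset.Ico 0 (N : ℤ)) q L x).card : ℂ) *
    Complex.exp (2 * Real.pi * Complex.I * (θ * x : ℝ)) with hS2
  set T1 := expSum E θ
  set T2 := expSum (Finset.Ico 0 (N : ℤ)) θ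
  have a3 : ‖S1 - b * S2‖ ≤ ∑ x ∈ X, |w x| := by
    rw [hS1, hS2, Finset.mul_sum, ← Finset.sum_sub_distrib]
    refine norm_sum_le_of_le _ fun x _ => ?_
    have e2 : ‖Complex.exp (2 * Real.pi * Complex.I * (θ * x : ℝ))‖ = 1 := by
      have : (2 * Real.pi * Complex.I * (θ * x : ℝ) : ℂ) = ((2 * Real.pi * (θ * x) : ℝ) : ℂ) *
          Complex.I := by push_cast; ring
      rw [this, Complex.norm_exp_ofReal_mul_I]
    rw [← mul_assoc, ← sub_mul, norm_mul, e2, mul_one]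
    refine le_of_eq ?_
    rw [← Real.norm_eq_abs, ← Complex.norm_real, hw]
    push_cast
    rfl
  have a4 : L * (ε * (2 * N)) ≤ ∑ x ∈ X, |w x| + 4 * Real.pi * N := by
    have e : (L : ℂ) * (T1 - b * T2) = (L * T1 - S1) - b * (L * T2 - S2) + (S1 - b * S2) := by ring
    have e' : L * ‖T1 - b * T2‖ = ‖(L : ℂ) * (T1 - b * T2)‖ := by
      rw [norm_mul, Complex.norm_natCast]
    have n1 := norm_add_le ((L * T1 - S1) - b * (L * T2 - S2)) (S1 - b * S2)
    have n2 := norm_sub_le (L * T1 - S1) (b * (L * T2 - S2))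
    have n3 : ‖(b : ℂ) * (L * T2 - S2)‖ ≤ 2 * Real.pi * N := by
      rw [norm_mul, Complex.norm_real, Real.norm_eq_abs, abs_of_nonneg hb0]
      refine (mul_le_of_le_one_left (norm_nonneg _) hb1).trans (a2.trans (le_of_eq ?_))
      simp
    have n4 : 2 * Real.pi * E.card ≤ 2 * Real.pi * N :=
      mul_le_mul_of_nonneg_left (card_le_of_sub hE) Real.two_pi_pos.le
    have n5 := mul_le_mul_of_nonneg_left hθ.le hL0'.le
    rw [e', e] at n5
    linarith
  -- `4 π < 13`, so the approximation error is at most half of `2 ε L N`.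
  have a5 : ε * L * N ≤ ∑ x ∈ X, |w x| := by
    have : 4 * Real.pi ≤ ε * L := by linarith [Real.pi_lt_d2]
    nlinarith
  have a6 : (∑ x ∈ X, |w x|) ^ 2 ≤ (N + q * L) * ∑ x ∈ X, w x ^ 2 := by
    have := sq_sum_le_card_mul_sum_sq (s := X) (f := fun x => |w x|)
    simp only [sq_abs] at this
    rw [ap_width] at this
    exact this
  have a7 : (N + q * L : ℝ) ≤ 2 * N := by
    have : q * L ≤ N := by
      calc q * L ≤ L ^ 2 * L := Nat.mul_le_mul_right _ hq1
        _ = L ^ 3 := by ring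
        _ ≤ N := hLN
    have : (q * L : ℝ) ≤ N := by exact_mod_cast this
    linarith
  have a8 : (ε * L * N) ^ 2 ≤ (∑ x ∈ X, |w x|) ^ 2 := pow_le_pow_left₀ (by positivity) a5 2
  have a9 : (N + q * L) * ∑ x ∈ X, w x ^ 2 ≤ 2 * N * ∑ x ∈ X, w x ^ 2 :=
    mul_le_mul_of_nonneg_right a7 (Finset.sum_nonneg fun _ _ => sq_nonneg _)
  have : N * (ε ^ 2 * N * L ^ 2 / 2) ≤ N * ∑ x ∈ X, w x ^ 2 := by nlinarith
  exact le_of_mul_le_mul_left this hN0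

/-! ### The potential and its increase -/

/-- The potential of a configuration. The first two terms measure the excess of `A` over density `γ`
on `E₁ × E₂`; the last is the energy that increases under refinement of a non-uniform set. -/
noncomputable def pot (γ κ : ℝ) (N : ℕ) (E₁ E₂ : Finset ℤ) (A : Finset (ℤ × ℤ)) : ℝ :=
  A.card / (N : ℝ) ^ 2 - γ * (E₁.card * E₂.card / (N : ℝ) ^ 2) +
    κ * ((E₁.card / N : ℝ) ^ 2 + (E₂.card / N : ℝ) ^ 2)

/-- The trace of `A` on the product of two progressions of difference `q` and length `L`, starting
at the two coordinates of `x`, rescaled to a subset of `[0, L) ^ 2`. -/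
noncomputable def apTrace₂ (A : Finset (ℤ × ℤ)) (q L : ℕ) (x : ℤ × ℤ) : Finset (ℤ × ℤ) :=
  (Finset.Ico 0 (L : ℤ) ×ˢ Finset.Ico 0 (L : ℤ)).filter (fun i => x + (q * i.1, q * i.2) ∈ A)

lemma apTrace₂_card_sum {N q L : ℕ} {A : Finset (ℤ × ℤ)}
    (hA : A ⊆ Finset.Ico 0 (N : ℤ) ×ˢ Finset.Ico 0 (N : ℤ)) :
    ∑ x ∈ Finset.Ico (-(q * L : ℤ)) N, ∑ y ∈ Finset.Ico (-(q * L : ℤ)) N,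
      ((apTrace₂ A q L (x, y)).card : ℝ) = L ^ 2 * A.card := by
  have := shift_sum (Finset.Ico (-(q * L : ℤ)) N ×ˢ Finset.Ico (-(q * L : ℤ)) N) A
    (Finset.Ico 0 (L : ℤ) ×ˢ Finset.Ico 0 (L : ℤ)) (fun i => ((q * i.1 : ℤ), (q * i.2 : ℤ)))
    (by
      intro z hz i hi
      obtain ⟨hz1, hz2⟩ := Finset.mem_product.mp (hA hz)
      obtain ⟨hi1, hi2⟩ := Finset.mem_product.mp hi
      have hz1 := Finset.mem_Ico.mp hz1
      have hz2 := Finset.mem_Ico.mp hz2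
      have hi1 := Finset.mem_Ico.mp hi1
      have hi2 := Finset.mem_Ico.mp hi2
      have hq := Nat.cast_nonneg (α := ℤ) q
      refine Finset.mem_product.mpr ⟨Finset.mem_Ico.mpr ⟨?_, ?_⟩, Finset.mem_Ico.mpr ⟨?_, ?_⟩⟩
      · have := mul_le_mul_of_nonneg_left hi1.2.le hq
        simp only [Prod.fst_sub]; linarith
      · have := mul_nonneg hq hi1.1
        simp only [Prod.fst_sub]; linarith
      · have := mul_le_mul_of_nonneg_left hi2.2.le hq
        simp only [Prod.snd_sub]; linarith
      · have := mul_nonneg hq hi2.1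
        simp only [Prod.snd_sub]; linarith) (fun _ => (1 : ℝ))
  rw [← Finset.sum_product']
  simp only [Finset.sum_const, nsmul_eq_mul, mul_one, Finset.card_product, Int.card_Ico, sub_zero,
    Int.toNat_natCast] at this
  rw [pow_two]
  exact_mod_cast this

lemma CornerConf.subA' {N : ℕ} {E₁ E₂ : Finset ℤ} {A : Finset (ℤ × ℤ)} (hc : CornerConf N E₁ E₂ A) :
    A ⊆ Finset.Ico 0 (N : ℤ) ×ˢ Finset.Ico 0 (N : ℤ) :=
  hc.subA.trans (Finset.product_subset_product hc.sub₁ hc.sub₂)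

/-- Since both progressions have the same difference, corners in a trace come from corners in `A`. -/
lemma CornerConf.trace {N : ℕ} {E₁ E₂ : Finset ℤ} {A : Finset (ℤ × ℤ)} (hc : CornerConf N E₁ E₂ A)
    {q : ℕ} (hq : 0 < q) (L : ℕ) (x y : ℤ) :
    CornerConf L (apTrace E₁ q L x) (apTrace E₂ q L y) (apTrace₂ A q L (x, y)) where
  sub₁ := Finset.filter_subset _ _
  sub₂ := Finset.filter_subset _ _
  subA := by
    intro i hi
    obtain ⟨h1, h2⟩ := Finset.mem_filter.mp hi
    obtain ⟨h3, h4⟩ := Finset.mem_product.mp h1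
    obtain ⟨h5, h6⟩ := Finset.mem_product.mp (hc.subA h2)
    exact Finset.mem_product.mpr ⟨Finset.mem_filter.mpr ⟨h3, h5⟩, Finset.mem_filter.mpr ⟨h4, h6⟩⟩
  cornerFree := by
    intro i j d hd h1 h2 h3
    have h1 := (Finset.mem_filter.mp h1).2
    have h2 := (Finset.mem_filter.mp h2).2
    have h3 := (Finset.mem_filter.mp h3).2
    simp only [Prod.mk_add_mk] at h1 h2 h3
    refine hc.cornerFree (x + q * i) (y + q * j) (q * d) ?_ h1 ?_ ?_
    · exact mul_ne_zero (by exact_mod_cast hq.ne') hd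
    · rw [show x + q * i + q * d = x + q * (i + d) by ring]; exact h2
    · rw [show y + q * j + q * d = y + q * (j + d) by ring]; exact h3

lemma energy_mono {N L q : ℕ} (hN : 0 < N) {E : Finset ℤ}
    (hE : E ⊆ Finset.Ico 0 (N : ℤ)) :
    (L : ℝ) ^ 2 * ((E.card / N : ℝ) ^ 2 * N - 2 * (q * L)) ≤
      ∑ x ∈ Finset.Ico (-(q * L : ℤ)) N, ((apTrace E q L x).card : ℝ) ^ 2 := by
  refine le_trans ?_ (ap_energy (q := q) (L := L) hN hE)
  exact le_add_of_nonneg_right (Finset.sum_nonneg fun _ _ => sq_nonneg _)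

/-- If one of the two sets is not uniform, some difference `q ≤ L ^ 2` makes the total energy of the
traces exceed its trivial lower bound by `ε ^ 2 N L ^ 2 / 2`. -/
lemma exists_energy_gain {N L : ℕ} {ε : ℝ} (hε : 0 < ε) (hN : 0 < N) (hL : 13 ≤ ε * L)
    (hLN : L ^ 3 ≤ N) {E₁ E₂ : Finset ℤ} (hE₁ : E₁ ⊆ Finset.Ico 0 (N : ℤ))
    (hE₂ : E₂ ⊆ Finset.Ico 0 (N : ℤ)) (hu : ¬ (FourierUnif ε N E₁ ∧ FourierUnif ε N E₂)) :
    ∃ q : ℕ, 0 < q ∧ q ≤ L ^ 2 ∧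
      (L : ℝ) ^ 2 * (((E₁.card / N : ℝ) ^ 2 + (E₂.card / N : ℝ) ^ 2) * N - 4 * (q * L) +
        ε ^ 2 * N / 2) ≤
      ∑ x ∈ Finset.Ico (-(q * L : ℤ)) N, ((apTrace E₁ q L x).card : ℝ) ^ 2 +
      ∑ x ∈ Finset.Ico (-(q * L : ℤ)) N, ((apTrace E₂ q L x).card : ℝ) ^ 2 := by
  rw [not_and_or] at hu
  rcases hu with hu | hu
  · obtain ⟨q, h0, h1, h2⟩ := exists_ap_of_not_unif hε hN hL hLN hE₁ hu
    have e1 := ap_energy (q := q) (L := L) hN hE₁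
    have e2 := energy_mono (q := q) (L := L) hN hE₂
    exact ⟨q, h0, h1, by linarith⟩
  · obtain ⟨q, h0, h1, h2⟩ := exists_ap_of_not_unif hε hN hL hLN hE₂ hu
    have e1 := ap_energy (q := q) (L := L) hN hE₂
    have e2 := energy_mono (q := q) (L := L) hN hE₁
    exact ⟨q, h0, h1, by linarith⟩

lemma pot_le {γ κ : ℝ} (hγ : 0 ≤ γ) (hκ : κ ≤ 1) {N : ℕ} (hN : 0 < N) {E₁ E₂ : Finset ℤ}
    {A : Finset (ℤ × ℤ)} (hc : CornerConf N E₁ E₂ A) : pot γ κ N E₁ E₂ A ≤ 3 := by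
  have hN0 : (0 : ℝ) < N := by exact_mod_cast hN
  have h1 : (E₁.card / N : ℝ) ≤ 1 := (div_le_one hN0).mpr (card_le_of_sub hc.sub₁)
  have h2 : (E₂.card / N : ℝ) ≤ 1 := (div_le_one hN0).mpr (card_le_of_sub hc.sub₂)
  have h3 : A.card / (N : ℝ) ^ 2 ≤ 1 := by
    rw [div_le_one (by positivity)]
    have := Finset.card_le_card hc.subA'
    simp only [Finset.card_product, Int.card_Ico, sub_zero, Int.toNat_natCast] at this
    rw [pow_two]; exact_mod_cast this
  have h4 : (E₁.card / N : ℝ) ^ 2 ≤ 1 := pow_le_one₀ (by positivity) h1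
  have h5 : (E₂.card / N : ℝ) ^ 2 ≤ 1 := pow_le_one₀ (by positivity) h2
  have h6 : 0 ≤ γ * (E₁.card * E₂.card / (N : ℝ) ^ 2) := by positivity
  have h7 : κ * ((E₁.card / N : ℝ) ^ 2 + (E₂.card / N : ℝ) ^ 2) ≤ 1 * 2 :=
    mul_le_mul hκ (by linarith) (by positivity) (by norm_num)
  unfold pot
  linarith

lemma sum_potential {ι : Type*} (X : Finset ι) (γ κ : ℝ) (a : ι → ι → ℝ) (u v : ι → ℝ) :
    ∑ x ∈ X, ∑ y ∈ X, (a x y - γ * (u x * v y) + κ * (u x ^ 2 + v y ^ 2)) =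
      ∑ x ∈ X, ∑ y ∈ X, a x y - γ * ((∑ x ∈ X, u x) * ∑ y ∈ X, v y) +
        κ * (X.card * ∑ x ∈ X, u x ^ 2 + X.card * ∑ y ∈ X, v y ^ 2) := by
  rw [Finset.sum_mul_sum]
  simp only [Finset.sum_add_distrib, Finset.sum_sub_distrib, ← Finset.mul_sum,
    Finset.sum_const, nsmul_eq_mul]

/-- The numerical contradiction behind `refine_step`, where `s = q L` is the length of the boundary
and `Φ` the potential: the losses at the boundary are smaller than the gain in energy. -/
lemma refine_numeric {κ ε Φ N s : ℝ} (hκ0 : 0 < κ) (hκ : κ ≤ 1) (hε : 0 < ε) (hε1 : ε ≤ 1)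
    (hN0 : 0 < N) (hs0 : 0 ≤ s) (hr : s * 64 ≤ κ * ε ^ 2 * N) (hpot : 0 ≤ Φ) (hΦ3 : Φ ≤ 3)
    (h2 : N ^ 2 * Φ + κ * (N * (ε ^ 2 * N / 2 - 4 * s)) ≤
      (N + s) ^ 2 * (Φ + κ * ε ^ 2 / 8)) : False := by
  have hκε : κ * ε ^ 2 ≤ 1 := by
    have : ε ^ 2 ≤ 1 := pow_le_one₀ hε.le hε1
    nlinarith
  set τ := κ * ε ^ 2 / 8 with hτ
  have hτ0 : 0 < τ := by positivity
  have hτ1 : τ ≤ 1 := by rw [hτ]; linarith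
  have hW2 : (N + s) ^ 2 ≤ N ^ 2 + 3 * (N * s) := by
    have : s ≤ N := by nlinarith
    nlinarith
  have h3 : (N + s) ^ 2 * (Φ + τ) ≤ (N ^ 2 + 3 * (N * s)) * (Φ + τ) :=
    mul_le_mul_of_nonneg_right hW2 (by linarith)
  have h4 : 3 * (N * s) * (Φ + τ) ≤ 3 * (N * s) * 4 :=
    mul_le_mul_of_nonneg_left (by linarith) (by positivity)
  have h5 : κ * (N * (4 * s)) ≤ N * (4 * s) := mul_le_of_le_one_left (by positivity) hκ
  have h6 : N * (s * 64) ≤ N * (κ * ε ^ 2 * N) := by gcongr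
  have h7 : 0 < κ * ε ^ 2 * N ^ 2 := by positivity
  have h8 : (N : ℝ) ^ 2 * τ = κ * ε ^ 2 * N ^ 2 / 8 := by rw [hτ]; ring
  nlinarith only [h2, h3, h4, h5, h6, h7, h8]

set_option maxHeartbeats 400000 in
/-- A configuration that is not uniform has a trace on a product of progressions of length `L`
whose potential is larger by `κ ε ^ 2 / 8`, by averaging the potential over all starting points. -/
lemma refine_step {γ κ ε : ℝ} (hγ : 0 ≤ γ) (hκ0 : 0 < κ) (hκ : κ ≤ 1) (hε : 0 < ε) (hε1 : ε ≤ 1)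
    {N L : ℕ} (hL : 64 ≤ κ * ε ^ 2 * L) (hLN : L ^ 4 ≤ N)
    {E₁ E₂ : Finset ℤ} {A : Finset (ℤ × ℤ)} (hc : CornerConf N E₁ E₂ A)
    (hu : ¬ (FourierUnif ε N E₁ ∧ FourierUnif ε N E₂)) (hpot : 0 ≤ pot γ κ N E₁ E₂ A) :
    ∃ E₁' E₂' A', CornerConf L E₁' E₂' A' ∧
      pot γ κ N E₁ E₂ A + κ * ε ^ 2 / 8 ≤ pot γ κ L E₁' E₂' A' := by
  have hL0 : 0 < L := by
    rcases Nat.eq_zero_or_pos L with h | h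
    · subst h; norm_num at hL
    · exact h
  have hL0' : (0 : ℝ) < L := by exact_mod_cast hL0
  have hN : 0 < N := lt_of_lt_of_le (by positivity) hLN
  have hN0 : (0 : ℝ) < N := by exact_mod_cast hN
  have hεL : 64 ≤ ε * L := by
    have h1 : κ * ε ^ 2 * L ≤ 1 * (ε * L) := by
      rw [mul_assoc]
      refine mul_le_mul hκ ?_ (by positivity) (by norm_num)
      refine mul_le_mul_of_nonneg_right ?_ hL0'.le
      nlinarith
    linarith
  have hL3 : L ^ 3 ≤ N := le_trans (Nat.pow_le_pow_right hL0 (by norm_num)) hLN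
  obtain ⟨q, hq0, hq1, hq⟩ :=
    exists_energy_gain hε hN (by linarith) hL3 hc.sub₁ hc.sub₂ hu
  by_contra! hcon
  set X := Finset.Ico (-(q * L : ℤ)) N with hX
  set U₁ := ∑ x ∈ X, ((apTrace E₁ q L x).card : ℝ) ^ 2 with hU1
  set U₂ := ∑ x ∈ X, ((apTrace E₂ q L x).card : ℝ) ^ 2 with hU2
  set Φ := pot γ κ N E₁ E₂ A with hΦ
  set τ := κ * ε ^ 2 / 8 with hτ
  set W : ℝ := N + q * L with hW
  have hXW : (X.card : ℝ) = W := ap_width _ _ _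
  have lower : ∑ x ∈ X, ∑ y ∈ X,
      (L : ℝ) ^ 2 * pot γ κ L (apTrace E₁ q L x) (apTrace E₂ q L y) (apTrace₂ A q L (x, y)) ≤
      W ^ 2 * (L ^ 2 * (Φ + τ)) := by
    calc _ ≤ ∑ x ∈ X, ∑ y ∈ X, (L : ℝ) ^ 2 * (Φ + τ) :=
          Finset.sum_le_sum fun x _ => Finset.sum_le_sum fun y _ =>
            mul_le_mul_of_nonneg_left (hcon _ _ _ (hc.trace hq0 L x y)).le (by positivity)
      _ = _ := by
          simp only [Finset.sum_const, nsmul_eq_mul, hXW]; ring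
  have expand : ∑ x ∈ X, ∑ y ∈ X,
      (L : ℝ) ^ 2 * pot γ κ L (apTrace E₁ q L x) (apTrace E₂ q L y) (apTrace₂ A q L (x, y)) =
      L ^ 2 * A.card - γ * ((L * E₁.card) * (L * E₂.card)) + κ * (W * U₁ + W * U₂) := by
    have e : ∀ x y, (L : ℝ) ^ 2 * pot γ κ L (apTrace E₁ q L x) (apTrace E₂ q L y)
        (apTrace₂ A q L (x, y)) = ((apTrace₂ A q L (x, y)).card : ℝ) -
        γ * (((apTrace E₁ q L x).card : ℝ) * (apTrace E₂ q L y).card) +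
        κ * (((apTrace E₁ q L x).card : ℝ) ^ 2 + ((apTrace E₂ q L y).card : ℝ) ^ 2) := by
      intro x y
      unfold pot
      field_simp
    rw [Finset.sum_congr rfl fun x _ => Finset.sum_congr rfl fun y _ => e x y,
      sum_potential, hXW, ← apTrace₂_card_sum hc.subA', ← apTrace_card_sum (q := q) hc.sub₁,
      ← apTrace_card_sum (q := q) hc.sub₂]
  rw [expand] at lower
  -- As `q ≤ L ^ 2` and `L ^ 4 ≤ N`, the boundary length `q L` is at most `N / L`.
  have hr : (q * L : ℝ) * 64 ≤ κ * ε ^ 2 * N := by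
    have : (q * L * L : ℕ) ≤ N := by
      calc q * L * L ≤ L ^ 2 * L * L := by gcongr
        _ = L ^ 4 := by ring
        _ ≤ N := hLN
    have h1 : (q * L * L : ℝ) ≤ N := by exact_mod_cast this
    calc (q * L : ℝ) * 64 ≤ (q * L) * (κ * ε ^ 2 * L) := by gcongr
      _ = κ * ε ^ 2 * (q * L * L) := by ring
      _ ≤ _ := by gcongr
  set s : ℝ := q * L with hs
  have hs0 : 0 ≤ s := by positivity
  set B : ℝ := (E₁.card / N : ℝ) ^ 2 + (E₂.card / N : ℝ) ^ 2 with hB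
  have hB0 : 0 ≤ B := by positivity
  -- The width `W` may be lowered to `N`, as the energy bound is nonnegative.
  have hbr : (N : ℝ) * (L ^ 2 * (B * N - 4 * s + ε ^ 2 * N / 2)) ≤ W * (U₁ + U₂) := by
    have h1 : 0 ≤ B * N - 4 * s + ε ^ 2 * N / 2 := by
      have a1 : κ * (ε ^ 2 * N) ≤ 1 * (ε ^ 2 * N) := mul_le_mul_of_nonneg_right hκ (by positivity)
      have a2 : 0 ≤ B * N := mul_nonneg hB0 hN0.le
      have a3 : 0 ≤ ε ^ 2 * N := by positivity
      linarith only [a1, a2, a3, hr]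
    refine mul_le_mul ?_ hq (by positivity) (by positivity)
    rw [hW]; linarith
  have hΦN : (N : ℝ) ^ 2 * Φ = A.card - γ * (E₁.card * E₂.card) + κ * (B * N ^ 2) := by
    rw [hΦ, pot, hB]; field_simp
  have h1 : (L : ℝ) ^ 2 * (N ^ 2 * Φ + κ * (N * (ε ^ 2 * N / 2 - 4 * s))) ≤
      L ^ 2 * (W ^ 2 * (Φ + τ)) := by
    have := mul_le_mul_of_nonneg_left hbr hκ0.le
    have e1 : (L : ℝ) ^ 2 * (N ^ 2 * Φ + κ * (N * (ε ^ 2 * N / 2 - 4 * s))) =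
        L ^ 2 * A.card - γ * (L * E₁.card * (L * E₂.card)) +
          κ * (N * (L ^ 2 * (B * N - 4 * s + ε ^ 2 * N / 2))) := by
      rw [hΦN]; ring
    have e2 : κ * (W * U₁ + W * U₂) = κ * (W * (U₁ + U₂)) := by ring
    rw [e1]
    rw [e2] at lower
    rw [mul_left_comm (W ^ 2)] at lower
    exact (add_le_add_right this _).trans lower
  have h2 := le_of_mul_le_mul_left h1 (pow_pos hL0' 2)
  exact refine_numeric hκ0 hκ hε hε1 hN0 hs0 hr hpot (pot_le hγ hκ hN hc) h2

/-! ### Regularisation and iteration -/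

/-- Repeating `refine_step` reaches a uniform configuration of no smaller potential. As the potential
is at most `3`, the process ends within `k` steps if `k` gains take the initial potential
beyond `3`. -/
lemma exists_uniform {γ κ ε : ℝ} (hγ : 0 ≤ γ) (hκ0 : 0 < κ) (hκ : κ ≤ 1) (hε : 0 < ε)
    (hε1 : ε ≤ 1) {M : ℕ} (hM : 64 ≤ κ * ε ^ 2 * M) (j k : ℕ) :
    ∀ (N : ℕ) (E₁ E₂ : Finset ℤ) (A : Finset (ℤ × ℤ)), CornerConf N E₁ E₂ A →
      M ^ 4 ^ (k + j) ≤ N → 0 ≤ pot γ κ N E₁ E₂ A →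
      3 < pot γ κ N E₁ E₂ A + k * (κ * ε ^ 2 / 8) →
      ∃ N' E₁' E₂' A', CornerConf N' E₁' E₂' A' ∧ M ^ 4 ^ j ≤ N' ∧
        pot γ κ N E₁ E₂ A ≤ pot γ κ N' E₁' E₂' A' ∧
        FourierUnif ε N' E₁' ∧ FourierUnif ε N' E₂' := by
  have hM1 : 1 ≤ M := by
    rcases Nat.eq_zero_or_pos M with h | h
    · subst h; norm_num at hM
    · exact h
  induction k with
  | zero =>
    intro N E₁ E₂ A hc hN hp h3
    have hN0 : 0 < N := lt_of_lt_of_le (by positivity) hN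
    have := pot_le hγ hκ hN0 hc
    norm_num at h3
    linarith
  | succ k ih =>
    intro N E₁ E₂ A hc hN hp h3
    by_cases hu : FourierUnif ε N E₁ ∧ FourierUnif ε N E₂
    · refine ⟨N, E₁, E₂, A, hc, le_trans ?_ hN, le_rfl, hu.1, hu.2⟩
      exact Nat.pow_le_pow_right hM1 (Nat.pow_le_pow_right (by norm_num) (by omega))
    · have hL : 64 ≤ κ * ε ^ 2 * (M ^ 4 ^ (k + j) : ℕ) := by
        refine hM.trans (mul_le_mul_of_nonneg_left ?_ (by positivity))
        have : M ≤ M ^ 4 ^ (k + j) := Nat.le_self_pow (by positivity) M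
        exact_mod_cast this
      have hLN : (M ^ 4 ^ (k + j)) ^ 4 ≤ N := by
        rw [← pow_mul, ← pow_succ, show k + j + 1 = k + 1 + j by ring]
        exact hN
      obtain ⟨E₁', E₂', A', hc', hp'⟩ := refine_step hγ hκ0 hκ hε hε1 hL hLN hc hu hp
      have hτ : 0 < κ * ε ^ 2 / 8 := by positivity
      push_cast at h3
      obtain ⟨N'', E₁'', E₂'', A'', g1, g2, g3, g4⟩ := ih _ E₁' E₂' A' hc' le_rfl (by linarith)
        (by linarith)
      exact ⟨N'', E₁'', E₂'', A'', g1, g2, by linarith, g4⟩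

lemma CornerConf.restrict {N : ℕ} {E₁ E₂ F₁ F₂ : Finset ℤ} {A : Finset (ℤ × ℤ)}
    (hc : CornerConf N E₁ E₂ A) (h₁ : F₁ ⊆ E₁) (h₂ : F₂ ⊆ E₂) :
    CornerConf N F₁ F₂ (A ∩ F₁ ×ˢ F₂) where
  sub₁ := h₁.trans hc.sub₁
  sub₂ := h₂.trans hc.sub₂
  subA := Finset.inter_subset_right
  cornerFree := fun x y d hd a1 a2 a3 => hc.cornerFree x y d hd (Finset.mem_inter.mp a1).1
    (Finset.mem_inter.mp a2).1 (Finset.mem_inter.mp a3).1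

/-- A relative density exceeding `γ` by `η` makes the potential at least `η β`. -/
lemma pot_start {γ κ η : ℝ} (hκ0 : 0 ≤ κ) {N : ℕ} {E₁ E₂ : Finset ℤ} {A : Finset (ℤ × ℤ)}
    {β : ℝ} (hN : 0 < N) (hη : 0 ≤ η) (hα : (γ + η) * (E₁.card * E₂.card) ≤ (A.card : ℝ))
    (hβ : β * (N : ℝ) ^ 2 ≤ E₁.card * E₂.card) : η * β ≤ pot γ κ N E₁ E₂ A := by
  have hN0 : (0 : ℝ) < N := by exact_mod_cast hN
  have h1 : η * (β * (N : ℝ) ^ 2) ≤ η * (E₁.card * E₂.card) := mul_le_mul_of_nonneg_left hβ hη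
  have h2 : η * β ≤ A.card / (N : ℝ) ^ 2 - γ * (E₁.card * E₂.card / (N : ℝ) ^ 2) := by
    rw [← mul_div_assoc, ← sub_div, le_div_iff₀ (by positivity)]
    linarith
  have h3 : 0 ≤ κ * ((E₁.card / N : ℝ) ^ 2 + (E₂.card / N : ℝ) ^ 2) := by positivity
  unfold pot
  linarith

/-- Conversely, a potential at least `ξ + 2 κ` gives relative density at least `γ`, and product
density at least `ξ`. -/
lemma pot_end {γ κ ξ : ℝ} (hγ : 0 ≤ γ) (hκ0 : 0 ≤ κ) {N : ℕ} {E₁ E₂ : Finset ℤ}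
    {A : Finset (ℤ × ℤ)} (hN : 0 < N) (hc : CornerConf N E₁ E₂ A)
    (hp : ξ + 2 * κ ≤ pot γ κ N E₁ E₂ A) :
    γ * (E₁.card * E₂.card) + ξ * (N : ℝ) ^ 2 ≤ A.card ∧
      ξ * (N : ℝ) ^ 2 ≤ E₁.card * E₂.card := by
  have hN0 : (0 : ℝ) < N := by exact_mod_cast hN
  have h1 : (E₁.card / N : ℝ) ≤ 1 := (div_le_one hN0).mpr (card_le_of_sub hc.sub₁)
  have h2 : (E₂.card / N : ℝ) ≤ 1 := (div_le_one hN0).mpr (card_le_of_sub hc.sub₂)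
  have h4 : (E₁.card / N : ℝ) ^ 2 ≤ 1 := pow_le_one₀ (by positivity) h1
  have h5 : (E₂.card / N : ℝ) ^ 2 ≤ 1 := pow_le_one₀ (by positivity) h2
  have h6 : κ * ((E₁.card / N : ℝ) ^ 2 + (E₂.card / N : ℝ) ^ 2) ≤ κ * 2 :=
    mul_le_mul_of_nonneg_left (by linarith) hκ0
  have h7 : ξ ≤ A.card / (N : ℝ) ^ 2 - γ * (E₁.card * E₂.card / (N : ℝ) ^ 2) := by
    unfold pot at hp; linarith
  rw [← mul_div_assoc, ← sub_div, le_div_iff₀ (by positivity)] at h7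
  have h8 : (A.card : ℝ) ≤ E₁.card * E₂.card := by
    have := Finset.card_le_card hc.subA
    rw [Finset.card_product] at this
    exact_mod_cast this
  have h9 : 0 ≤ γ * (E₁.card * E₂.card : ℝ) := by positivity
  exact ⟨by linarith, by linarith⟩

/-- One round: regularise, losing `η / 2` in density, then apply the density increment, gaining `η`. -/
lemma density_step {δ η β κ ε : ℝ} (hδ : 0 < δ) (hδ1 : δ ≤ 1) (hη : η = (δ / 2) ^ 10 / 2 ^ 14)
    (hβ : 0 < β) (hβ1 : β ≤ 1) (hκ0 : 0 < κ) (hκ : κ ≤ η * β / 16) (hε0 : 0 < ε)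
    (hε : ε ≤ (δ / 2) ^ 10 * (η * β / 4) ^ 4 / 2 ^ 17) {M : ℕ} (hM : 64 ≤ κ * ε ^ 2 * M) (j : ℕ)
    {N : ℕ} {E₁ E₂ : Finset ℤ} {A : Finset (ℤ × ℤ)} (hc : CornerConf N E₁ E₂ A)
    (hN : M ^ 4 ^ (M + j) ≤ N) {α : ℝ} (hδα : δ ≤ α)
    (hα : α * (E₁.card * E₂.card) ≤ (A.card : ℝ)) (hβE : β * (N : ℝ) ^ 2 ≤ E₁.card * E₂.card) :
    ∃ N' F₁ F₂ A', CornerConf N' F₁ F₂ A' ∧ M ^ 4 ^ j ≤ N' ∧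
      (α + η / 2) * (F₁.card * F₂.card) ≤ (A'.card : ℝ) ∧
      η ^ 2 * β / 4 * (N' : ℝ) ^ 2 ≤ F₁.card * F₂.card := by
  have hM1 : 1 ≤ M := by
    rcases Nat.eq_zero_or_pos M with h | h
    · subst h; norm_num at hM
    · exact h
  have hN0 : 0 < N := lt_of_lt_of_le (by positivity) hN
  have hη0 : 0 < η := by rw [hη]; positivity
  have hδ10 : (δ / 2) ^ 10 ≤ δ / 2 := pow_le_of_le_one (by positivity) (by linarith) (by norm_num)
  have hηδ : η ≤ δ / 2 := by rw [hη]; linarith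
  have hη1 : η ≤ 1 := by linarith
  have hηβ : η * β ≤ 1 := mul_le_one₀ hη1 hβ.le hβ1
  have hηβ0 : 0 < η * β := by positivity
  have hκ1 : κ ≤ 1 := by linarith
  have hε2 : ε ≤ (δ / 2) * (η * β / 4) := by
    have h1 : (η * β / 4) ^ 4 ≤ η * β / 4 :=
      pow_le_of_le_one (by positivity) (by linarith) (by norm_num)
    have h2 : (δ / 2) ^ 10 * (η * β / 4) ^ 4 ≤ (δ / 2) * (η * β / 4) :=
      mul_le_mul hδ10 h1 (by positivity) (by positivity)
    have h3 : 0 ≤ (δ / 2) ^ 10 * (η * β / 4) ^ 4 := by positivity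
    linarith
  have hε1 : ε ≤ 1 := by nlinarith
  -- The reference density is slightly below `α`, so that the potential starts positive.
  set γ := α - η / 2 with hγ
  have hγδ : δ / 2 ≤ γ := by linarith
  have hp0 : η / 2 * β ≤ pot γ κ N E₁ E₂ A :=
    pot_start hκ0.le hN0 (by positivity) (by rw [hγ, sub_add_cancel]; exact hα) hβE
  -- `M` gains of `κ ε ^ 2 / 8` amount to at least `8`.
  have h3 : 3 < pot γ κ N E₁ E₂ A + M * (κ * ε ^ 2 / 8) := by nlinarith
  obtain ⟨N', E₁', E₂', A', hc', hN', hp', hu₁, hu₂⟩ := exists_uniform (by linarith) hκ0 hκ1 hε0 hε1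
    hM j M N E₁ E₂ A hc hN (le_trans (by positivity) hp0) h3
  have hN'0 : 0 < N' := lt_of_lt_of_le (by positivity) hN'
  have hN'R : (0 : ℝ) < N' := by exact_mod_cast hN'0
  obtain ⟨k1, k2⟩ := pot_end (γ := γ) (ξ := η * β / 4) (by linarith) hκ0.le hN'0 hc' (by linarith)
  set P : ℝ := E₁'.card * E₂'.card with hP
  have hPpos : 0 < P := lt_of_lt_of_le (by positivity) k2
  set α' : ℝ := A'.card / P with hα'
  have hα'γ : γ ≤ α' := by
    rw [hα', le_div_iff₀ hPpos]
    have : 0 ≤ η * β / 4 * (N' : ℝ) ^ 2 := by positivity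
    linarith
  have hαδ : δ / 2 ≤ α' := hγδ.trans hα'γ
  set b : ℝ := P / (N' : ℝ) ^ 2 with hb
  have hbβ : η * β / 4 ≤ b := by rw [hb, le_div_iff₀ (by positivity)]; exact k2
  have hα10 : (δ / 2) ^ 10 ≤ α' ^ 10 := pow_le_pow_left₀ (by positivity) hαδ 10
  have hηα : η ≤ α' ^ 10 / 2 ^ 14 := by rw [hη]; gcongr
  obtain ⟨F₁, hF₁, F₂, hF₂, g1, g2⟩ := conf_increment hc' α' b ε hu₁ hu₂
    (lt_of_lt_of_le (by positivity) hαδ) (lt_of_lt_of_le (by positivity) hbβ) hN'0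
    (by rw [hα', ← hP]; field_simp) (by rw [hb, ← hP]; field_simp) (by
      have hMN : (M : ℝ) ≤ N' := by
        have : M ≤ M ^ 4 ^ j := Nat.le_self_pow (by positivity) M
        exact_mod_cast this.trans hN'
      have q1 : κ * ε ^ 2 * M ≤ 1 * ((δ / 2) ^ 2 * (η * β / 4)) * M := by
        gcongr
        calc ε ^ 2 ≤ ((δ / 2) * (η * β / 4)) ^ 2 := pow_le_pow_left₀ hε0.le hε2 2
          _ = (δ / 2) ^ 2 * ((η * β / 4) * (η * β / 4)) := by ring
          _ ≤ (δ / 2) ^ 2 * (1 * (η * β / 4)) := by gcongr; linarith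
          _ = _ := by ring
      have q2 : 1 * ((δ / 2) ^ 2 * (η * β / 4)) * M ≤ α' ^ 2 * b * N' := by
        rw [one_mul]; gcongr
      linarith)
    (hε.trans (by gcongr))
  refine ⟨N', F₁, F₂, _, hc'.restrict hF₁ hF₂, hN', le_trans ?_ g1, le_trans ?_ g2⟩
  · refine mul_le_mul_of_nonneg_right ?_ (by positivity)
    linarith
  · calc η ^ 2 * β / 4 * (N' : ℝ) ^ 2 = η * (η * β / 4 * (N' : ℝ) ^ 2) := by ring
      _ ≤ _ := mul_le_mul hηα k2 (by positivity) (by positivity)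

/-- Iteration of `density_step`: no corner-free configuration exists if `t` increments take
the density beyond `1` and `β₀` bounds the product density from below in all `t` rounds. -/
lemma no_conf_aux {δ η β₀ κ ε : ℝ} (hδ : 0 < δ) (hδ1 : δ ≤ 1) (hη : η = (δ / 2) ^ 10 / 2 ^ 14)
    (hβ₀ : 0 < β₀) (hκ0 : 0 < κ) (hκ : κ ≤ η * β₀ / 16) (hε0 : 0 < ε)
    (hε : ε ≤ (δ / 2) ^ 10 * (η * β₀ / 4) ^ 4 / 2 ^ 17) {M : ℕ} (hM : 64 ≤ κ * ε ^ 2 * M) (t : ℕ) :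
    ∀ (N : ℕ) (E₁ E₂ : Finset ℤ) (A : Finset (ℤ × ℤ)) (α β : ℝ), CornerConf N E₁ E₂ A →
      M ^ 4 ^ (M * t) ≤ N → δ ≤ α → 1 < α + t * (η / 2) → β ≤ 1 → β₀ ≤ β * (η ^ 2 / 4) ^ t →
      α * (E₁.card * E₂.card) ≤ (A.card : ℝ) → β * (N : ℝ) ^ 2 ≤ E₁.card * E₂.card → False := by
  have hη0 : 0 < η := by rw [hη]; positivity
  have hη1 : η ^ 2 / 4 ≤ 1 := by
    have : (δ / 2) ^ 10 ≤ 1 := pow_le_one₀ (by positivity) (by linarith)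
    have : η ≤ 1 := by rw [hη]; linarith
    nlinarith
  have hM1 : 1 ≤ M := by
    rcases Nat.eq_zero_or_pos M with h | h
    · subst h; norm_num at hM
    · exact h
  induction t with
  | zero =>
    intro N E₁ E₂ A α β hc hN hδα h1 hβ1 hβ hα hβE
    have hN0 : 0 < N := lt_of_lt_of_le (by positivity) hN
    have hN0' : (0 : ℝ) < N := by exact_mod_cast hN0
    norm_num at h1 hβ
    have hβpos : 0 < β := by linarith
    have hP : (0 : ℝ) < E₁.card * E₂.card := lt_of_lt_of_le (by positivity) hβE
    have h8 : (A.card : ℝ) ≤ E₁.card * E₂.card := by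
      have := Finset.card_le_card hc.subA
      rw [Finset.card_product] at this
      exact_mod_cast this
    nlinarith
  | succ t ih =>
    intro N E₁ E₂ A α β hc hN hδα h1 hβ1 hβ hα hβE
    have hpow : 0 < (η ^ 2 / 4) ^ (t + 1) := by positivity
    have hβpos : 0 < β := by
      by_contra hneg
      push Not at hneg
      nlinarith
    have hββ : β₀ ≤ β := hβ.trans (mul_le_of_le_one_right hβpos.le (pow_le_one₀ (by positivity) hη1))
    obtain ⟨N', F₁, F₂, A', hc', hN', g1, g2⟩ := density_step hδ hδ1 hη hβpos hβ1 hκ0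
      (hκ.trans (by gcongr)) hε0 (hε.trans (by gcongr)) hM (M * t) hc
      (by rw [show M + M * t = M * (t + 1) by ring]; exact hN) hδα hα hβE
    push_cast at h1
    refine ih N' F₁ F₂ A' (α + η / 2) (η ^ 2 * β / 4) hc' hN' (by linarith) (by linarith) ?_ ?_ g1 g2
    · nlinarith
    · refine hβ.trans (le_of_eq ?_)
      ring

/-! ### Choice of parameters and reductions -/

lemma pow_le_exp_mul {D : ℝ} (hD : 0 ≤ D) (n : ℕ) : D ^ n ≤ Real.exp (n * D) := by
  rw [Real.exp_nat_mul]
  exact pow_le_pow_left₀ hD (by linarith [Real.add_one_le_exp D]) n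

/-- The size of `N` required by `T` rounds of at most `M` regularisation steps is triply exponential. -/
lemma tower_bound {D : ℝ} (hD : 4 ≤ D) {T M : ℕ} (hT : (T : ℝ) ≤ D ^ 25) (hT1 : 1 ≤ T)
    (hM : (M : ℝ) ≤ D ^ (260 + 405 * T)) :
    ((M ^ 4 ^ (M * T) : ℕ) : ℝ) ≤ Real.exp (Real.exp (Real.exp (D ^ 32))) := by
  have hD0 : 0 ≤ D := by linarith
  have hD1 : 1 ≤ D := by linarith
  have hDpow : ∀ n : ℕ, 1 ≤ D ^ n := fun n => one_le_pow₀ hD1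
  have hT1' : (1 : ℝ) ≤ T := by exact_mod_cast hT1
  have hM2 : (M : ℝ) ≤ Real.exp (D ^ 31) := by
    refine hM.trans ((pow_le_exp_mul hD0 _).trans (Real.exp_le_exp.mpr ?_))
    push_cast
    have h5 : (1024 : ℝ) ≤ D ^ 5 := by
      calc (1024 : ℝ) = 4 ^ 5 := by norm_num
        _ ≤ D ^ 5 := pow_le_pow_left₀ (by norm_num) hD 5
    calc (260 + 405 * (T : ℝ)) * D ≤ (1024 * D ^ 25) * D := by
          gcongr; linarith
      _ ≤ (D ^ 5 * D ^ 25) * D := by gcongr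
      _ = D ^ 31 := by ring
  have e1 : (2 : ℝ) ≤ Real.exp 1 := by linarith [Real.add_one_le_exp (1 : ℝ)]
  have hMT : 2 * ((M : ℝ) * T) ≤ Real.exp (1 + D ^ 31 + 25 * D) := by
    rw [Real.exp_add, Real.exp_add, mul_assoc]
    refine mul_le_mul e1 (mul_le_mul hM2 (hT.trans ?_) (by positivity) (by positivity))
      (by positivity) (by positivity)
    exact_mod_cast pow_le_exp_mul hD0 25
  have hsum : 2 * ((M : ℝ) * T) + D ^ 31 ≤ Real.exp (D ^ 32) := by
    have h1 : D ^ 31 ≤ Real.exp (1 + D ^ 31 + 25 * D) := by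
      linarith [Real.add_one_le_exp (1 + D ^ 31 + 25 * D)]
    have h2 : 2 * Real.exp (1 + D ^ 31 + 25 * D) ≤ Real.exp (1 + (1 + D ^ 31 + 25 * D)) := by
      rw [Real.exp_add 1]
      exact mul_le_mul_of_nonneg_right e1 (Real.exp_pos _).le
    have h3 : 1 + (1 + D ^ 31 + 25 * D) ≤ D ^ 32 := by
      have a1 : D ^ 32 = D * D ^ 31 := by ring
      have a2 : 25 * D ≤ D ^ 31 := by
        calc 25 * D ≤ 4 ^ 30 * D := by gcongr; norm_num
          _ ≤ D ^ 30 * D := by gcongr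
          _ = D ^ 31 := by ring
      have := hDpow 31
      nlinarith
    have := Real.exp_le_exp.mpr h3
    linarith
  have h4 : (4 : ℝ) ^ (M * T) ≤ Real.exp (2 * ((M : ℝ) * T)) := by
    have : (4 : ℝ) ≤ Real.exp 2 := by
      rw [show (2 : ℝ) = 1 + 1 by norm_num, Real.exp_add]; nlinarith
    rw [show 2 * ((M : ℝ) * T) = ((M * T : ℕ) : ℝ) * 2 by push_cast; ring, Real.exp_nat_mul]
    exact pow_le_pow_left₀ (by norm_num) this _
  push_cast
  calc (M : ℝ) ^ 4 ^ (M * T) ≤ Real.exp (D ^ 31) ^ 4 ^ (M * T) :=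
        pow_le_pow_left₀ (by positivity) hM2 _
    _ = Real.exp ((4 : ℝ) ^ (M * T) * D ^ 31) := by
        rw [← Real.exp_nat_mul]; push_cast; rfl
    _ ≤ Real.exp (Real.exp (Real.exp (D ^ 32))) := by
        refine Real.exp_le_exp.mpr ?_
        calc (4 : ℝ) ^ (M * T) * D ^ 31 ≤ Real.exp (2 * ((M : ℝ) * T)) * Real.exp (D ^ 31) := by
              refine mul_le_mul h4 ?_ (by positivity) (by positivity)
              linarith [Real.add_one_le_exp (D ^ 31)]
          _ = Real.exp (2 * ((M : ℝ) * T) + D ^ 31) := (Real.exp_add _ _).symm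
          _ ≤ _ := Real.exp_le_exp.mpr hsum

/-- A set without corners of nonzero difference, of density at least `1 / D`, does not exist in
`[0, N) ^ 2` for `N ≥ exp (exp (exp (D ^ 32)))`. -/
lemma no_conf {D : ℝ} (hD : 4 ≤ D) {N : ℕ} (hN : Real.exp (Real.exp (Real.exp (D ^ 32))) ≤ N)
    {A : Finset (ℤ × ℤ)} (hc : CornerConf N (Finset.Ico 0 (N : ℤ)) (Finset.Ico 0 (N : ℤ)) A)
    (hA : D⁻¹ * (N : ℝ) ^ 2 ≤ A.card) : False := by
  have hD0 : 0 < D := by linarith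
  set d := D⁻¹ with hd
  have hd0 : 0 < d := by positivity
  have hd4 : d ≤ 1 / 4 := by
    rw [hd, inv_eq_one_div]; exact one_div_le_one_div_of_le (by norm_num) hD
  have hdD : d * D = 1 := inv_mul_cancel₀ hD0.ne'
  have hpow : ∀ n : ℕ, d ^ n ≤ (1 / 4) ^ n := fun n => pow_le_pow_left₀ hd0.le hd4 n
  set η := (d / 2) ^ 10 / 2 ^ 14 with hη
  have hη22 : d ^ 22 ≤ η := by
    calc d ^ 22 = d ^ 10 * d ^ 12 := by ring
      _ ≤ d ^ 10 * (1 / 4) ^ 12 := by gcongr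
      _ = η := by rw [hη]; ring
  -- Each round gains `η / 2 ≥ d ^ 22 / 2` in density, so `T ≥ D ^ 24` rounds suffice.
  set T := ⌈D ^ 24⌉₊ with hT
  have hT1 : D ^ 24 ≤ T := Nat.le_ceil _
  have hD24 : 1 ≤ D ^ 24 := one_le_pow₀ (by linarith)
  have hT2 : (T : ℝ) ≤ D ^ 25 := by
    have := (Nat.ceil_lt_add_one (by positivity : 0 ≤ D ^ 24)).le
    calc (T : ℝ) ≤ D ^ 24 + 1 := this
      _ ≤ D ^ 24 * 4 := by linarith
      _ ≤ D ^ 24 * D := by gcongr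
      _ = D ^ 25 := by ring
  have hT0 : 1 ≤ T := Nat.one_le_iff_ne_zero.mpr (by
    intro h; rw [h] at hT1; norm_num at hT1; linarith)
  -- `D ^ 259` and `D ^ (405 T)` compensate `64⁻¹ κ ε ^ 2` for the `κ` and `ε` chosen below.
  set M := ⌈D ^ (259 + 405 * T)⌉₊ with hM
  have hM1 : D ^ (259 + 405 * T) ≤ M := Nat.le_ceil _
  have hM2 : (M : ℝ) ≤ D ^ (260 + 405 * T) := by
    have h1 : 1 ≤ D ^ (259 + 405 * T) := one_le_pow₀ (by linarith)
    have := (Nat.ceil_lt_add_one (by positivity : 0 ≤ D ^ (259 + 405 * T))).le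
    calc (M : ℝ) ≤ D ^ (259 + 405 * T) + 1 := this
      _ ≤ D ^ (259 + 405 * T) * 4 := by linarith
      _ ≤ D ^ (259 + 405 * T) * D := by gcongr
      _ = D ^ (260 + 405 * T) := by rw [← pow_succ]; congr 1; ring
  have hNM : M ^ 4 ^ (M * T) ≤ N := by
    have := (tower_bound hD hT2 hT0 hM2).trans hN
    exact_mod_cast this
  -- A round costs a factor `η ^ 2 / 4 ≥ d ^ 45` in product density, whence `β₀`; then `κ` and `ε` are
  -- powers of `d` below the thresholds of `density_step`.
  refine no_conf_aux (δ := d) (η := η) (β₀ := d ^ (45 * T)) (κ := d ^ (24 + 45 * T))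
    (ε := d ^ (116 + 180 * T)) hd0 (by linarith) hη (by positivity) (by positivity) ?_
    (by positivity) ?_ (M := M) ?_ T N _ _ A d 1 hc hNM le_rfl ?_ le_rfl ?_ ?_ ?_
  · calc d ^ (24 + 45 * T) = d ^ 22 * d ^ (45 * T) * d ^ 2 := by ring
      _ ≤ η * d ^ (45 * T) * (1 / 4) ^ 2 := by gcongr
      _ = _ := by ring
  · calc d ^ (116 + 180 * T) = (d ^ 10 * d ^ 5) * (d ^ 22 * d ^ (45 * T) * d) ^ 4 * d ^ 9 := by ring
      _ ≤ (d ^ 10 * (1 / 4) ^ 5) * (η * d ^ (45 * T) * (1 / 4)) ^ 4 * (1 / 4) ^ 9 := by gcongr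
      _ ≤ (d ^ 10 * (1 / 4) ^ 5) * (η * d ^ (45 * T) * (1 / 4)) ^ 4 * (1 / 2 ^ 17) := by
          gcongr; norm_num
      _ = _ := by ring
  · calc (64 : ℝ) = 4 ^ 3 := by norm_num
      _ ≤ D ^ 3 := by gcongr
      _ = (d * D) ^ (256 + 405 * T) * D ^ 3 := by rw [hdD, one_pow, one_mul]
      _ = d ^ (24 + 45 * T) * (d ^ (116 + 180 * T)) ^ 2 * D ^ (259 + 405 * T) := by ring
      _ ≤ _ := by gcongr
  · have : 4 ≤ T * (η / 2) := by
      calc (4 : ℝ) ≤ (d * D) ^ 22 * (D ^ 2 / 2) := by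
            rw [hdD, one_pow, one_mul]; nlinarith
        _ = D ^ 24 * (d ^ 22 / 2) := by ring
        _ ≤ T * (η / 2) := by gcongr
    linarith
  · rw [one_mul, pow_mul]
    refine pow_le_pow_left₀ (by positivity) ?_ T
    calc d ^ 45 = (d ^ 22) ^ 2 * d := by ring
      _ ≤ η ^ 2 * (1 / 4) := by gcongr
      _ = _ := by ring
  · simpa [pow_two] using hA
  · simp [pow_two]

/-- A set of density at least `3 / 4` contains a corner of difference `1`: each missing point of the
grid spoils at most three of the `(N - 1) ^ 2` such corners. -/
lemma dense_case {δ : ℝ} (hδ : 3 / 4 ≤ δ) {N : ℕ} (hN : 8 ≤ N) {A : Finset (ℕ × ℕ)}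
    (hA : A ⊆ Finset.Icc 1 N ×ˢ Finset.Icc 1 N) (hcard : δ * (N : ℝ) ^ 2 ≤ (A.card : ℝ)) :
    ∃ k m d : ℕ, 0 < d ∧ (k, m) ∈ A ∧ (k + d, m) ∈ A ∧ (k, m + d) ∈ A := by
  by_contra! hcon
  set B := (Finset.Icc 1 N ×ˢ Finset.Icc 1 N) \ A with hB
  set S := Finset.Icc 1 (N - 1) ×ˢ Finset.Icc 1 (N - 1) with hS
  have hBcard : (B.card : ℝ) = (N : ℝ) ^ 2 - A.card := by
    rw [hB, Finset.cast_card_sdiff hA]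
    simp [pow_two]
  have hScard : (S.card : ℝ) = ((N : ℝ) - 1) ^ 2 := by
    rw [hS, Finset.card_product]
    simp only [Nat.card_Icc, Nat.add_sub_cancel]
    push_cast [Nat.cast_sub (show 1 ≤ N by omega)]
    ring
  have hmem : ∀ p ∈ S, 1 ≤ p.1 ∧ p.1 ≤ N - 1 ∧ 1 ≤ p.2 ∧ p.2 ≤ N - 1 := by
    intro p hp
    rw [hS, Finset.mem_product, Finset.mem_Icc, Finset.mem_Icc] at hp
    tauto
  have bound : ∀ v : ℕ × ℕ, v.1 ≤ 1 → v.2 ≤ 1 →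
      (S.filter (fun p => p + v ∉ A)).card ≤ B.card := by
    intro v h1 h2
    refine Finset.card_le_card_of_injOn (fun p => p + v) ?_ (fun p _ q _ h => add_right_cancel h)
    intro p hp
    rw [Finset.mem_coe, Finset.mem_filter] at hp
    have := hmem p hp.1
    rw [Finset.mem_coe, hB, Finset.mem_sdiff, Finset.mem_product, Finset.mem_Icc, Finset.mem_Icc]
    refine ⟨⟨⟨?_, ?_⟩, ⟨?_, ?_⟩⟩, hp.2⟩ <;> simp only [Prod.fst_add, Prod.snd_add] <;> omega
  have hcover : S ⊆ S.filter (fun p => p + (0, 0) ∉ A) ∪ S.filter (fun p => p + (1, 0) ∉ A) ∪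
      S.filter (fun p => p + (0, 1) ∉ A) := by
    intro p hp
    by_contra hnot
    simp only [Finset.mem_union, Finset.mem_filter, hp, true_and, not_or, not_not] at hnot
    obtain ⟨⟨h1, h2⟩, h3⟩ := hnot
    exact hcon p.1 p.2 1 one_pos h1 h2 h3
  have h1 := (Finset.card_le_card hcover).trans ((Finset.card_union_le _ _).trans
    (add_le_add_left (Finset.card_union_le _ _) _))
  have h2 := bound (0, 0) (by simp) (by simp)
  have h3 := bound (1, 0) (by simp) (by simp)
  have h4 := bound (0, 1) (by simp) (by simp)
  have h5 : S.card ≤ 3 * B.card := by omega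
  have h6 : (S.card : ℝ) ≤ 3 * B.card := by exact_mod_cast h5
  rw [hScard, hBcard] at h6
  have hN' : (8 : ℝ) ≤ N := by exact_mod_cast hN
  nlinarith

/-- Some `s` is a popular sum: `A ∩ (s - A)` has at least `|A| ^ 2 / (4 N ^ 2)` elements, since the
`|A| ^ 2` sums lie in `[0, 2 N) ^ 2`. -/
lemma exists_symmetric_part {N : ℕ} (hN : 0 < N) {A : Finset (ℤ × ℤ)}
    (hA : A ⊆ Finset.Ico 0 (N : ℤ) ×ˢ Finset.Ico 0 (N : ℤ)) :
    ∃ s : ℤ × ℤ, (A.card : ℝ) ^ 2 ≤ 4 * (N : ℝ) ^ 2 * (A.filter (fun a => s - a ∈ A)).card := by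
  set t := Finset.Ico 0 (2 * N : ℤ) ×ˢ Finset.Ico 0 (2 * N : ℤ) with ht
  have htc : (t.card : ℝ) = 4 * (N : ℝ) ^ 2 := by
    have : (2 * (N : ℤ)).toNat = 2 * N := by omega
    rw [ht, Finset.card_product]
    simp only [Int.card_Ico, sub_zero, this]
    push_cast; ring
  have hN0 : (0 : ℝ) < N := by exact_mod_cast hN
  have htne : t.Nonempty := by
    rw [← Finset.card_pos]
    have : (0 : ℝ) < t.card := by rw [htc]; positivity
    exact_mod_cast this
  obtain ⟨s, _, hs⟩ := Finset.exists_le_card_fiber_of_nsmul_le_card_of_maps_to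
    (s := A ×ˢ A) (t := t) (f := fun p => p.1 + p.2) (b := (A.card : ℝ) ^ 2 / (4 * (N : ℝ) ^ 2))
    (by
      intro p hp
      obtain ⟨h1, h2⟩ := Finset.mem_product.mp hp
      have h1 := hA h1
      have h2 := hA h2
      rw [Finset.mem_product, Finset.mem_Ico, Finset.mem_Ico] at h1 h2
      rw [ht, Finset.mem_product, Finset.mem_Ico, Finset.mem_Ico]
      simp only [Prod.fst_add, Prod.snd_add]
      omega) htne (by
      rw [nsmul_eq_mul, htc, Finset.card_product]
      push_cast
      field_simp
      exact le_rfl)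
  refine ⟨s, ?_⟩
  have hle : ((A ×ˢ A).filter (fun p => p.1 + p.2 = s)).card ≤
      (A.filter (fun a => s - a ∈ A)).card := by
    refine Finset.card_le_card_of_injOn Prod.fst ?_ ?_
    · intro p hp
      rw [Finset.mem_coe, Finset.mem_filter, Finset.mem_product] at hp
      rw [Finset.mem_coe, Finset.mem_filter]
      refine ⟨hp.1.1, ?_⟩
      rw [← hp.2, add_sub_cancel_left]
      exact hp.1.2
    · intro p hp q hq h
      rw [Finset.mem_coe, Finset.mem_filter] at hp hq
      have : p.1 + p.2 = q.1 + q.2 := hp.2.trans hq.2.symm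
      rw [h] at this
      exact Prod.ext h (add_left_cancel this)
  have hle' : (((A ×ˢ A).filter (fun p => p.1 + p.2 = s)).card : ℝ) ≤
      (A.filter (fun a => s - a ∈ A)).card := by exact_mod_cast hle
  have := hs.trans hle'
  rw [div_le_iff₀ (by positivity)] at this
  linarith

/-- Passing from `A` to its symmetric part `A ∩ (s - A)`, of density at least `δ ^ 2 / 4`, excludes
corners of negative difference as well, so that `no_conf` applies. -/
lemma sparse_case {D : ℝ} (hD : 4 ≤ D) {δ : ℝ} (hδ : 0 < δ) (hδD : D⁻¹ ≤ δ ^ 2 / 4) {N : ℕ}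
    (hN : Real.exp (Real.exp (Real.exp (D ^ 32))) ≤ N) {A : Finset (ℕ × ℕ)}
    (hA : A ⊆ Finset.Icc 1 N ×ˢ Finset.Icc 1 N) (hcard : δ * (N : ℝ) ^ 2 ≤ (A.card : ℝ)) :
    ∃ k m d : ℕ, 0 < d ∧ (k, m) ∈ A ∧ (k + d, m) ∈ A ∧ (k, m + d) ∈ A := by
  by_contra! hcon
  have hN0' : (0 : ℝ) < N := lt_of_lt_of_le (Real.exp_pos _) hN
  have hN0 : 0 < N := by exact_mod_cast hN0'
  set f : ℕ × ℕ → ℤ × ℤ := fun p => ((p.1 : ℤ) - 1, (p.2 : ℤ) - 1) with hf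
  have hinj : Function.Injective f := by
    intro p q h
    simp only [hf, Prod.mk.injEq] at h
    exact Prod.ext (by omega) (by omega)
  set A' := A.image f with hA'
  have hA'c : A'.card = A.card := Finset.card_image_of_injective _ hinj
  have hA'sub : A' ⊆ Finset.Ico 0 (N : ℤ) ×ˢ Finset.Ico 0 (N : ℤ) := by
    intro p hp
    obtain ⟨q, hq, rfl⟩ := Finset.mem_image.mp hp
    have := hA hq
    rw [Finset.mem_product, Finset.mem_Icc, Finset.mem_Icc] at this
    rw [Finset.mem_product, Finset.mem_Ico, Finset.mem_Ico]
    simp only [hf]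
    omega
  have hA'free : ∀ x y d : ℤ, 0 < d → (x, y) ∈ A' → (x + d, y) ∈ A' → (x, y + d) ∈ A' → False := by
    intro x y d hd h1 h2 h3
    obtain ⟨⟨a1, a2⟩, ha, hae⟩ := Finset.mem_image.mp h1
    obtain ⟨⟨b1, b2⟩, hb, hbe⟩ := Finset.mem_image.mp h2
    obtain ⟨⟨c1, c2⟩, hc, hce⟩ := Finset.mem_image.mp h3
    simp only [hf, Prod.mk.injEq] at hae hbe hce
    have e1 : b1 = a1 + d.toNat := by omega
    have e2 : b2 = a2 := by omega
    have e3 : c1 = a1 := by omega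
    have e4 : c2 = a2 + d.toNat := by omega
    subst e1 e2 e3 e4
    exact hcon _ _ d.toNat (by omega) ha hb hc
  obtain ⟨s, hs⟩ := exists_symmetric_part hN0 hA'sub
  refine no_conf hD hN (A := A'.filter (fun a => s - a ∈ A'))
    ⟨Finset.Subset.refl _, Finset.Subset.refl _, (Finset.filter_subset _ _).trans hA'sub, ?_⟩ ?_
  · intro x y d hd h1 h2 h3
    rw [Finset.mem_filter] at h1 h2 h3
    rcases lt_or_gt_of_ne hd with hneg | hpos
    · refine hA'free (s.1 - x) (s.2 - y) (-d) (by omega) h1.2 ?_ ?_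
      · have := h2.2
        rwa [show s - (x + d, y) = (s.1 - x + -d, s.2 - y) from
          Prod.ext (by simp only [Prod.fst_sub]; ring) rfl] at this
      · have := h3.2
        rwa [show s - (x, y + d) = (s.1 - x, s.2 - y + -d) from
          Prod.ext rfl (by simp only [Prod.snd_sub]; ring)] at this
    · exact hA'free x y d hpos h1.1 h2.1 h3.1
  · rw [hA'c] at hs
    have h1 : (δ * (N : ℝ) ^ 2) ^ 2 ≤ (A.card : ℝ) ^ 2 := pow_le_pow_left₀ (by positivity) hcard 2
    have h2 : 4 * (N : ℝ) ^ 2 * (δ ^ 2 / 4 * (N : ℝ) ^ 2) ≤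
        4 * (N : ℝ) ^ 2 * (A'.filter (fun a => s - a ∈ A')).card := by
      refine le_trans (le_of_eq ?_) (h1.trans hs)
      ring
    exact (mul_le_mul_of_nonneg_right hδD (by positivity)).trans
      (le_of_mul_le_mul_left h2 (by positivity))

end

theorem stmt_10 : ∃ c : ℝ, 0 < c ∧ ∀ δ : ℝ, 0 < δ → ∀ N : ℕ,
    Real.exp (Real.exp (Real.exp (δ ^ (-c)))) ≤ (N : ℝ) →
    ∀ A : Finset (ℕ × ℕ), A ⊆ Finset.Icc 1 N ×ˢ Finset.Icc 1 N →
      δ * (N : ℝ) ^ 2 ≤ (A.card : ℝ) →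
      ∃ k m d : ℕ, 0 < d ∧ (k, m) ∈ A ∧ (k + d, m) ∈ A ∧ (k, m + d) ∈ A := by
  -- For `δ ≤ 3 / 4` the density `δ ^ 2 / 4` of the symmetric part is `1 / D` with `D = 4 δ ^ (-2)`, which
  -- is at most `δ ^ (-7)` because `4 ≤ (4 / 3) ^ 5`; so `D ^ 32 ≤ δ ^ (-224)`.
  refine ⟨224, by norm_num, ?_⟩
  intro δ hδ N hN A hA hcard
  have hpow : δ ^ (-(224 : ℝ)) = (δ⁻¹) ^ 224 := by
    rw [Real.rpow_neg hδ.le, inv_pow, ← Real.rpow_natCast]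
    norm_num
  rw [hpow] at hN
  have hN0 : (0 : ℝ) < N := lt_of_lt_of_le (Real.exp_pos _) hN
  rcases le_total (3 / 4) δ with h34 | h34
  · have hδ1 : δ ≤ 1 := by
      have h := Finset.card_le_card hA
      simp only [Finset.card_product, Nat.card_Icc, Nat.add_sub_cancel] at h
      have h' : (A.card : ℝ) ≤ 1 * (N : ℝ) ^ 2 := by rw [one_mul, pow_two]; exact_mod_cast h
      exact le_of_mul_le_mul_right (hcard.trans h') (by positivity)
    have h1 : 1 ≤ (δ⁻¹) ^ 224 := one_le_pow₀ ((one_le_inv₀ hδ).mpr hδ1)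
    have h2 : (2 : ℝ) ≤ Real.exp ((δ⁻¹) ^ 224) := by
      linarith [Real.add_one_le_exp ((δ⁻¹) ^ 224)]
    have h3 : (3 : ℝ) ≤ Real.exp (Real.exp ((δ⁻¹) ^ 224)) := by
      linarith [Real.add_one_le_exp (Real.exp ((δ⁻¹) ^ 224))]
    have h4 : (8 : ℝ) ≤ Real.exp 3 := by
      have : (2 : ℝ) ≤ Real.exp 1 := by linarith [Real.add_one_le_exp (1 : ℝ)]
      calc (8 : ℝ) = 2 ^ 3 := by norm_num
        _ ≤ Real.exp 1 ^ 3 := by gcongr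
        _ = Real.exp 3 := by rw [← Real.exp_nat_mul]; norm_num
    have h5 : (8 : ℝ) ≤ N := h4.trans ((Real.exp_le_exp.mpr h3).trans hN)
    exact dense_case h34 (by exact_mod_cast h5) hA hcard
  · have hx : 4 / 3 ≤ δ⁻¹ := by
      rw [show (4 / 3 : ℝ) = (3 / 4)⁻¹ by norm_num]
      exact inv_anti₀ hδ h34
    have hx5 : 4 ≤ (δ⁻¹) ^ 5 :=
      le_trans (by norm_num) (pow_le_pow_left₀ (by norm_num : (0 : ℝ) ≤ 4 / 3) hx 5)
    have hx2 : 1 ≤ (δ⁻¹) ^ 2 := one_le_pow₀ (by linarith)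
    refine sparse_case (D := 4 * (δ⁻¹) ^ 2) (by linarith) hδ (le_of_eq ?_) (le_trans ?_ hN) hA hcard
    · field_simp
    · refine Real.exp_le_exp.mpr (Real.exp_le_exp.mpr (Real.exp_le_exp.mpr ?_))
      calc (4 * (δ⁻¹) ^ 2) ^ 32 ≤ ((δ⁻¹) ^ 5 * (δ⁻¹) ^ 2) ^ 32 := by gcongr
        _ = (δ⁻¹) ^ 224 := by ring
end
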